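/- arXiv:2206.07017 — 3 statements merged into one kernel-verified Lean document; each statement's English description precedes it below -/
import Mathlib

section
/- Let α be a positive natural number (a finite ordinal) and let X = [1, ω^α] be the set of ordinals β with 1 ≤ β ≤ ω^α (ordinal exponentiation), equipped with the order topology, and let G be the group of homeomorphisms of X onto itself. Then G has the small index property: every subgroup H of G whose index, as a cardinal, is strictly less than 2^ℵ₀ contains the pointwise stabilizer {g ∈ G : g(B) = B for all B ∈ A} of some finite set A of clopen subsets of X. -/
open Ordinal Topology

noncomputable section

/-- The ordinal interval `[1, γ]`, i.e. the set of ordinals `β` with `1 ≤ β ≤ γ`, with the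
subspace topology induced from the order topology on `Ordinal` (equivalently, its order
topology, since it is order-connected). -/
abbrev OrdIcc (γ : Ordinal) : Type _ := ↥(Set.Icc (1 : Ordinal) γ)

/-- The group of self-homeomorphisms of a topological space, under composition. -/
instance homeoGroup {Y : Type*} [TopologicalSpace Y] : Group (Y ≃ₜ Y) where
  mul f g := g.trans f
  one := Homeomorph.refl Y
  inv := Homeomorph.symm
  mul_assoc f g h := rfl
  one_mul f := Homeomorph.ext fun _ => rfl
  mul_one f := Homeomorph.ext fun _ => rfl
  inv_mul_cancel f := Homeomorph.ext fun x => f.symm_apply_apply x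


namespace SIPx

universe u

theorem hmul_apply {Y : Type*} [TopologicalSpace Y] (f g : Y ≃ₜ Y) (x : Y) :
    (f * g) x = f (g x) := rfl

theorem hone_apply {Y : Type*} [TopologicalSpace Y] (x : Y) : (1 : Y ≃ₜ Y) x = x := rfl

theorem hinv_eq {Y : Type*} [TopologicalSpace Y] (f : Y ≃ₜ Y) : f⁻¹ = f.symm := rfl

theorem hinv_left {Y : Type*} [TopologicalSpace Y] (f : Y ≃ₜ Y) (x : Y) : f⁻¹ (f x) = x :=
  f.symm_apply_apply x

theorem hinv_right {Y : Type*} [TopologicalSpace Y] (f : Y ≃ₜ Y) (x : Y) : f (f⁻¹ x) = x :=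
  f.apply_symm_apply x

theorem hinv_of {Y : Type*} [TopologicalSpace Y] (f : Y ≃ₜ Y) {x y : Y} (h : f x = y) :
    f⁻¹ y = x := by
  rw [← h, hinv_left]

theorem pigeon {G : Type u} [Group G] (H : Subgroup G)
    (hH : Cardinal.mk (G ⧸ H) < 2 ^ Cardinal.aleph0) (f : (ℕ → Bool) → G) :
    ∃ a b, a ≠ b ∧ (f a)⁻¹ * f b ∈ H := by
  by_contra hcon
  push Not at hcon
  have hinj : Function.Injective (fun a => (f a : G ⧸ H)) := by
    intro a b hab
    by_contra hne
    exact hcon a b hne (QuotientGroup.eq.1 hab)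
  have h1 := Cardinal.lift_mk_le_lift_mk_of_injective hinj
  simp at h1
  exact absurd hH (not_lt.2 h1)

theorem small_comap {G G' : Type u} [Group G] [Group G'] (φ : G →* G') (H : Subgroup G')
    (hH : Cardinal.mk (G' ⧸ H) < 2 ^ Cardinal.aleph0) :
    Cardinal.mk (G ⧸ H.comap φ) < 2 ^ Cardinal.aleph0 := by
  refine lt_of_le_of_lt ?_ hH
  let F : G ⧸ H.comap φ → G' ⧸ H := Quotient.lift (fun g => (φ g : G' ⧸ H)) (by
    intro a b hab
    have : a⁻¹ * b ∈ H.comap φ := QuotientGroup.leftRel_apply.1 hab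
    exact QuotientGroup.eq.2 (by simpa using this))
  refine Cardinal.mk_le_of_injective (f := F) ?_
  intro a b
  induction a using QuotientGroup.induction_on with | _ a =>
  induction b using QuotientGroup.induction_on with | _ b =>
  intro hab
  have h2 : (φ a : G' ⧸ H) = (φ b : G' ⧸ H) := hab
  rw [QuotientGroup.eq] at h2 ⊢
  simpa using h2

/-- glue homeomorphisms along a locally constant map -/
def glue {Y κ : Type*} [TopologicalSpace Y] (q : Y → κ) (hq : IsLocallyConstant q)
    (a : κ → (Y ≃ₜ Y)) (h1 : ∀ x, q (a (q x) x) = q x) (h2 : ∀ x, q ((a (q x))⁻¹ x) = q x) :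
    Y ≃ₜ Y where
  toFun x := a (q x) x
  invFun x := (a (q x))⁻¹ x
  left_inv x := by
    show (a (q (a (q x) x)))⁻¹ (a (q x) x) = x
    rw [h1, hinv_left]
  right_inv x := by
    show (a (q ((a (q x))⁻¹ x))) ((a (q x))⁻¹ x) = x
    rw [h2, hinv_right]
  continuous_toFun := by
    rw [continuous_iff_continuousAt]
    intro x
    refine ((a (q x)).continuous.continuousAt).congr ?_
    filter_upwards [hq.eventually_eq x] with y hy
    rw [hy]
  continuous_invFun := by
    rw [continuous_iff_continuousAt]
    intro x
    refine (((a (q x))⁻¹).continuous.continuousAt).congr ?_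
    filter_upwards [hq.eventually_eq x] with y hy
    rw [hy]

theorem glue_apply {Y κ : Type*} [TopologicalSpace Y] (q : Y → κ) (hq : IsLocallyConstant q)
    (a : κ → (Y ≃ₜ Y)) (h1 : ∀ x, q (a (q x) x) = q x) (h2 : ∀ x, q ((a (q x))⁻¹ x) = q x)
    (x : Y) : glue q hq a h1 h2 x = a (q x) x := rfl

variable {W : Type u} [TopologicalSpace W]

/-- permutation of the index set acting on the product -/
def ph (σ : Equiv.Perm ℕ) : (ℕ × W) ≃ₜ (ℕ × W) where
  toFun x := (σ x.1, x.2)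
  invFun x := (σ.symm x.1, x.2)
  left_inv x := by simp
  right_inv x := by simp
  continuous_toFun := (continuous_of_discreteTopology.comp continuous_fst).prodMk continuous_snd
  continuous_invFun := (continuous_of_discreteTopology.comp continuous_fst).prodMk continuous_snd

theorem ph_apply (σ : Equiv.Perm ℕ) (x : ℕ × W) : ph σ x = (σ x.1, x.2) := rfl

theorem ph_inv_apply (σ : Equiv.Perm ℕ) (x : ℕ × W) : (ph σ)⁻¹ x = (σ.symm x.1, x.2) := rfl

/-- supported on `S × W` -/
def Sup (S : Set ℕ) (g : (ℕ × W) ≃ₜ (ℕ × W)) : Prop := ∀ x, x.1 ∉ S → g x = x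

theorem Sup.mem {S : Set ℕ} {g : (ℕ × W) ≃ₜ (ℕ × W)} (h : Sup S g) {x : ℕ × W} (hx : x.1 ∈ S) :
    (g x).1 ∈ S := by
  by_contra hcon
  have := g.injective (h _ hcon)
  rw [this] at hcon
  exact hcon hx

theorem Sup.inv {S : Set ℕ} {g : (ℕ × W) ≃ₜ (ℕ × W)} (h : Sup S g) : Sup S g⁻¹ :=
  fun x hx => hinv_of g (h x hx)

theorem Sup.mul {S : Set ℕ} {g k : (ℕ × W) ≃ₜ (ℕ × W)} (h : Sup S g) (h' : Sup S k) :
    Sup S (g * k) := by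
  intro x hx
  rw [hmul_apply, h' x hx, h x hx]

theorem Sup.mono {S T : Set ℕ} {g : (ℕ × W) ≃ₜ (ℕ × W)} (h : Sup S g) (hST : S ⊆ T) :
    Sup T g := fun x hx => h x fun h' => hx (hST h')

theorem Sup.ph {S : Set ℕ} {σ : Equiv.Perm ℕ} (h : ∀ i ∉ S, σ i = i) :
    Sup S (ph σ : (ℕ × W) ≃ₜ (ℕ × W)) := by
  intro x hx
  rw [ph_apply, h _ hx]

theorem lc_fst {κ : Type*} (q : ℕ → κ) : IsLocallyConstant (fun x : ℕ × W => q x.1) := by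
  intro s
  exact (isOpen_discrete (q ⁻¹' s)).preimage continuous_fst

theorem step1 (H : Subgroup ((ℕ × W) ≃ₜ (ℕ × W)))
    (hH : Cardinal.mk (((ℕ × W) ≃ₜ (ℕ × W)) ⧸ H) < 2 ^ Cardinal.aleph0) (q : ℕ → ℕ) :
    ∃ j : ℕ, ∀ a, Sup {i | q i = j + 1} a →
      ∃ h ∈ H, Sup {i | q i ≠ 0} h ∧ ∀ x, q x.1 = j + 1 → h x = a x := by
  by_contra hcon
  push Not at hcon
  choose a ha hne using hcon
  let b : (ℕ → Bool) → ℕ → ((ℕ × W) ≃ₜ (ℕ × W)) := fun T j =>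
    Nat.casesOn j 1 (fun n => if T n then a n else 1)
  have hb : ∀ T j, Sup {i | q i = j} (b T j) := by
    intro T j
    cases j with
    | zero => exact fun x _ => rfl
    | succ n =>
      show Sup _ (if T n then a n else 1)
      split_ifs
      · exact ha n
      · exact fun x _ => rfl
  let f : (ℕ → Bool) → ((ℕ × W) ≃ₜ (ℕ × W)) := fun T =>
    glue (fun x => q x.1) (lc_fst q) (b T)
      (fun x => (hb T (q x.1)).mem (x := x) rfl) (fun x => (hb T (q x.1)).inv.mem (x := x) rfl)
  have hf : ∀ T x, f T x = b T (q x.1) x := fun T x => rfl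
  have hfs : ∀ T, Sup {i | q i ≠ 0} (f T) := by
    intro T x hx
    have : q x.1 = 0 := by simpa using hx
    rw [hf, this]
    rfl
  have key : ∀ T T' n, (f T)⁻¹ * f T' ∈ H → T n = false → T' n = true → False := by
    intro T T' n hm hT hT'
    obtain ⟨x, hx, hx'⟩ := hne n _ hm ((hfs T).inv.mul (hfs T'))
    apply hx'
    have h1 : f T' x = a n x := by
      rw [hf, hx]
      show (if T' n then a n else 1) x = _
      rw [hT']; rfl
    rw [hmul_apply, h1]
    apply hinv_of
    have h2 : q (a n x).1 = n + 1 := (ha n).mem hx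
    rw [hf, h2]
    show (if T n then a n else 1) _ = _
    rw [hT]; rfl
  obtain ⟨T, T', hTT, hm⟩ := pigeon H hH f
  obtain ⟨n, hn⟩ := Function.ne_iff.1 hTT
  cases h1 : T n <;> cases h2 : T' n
  · exact hn (h1.trans h2.symm)
  · exact key T T' n hm h1 h2
  · refine key T' T n ?_ h2 h1
    have := H.inv_mem hm
    simpa using this
  · exact hn (h1.trans h2.symm)

/-- the encoding of `ℕ × ℤ` -/
def enc (j m : ℕ) : ℕ × ℤ ↪ ℕ where
  toFun p := Nat.pair j (Nat.pair m (Nat.pair p.1 (Equiv.intEquivNat p.2)))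
  inj' := by
    rintro ⟨a, b⟩ ⟨c, d⟩ h
    simpa [Nat.pair_eq_pair] using h

theorem enc_apply (j m : ℕ) (p : ℕ × ℤ) :
    enc j m p = Nat.pair j (Nat.pair m (Nat.pair p.1 (Equiv.intEquivNat p.2))) := rfl

def sh (e : ℕ × ℤ ↪ ℕ) (z : ℤ) : Equiv.Perm ℕ :=
  Equiv.Perm.viaEmbedding (Equiv.prodCongr (Equiv.refl ℕ) (Equiv.addRight z)) e

theorem sh_apply (e : ℕ × ℤ ↪ ℕ) (z : ℤ) (r : ℕ) (y : ℤ) : sh e z (e (r, y)) = e (r, y + z) := by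
  unfold sh
  rw [Equiv.Perm.viaEmbedding_apply]
  rfl

theorem sh_of_notMem (e : ℕ × ℤ ↪ ℕ) (z : ℤ) (i : ℕ) (h : i ∉ Set.range e) : sh e z i = i :=
  Equiv.Perm.viaEmbedding_apply_of_notMem _ _ _ h

theorem swindle (e : ℕ × ℤ ↪ ℕ) (g : (ℕ × W) ≃ₜ (ℕ × W))
    (hg : Sup (Set.range fun r => e (r, 0)) g) :
    ∃ a s : (ℕ × W) ≃ₜ (ℕ × W), Sup (Set.range e) a ∧ Sup (Set.range e) s ∧
      a * s * a⁻¹ * s⁻¹ = g := by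
  have hg0 : ∀ k : (ℕ × W) ≃ₜ (ℕ × W), Sup (Set.range fun r => e (r, 0)) k → ∀ r w,
      ∃ r' w', k (e (r, 0), w) = (e (r', 0), w') := by
    intro k hk r w
    obtain ⟨r', h⟩ := hk.mem (x := (e (r, 0), w)) ⟨r, rfl⟩
    exact ⟨r', (k (e (r, 0), w)).2, Prod.ext h.symm rfl⟩
  have hg1 : ∀ k : (ℕ × W) ≃ₜ (ℕ × W), Sup (Set.range fun r => e (r, 0)) k → ∀ r y w, y ≠ 0 →
      k (e (r, y), w) = (e (r, y), w) := by
    intro k hk r y w hy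
    apply hk
    rintro ⟨r', h⟩
    have := e.injective h
    simp at this
    exact hy this.2.symm
  have hg2 : ∀ k : (ℕ × W) ≃ₜ (ℕ × W), Sup (Set.range fun r => e (r, 0)) k → ∀ i w,
      i ∉ Set.range e → k (i, w) = (i, w) := by
    intro k hk i w hi
    apply hk
    rintro ⟨r', h⟩
    exact hi ⟨_, h⟩
  let lev : ℕ → ℤ := Function.extend e Prod.snd (fun _ => -1)
  have lev1 : ∀ r y, lev (e (r, y)) = y := fun r y => e.injective.extend_apply _ _ _
  have lev2 : ∀ i, i ∉ Set.range e → lev i = -1 := fun i hi =>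
    Function.extend_apply' _ _ _ hi
  let A : ((ℕ × W) ≃ₜ (ℕ × W)) → ℤ → ((ℕ × W) ≃ₜ (ℕ × W)) := fun k z =>
    if 0 ≤ z then ph (sh e z) * k * ph (sh e (-z)) else 1
  have A1 : ∀ k, Sup (Set.range fun r => e (r, 0)) k → ∀ r y w r' w', 0 ≤ y →
      k (e (r, 0), w) = (e (r', 0), w') → A k y (e (r, y), w) = (e (r', y), w') := by
    intro k hk r y w r' w' hy h
    show (if 0 ≤ y then _ else _ : (ℕ × W) ≃ₜ (ℕ × W)) _ = _
    rw [if_pos hy, hmul_apply, hmul_apply, ph_apply, ph_apply]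
    simp only [sh_apply, add_neg_cancel, h, zero_add]
  have A2 : ∀ k r y w, ¬ 0 ≤ y → A k y (e (r, y), w) = (e (r, y), w) := by
    intro k r y w hy
    show (if 0 ≤ y then _ else _ : (ℕ × W) ≃ₜ (ℕ × W)) _ = _
    rw [if_neg hy]; rfl
  have A3 : ∀ k i w, i ∉ Set.range e → A k (lev i) (i, w) = (i, w) := by
    intro k i w hi
    rw [lev2 i hi]; rfl
  have Ainv : ∀ z, (A g z)⁻¹ = A g⁻¹ z := by
    intro z
    show (if 0 ≤ z then _ else _ : (ℕ × W) ≃ₜ (ℕ × W))⁻¹ = if 0 ≤ z then _ else _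
    split_ifs with hz
    · have : (ph (sh e (-z)) : (ℕ × W) ≃ₜ (ℕ × W)) = (ph (sh e z))⁻¹ := by
        rw [eq_inv_iff_mul_eq_one]
        ext1 x
        rw [hmul_apply, ph_apply, ph_apply, hone_apply]
        refine Prod.ext ?_ rfl
        by_cases hx : x.1 ∈ Set.range e
        · obtain ⟨⟨r, y⟩, hy⟩ := hx
          simp [← hy, sh_apply]
        · simp [sh_of_notMem _ _ _ hx]
      rw [this]; group
    · exact inv_one
  have Alev : ∀ k, Sup (Set.range fun r => e (r, 0)) k → ∀ x : ℕ × W,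
      lev (A k (lev x.1) x).1 = lev x.1 := by
    rintro k hk ⟨i, w⟩
    by_cases hi : i ∈ Set.range e
    · obtain ⟨⟨r, y⟩, rfl⟩ := hi
      simp only [lev1]
      by_cases hy : 0 ≤ y
      · obtain ⟨r', w', h⟩ := hg0 k hk r w
        rw [A1 k hk r y w r' w' hy h]
        exact lev1 _ _
      · rw [A2 k r y w hy]
        exact lev1 _ _
    · simp only
      rw [A3 k i w hi]
  let a := glue (fun x : ℕ × W => lev x.1) (lc_fst lev) (A g) (Alev g hg) (fun x => by
    rw [Ainv]; exact Alev _ hg.inv x)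
  have ha : ∀ i w, a (i, w) = A g (lev i) (i, w) := fun i w => rfl
  refine ⟨a, ph (sh e 1), ?_, ?_, ?_⟩
  · rintro ⟨i, w⟩ hi
    rw [ha, A3 g i w hi]
  · exact Sup.ph fun i hi => sh_of_notMem _ _ _ hi
  · suffices h : a * ph (sh e 1) = g * ph (sh e 1) * a by
      rw [h]; group
    ext1 x
    obtain ⟨i, w⟩ := x
    simp only [hmul_apply]
    by_cases hi : i ∈ Set.range e
    · obtain ⟨⟨r, y⟩, rfl⟩ := hi
      obtain ⟨r', w', h⟩ := hg0 g hg r w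
      simp only [ph_apply, sh_apply, ha, lev1]
      by_cases hy : 0 ≤ y
      · rw [A1 g hg r y w r' w' hy h, A1 g hg r (y + 1) w r' w' (by lia) h]
        simp only [sh_apply]
        rw [hg1 g hg _ _ _ (by lia)]
      · rw [A2 g r y w hy]
        simp only [sh_apply]
        by_cases hy' : y + 1 = 0
        · rw [hy', A1 g hg r 0 w r' w' le_rfl h, h]
        · rw [A2 g r (y + 1) w (by lia), hg1 g hg _ _ _ hy']
    · simp only [ph_apply, sh_of_notMem _ _ _ hi]
      rw [ha, A3 g i w hi]
      simp only [sh_of_notMem _ _ _ hi]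
      rw [hg2 g hg i w hi]

theorem step2 (H : Subgroup ((ℕ × W) ≃ₜ (ℕ × W)))
    (hH : Cardinal.mk (((ℕ × W) ≃ₜ (ℕ × W)) ⧸ H) < 2 ^ Cardinal.aleph0) :
    ∃ S : Set ℕ, S.Infinite ∧ Sᶜ.Infinite ∧ ∀ g, Sup S g → g ∈ H := by
  obtain ⟨j, hj⟩ := step1 H hH (fun i => (Nat.unpair i).1)
  obtain ⟨m, hm⟩ := step1 H hH (fun i => if (Nat.unpair i).1 = j + 1 then
    (Nat.unpair (Nat.unpair i).2).1 + 1 else 0)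
  have hcomm : ∀ a b, Sup (Set.range (enc (j + 1) m)) a → Sup (Set.range (enc (j + 1) m)) b →
      a * b * a⁻¹ * b⁻¹ ∈ H := by
    intro a b ha hb
    have hS1 : Set.range (enc (j + 1) m) ⊆ {i | (if (Nat.unpair i).1 = j + 1 then
        (Nat.unpair (Nat.unpair i).2).1 + 1 else 0) = m + 1} := by
      rintro _ ⟨p, rfl⟩
      simp [enc_apply]
    have hS2 : Set.range (enc (j + 1) m) ⊆ {i | (Nat.unpair i).1 = j + 1} := by
      rintro _ ⟨p, rfl⟩
      simp [enc_apply]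
    obtain ⟨h, hhH, hhS, hha⟩ := hm a (ha.mono hS1)
    obtain ⟨k, hkH, -, hkb⟩ := hj b (hb.mono hS2)
    have hhS' : Sup {i | (Nat.unpair i).1 = j + 1} h := by
      refine hhS.mono ?_
      intro i hi
      by_contra hcon
      simp only [Set.mem_ofPred_eq] at hi hcon
      simp [hcon] at hi
    have e1 : k * h⁻¹ * k⁻¹ = b * h⁻¹ * b⁻¹ := by
      have : ∀ x : ℕ × W, k (h⁻¹ x) = b (h⁻¹ (b⁻¹ (k x))) := by
        intro x
        by_cases hx : (Nat.unpair x.1).1 = j + 1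
        · have h3 : (Nat.unpair (h⁻¹ x).1).1 = j + 1 := hhS'.inv.mem hx
          rw [hkb x hx, hinv_left, hkb _ h3]
        · rw [hhS'.inv x hx]
          have h4 : (Nat.unpair (k x).1).1 ≠ j + 1 := by
            intro h5
            have h6 : (Nat.unpair (b⁻¹ (k x)).1).1 = j + 1 :=
              (hb.mono hS2).inv.mem (x := k x) h5
            have h7 := hkb _ h6
            rw [hinv_right] at h7
            have h8 := k.injective h7
            rw [h8] at h6
            exact hx h6
          rw [(hb.mono hS2).inv _ h4, hhS'.inv _ h4, (hb.mono hS2) _ h4]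
      ext1 x
      simp only [hmul_apply]
      rw [this, hinv_right]
    have e2 : a * b * a⁻¹ * b⁻¹ = h * b * h⁻¹ * b⁻¹ := by
      congr 1
      have : ∀ x : ℕ × W, a (b (a⁻¹ (h x))) = h (b x) := by
        intro x
        by_cases hx : x.1 ∈ Set.range (enc (j + 1) m)
        · rw [hha x (hS1 hx), hinv_left, hha _ (hS1 (hb.mem hx))]
        · have h4 : (h x).1 ∉ Set.range (enc (j + 1) m) := by
            intro h5
            have h6 := ha.inv.mem (x := h x) h5
            have h7 := hha _ (hS1 h6)
            rw [hinv_right] at h7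
            have h8 := h.injective h7
            rw [h8] at h6
            exact hx h6
          rw [ha.inv _ h4, hb _ h4, ha _ h4, hb _ hx]
      ext1 x
      simp only [hmul_apply]
      have := this (h⁻¹ x)
      rw [hinv_right] at this
      exact this
    rw [e2]
    have e3 : h * b * h⁻¹ * b⁻¹ = h * (k * h⁻¹ * k⁻¹) := by
      rw [e1]; group
    rw [e3]
    exact H.mul_mem hhH (H.mul_mem (H.mul_mem hkH (H.inv_mem hhH)) (H.inv_mem hkH))
  refine ⟨Set.range fun r => enc (j + 1) m (r, 0), ?_, ?_, ?_⟩
  · apply Set.infinite_range_of_injective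
    intro r r' h
    have := (enc (j + 1) m).injective h
    simpa using this
  · refine (Set.infinite_range_of_injective (f := fun r => enc (j + 1) m (r, 1)) ?_).mono ?_
    · intro r r' h
      have := (enc (j + 1) m).injective h
      simpa using this
    · rintro _ ⟨r, rfl⟩ ⟨r', h⟩
      have := (enc (j + 1) m).injective h
      simp at this
  · intro g hg
    obtain ⟨a, s, ha, hs, h⟩ := swindle _ g hg
    rw [← h]
    exact hcomm a s ha hs

theorem perm_inf {α : Type*} [Countable α] (p q : α → Prop) (hp : Infinite {x // p x})
    (hq : Infinite {x // q x}) (hp' : Infinite {x // ¬ p x}) (hq' : Infinite {x // ¬ q x}) :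
    ∃ σ : Equiv.Perm α, ∀ i, q (σ i) ↔ p i := by
  classical
  obtain ⟨e⟩ := nonempty_equiv_of_countable (α := {x // p x}) (β := {x // q x})
  obtain ⟨e'⟩ := nonempty_equiv_of_countable (α := {x // ¬ p x}) (β := {x // ¬ q x})
  refine ⟨Equiv.subtypeCongr e e', fun i => ?_⟩
  by_cases hi : p i
  · simp [Equiv.subtypeCongr, hi, (e ⟨i, hi⟩).2]
  · simp [Equiv.subtypeCongr, hi, (e' ⟨i, hi⟩).2]

theorem inf_sub {T A : Set ℕ} (hA : A ⊆ T) (h : A.Infinite) : Infinite {x : T // (x : ℕ) ∈ A} := by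
  have := h.to_subtype
  exact Infinite.of_injective (fun a : A => (⟨⟨a, hA a.2⟩, a.2⟩ : {x : T // (x : ℕ) ∈ A})) (by
    intro a b hab
    simp only [Subtype.mk.injEq] at hab
    exact Subtype.ext hab)

theorem inf_sub' {T A : Set ℕ} (h : (T \ A).Infinite) : Infinite {x : T // (x : ℕ) ∉ A} := by
  have := h.to_subtype
  exact Infinite.of_injective
    (fun a : (T \ A : Set ℕ) => (⟨⟨a, a.2.1⟩, a.2.2⟩ : {x : T // (x : ℕ) ∉ A})) (by
    intro a b hab
    simp only [Subtype.mk.injEq] at hab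
    exact Subtype.ext hab)

theorem perm_exists (T A B : Set ℕ) (hA : A ⊆ T) (hB : B ⊆ T) (iA : A.Infinite) (iB : B.Infinite)
    (iA' : (T \ A).Infinite) (iB' : (T \ B).Infinite) :
    ∃ σ : Equiv.Perm ℕ, (∀ i ∉ T, σ i = i) ∧ (∀ i, σ i ∈ T ↔ i ∈ T) ∧ ∀ i, σ i ∈ B ↔ i ∈ A := by
  classical
  obtain ⟨σ, hσ⟩ := perm_inf (fun x : T => (x : ℕ) ∈ A) (fun x : T => (x : ℕ) ∈ B)
    (inf_sub hA iA) (inf_sub hB iB) (inf_sub' iA') (inf_sub' iB')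
  have h1 : ∀ i (hi : i ∈ T), Equiv.Perm.ofSubtype σ i = σ ⟨i, hi⟩ := fun i hi =>
    Equiv.Perm.ofSubtype_apply_of_mem σ hi
  have h2 : ∀ i, i ∉ T → Equiv.Perm.ofSubtype σ i = i := fun i hi =>
    Equiv.Perm.ofSubtype_apply_of_not_mem σ hi
  refine ⟨Equiv.Perm.ofSubtype σ, h2, fun i => ?_, fun i => ?_⟩
  · by_cases hi : i ∈ T
    · rw [h1 i hi]; simp [hi]
    · rw [h2 i hi]
  · by_cases hi : i ∈ T
    · rw [h1 i hi]; exact hσ ⟨i, hi⟩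
    · rw [h2 i hi]
      exact ⟨fun h => absurd (hB h) hi, fun h => absurd (hA h) hi⟩

theorem conj_mem (H : Subgroup ((ℕ × W) ≃ₜ (ℕ × W))) {S : Set ℕ} (hS : ∀ g, Sup S g → g ∈ H)
    {b : (ℕ × W) ≃ₜ (ℕ × W)} (hb : b ∈ H) {g : (ℕ × W) ≃ₜ (ℕ × W)}
    (h : ∀ x, (b x).1 ∉ S → g x = x) : g ∈ H := by
  have h1 : b * g * b⁻¹ ∈ H := by
    apply hS
    intro x hx
    simp only [hmul_apply]
    rw [h _ (by rwa [hinv_right]), hinv_right]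
  have h2 := H.mul_mem (H.mul_mem (H.inv_mem hb) h1) hb
  have h3 : b⁻¹ * (b * g * b⁻¹) * b = g := by group
  rwa [h3] at h2

theorem cont_ite {Y Z : Type*} [TopologicalSpace Y] [TopologicalSpace Z] {p : Y → Prop}
    [DecidablePred p] (hp : IsClopen {x | p x}) {f g : Y → Z} (hf : Continuous f)
    (hg : Continuous g) : Continuous (fun x => if p x then f x else g x) := by
  refine Continuous.if ?_ hf hg
  intro a ha
  rw [hp.frontier_eq] at ha
  exact absurd ha (by simp)

theorem fst_finite [CompactSpace W] (k : (ℕ × W) ≃ₜ (ℕ × W)) (c : ℕ) :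
    {j | ∃ w, (k (c, w)).1 = j}.Finite := by
  have : Continuous fun w => (k (c, w)).1 := by fun_prop
  have h := (isCompact_range this).finite_of_discrete
  exact h.subset (by rintro j ⟨w, hw⟩; exact ⟨w, hw⟩)

theorem clopen_fst (S : Set ℕ) (f : ℕ × W → ℕ × W) (hf : Continuous f) :
    IsClopen {x | (f x).1 ∈ S} :=
  (isClopen_discrete S).preimage (continuous_fst.comp hf)

theorem step4 [CompactSpace W] (H : Subgroup ((ℕ × W) ≃ₜ (ℕ × W))) (S T : Set ℕ)
    (hS : ∀ g, Sup S g → g ∈ H) (hT : ∀ g, Sup T g → g ∈ H) (hQ : (S ∩ T).Infinite)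
    (hR : (T \ S).Infinite) : ∀ g, Sup (S ∪ T) g → g ∈ H := by
  classical
  intro g hg
  let rel : ℕ → ℕ → Prop := fun c j => ∃ w, (g (c, w)).1 = j
  have fin1 : ∀ c, {j | rel c j}.Finite := fun c => fst_finite g c
  have fin2 : ∀ j, {c | rel c j}.Finite := by
    intro j
    refine (fst_finite g⁻¹ j).subset ?_
    rintro c ⟨w, hw⟩
    refine ⟨(g (c, w)).2, ?_⟩
    have : ((j, (g (c, w)).2) : ℕ × W) = g (c, w) := Prod.ext hw.symm rfl
    rw [this, hinv_left]
  obtain ⟨f, hf1, hf2⟩ := exists_seq_of_forall_finset_exists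
    (fun x : ℕ × ℕ => x.1 ∈ T \ S ∧ x.2 ∈ S ∩ T ∧ ¬ rel x.1 x.2)
    (fun x y => x.1 ≠ y.1 ∧ x.2 ≠ y.2 ∧ ¬ rel x.1 y.2 ∧ ¬ rel y.1 x.2) (by
      intro s _
      have F1 : (⋃ x ∈ s, ({x.1} ∪ {c | rel c x.2})).Finite :=
        s.finite_toSet.biUnion fun x _ => (Set.finite_singleton _).union (fin2 _)
      obtain ⟨c, hcR, hc⟩ := (hR.sdiff F1).nonempty
      have F2 : ({j | rel c j} ∪ ⋃ x ∈ s, ({x.2} ∪ {j | rel x.1 j})).Finite :=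
        (fin1 c).union
          (s.finite_toSet.biUnion fun x _ => (Set.finite_singleton _).union (fin1 _))
      obtain ⟨q, hqQ, hq⟩ := (hQ.sdiff F2).nonempty
      refine ⟨(c, q), ⟨hcR, hqQ, fun h => hq (Or.inl h)⟩, fun x hx => ⟨?_, ?_, ?_, ?_⟩⟩
      · intro h
        exact hc (Set.mem_biUnion hx (Or.inl h.symm))
      · intro h
        exact hq (Or.inr (Set.mem_biUnion hx (Or.inl h.symm)))
      · intro h
        exact hq (Or.inr (Set.mem_biUnion hx (Or.inr h)))
      · intro h
        exact hc (Set.mem_biUnion hx (Or.inr h)))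
  have hrel : ∀ m n, ¬ rel (f m).1 (f n).2 := by
    intro m n
    rcases lt_trichotomy m n with h | h | h
    · exact (hf2 m n h).2.2.1
    · subst h; exact (hf1 m).2.2
    · exact (hf2 n m h).2.2.2
  have hinj1 : Function.Injective fun n => (f n).1 := by
    intro m n hmn
    rcases lt_trichotomy m n with h | h | h
    · exact absurd hmn (hf2 m n h).1
    · exact h
    · exact absurd hmn.symm (hf2 n m h).1
  have hinj2 : Function.Injective fun n => (f n).2 := by
    intro m n hmn
    rcases lt_trichotomy m n with h | h | h
    · exact absurd hmn (hf2 m n h).2.1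
    · exact h
    · exact absurd hmn.symm (hf2 n m h).2.1
  set C : Set ℕ := Set.range fun n => (f n).1 with hC
  set E : Set ℕ := Set.range fun n => (f (2 * n)).2 with hE
  set E' : Set ℕ := Set.range fun n => (f (2 * n + 1)).2 with hE'
  have iC : C.Infinite := Set.infinite_range_of_injective hinj1
  have iE : E.Infinite := Set.infinite_range_of_injective (hinj2.comp fun a b h => by
    simpa using h)
  have iE' : E'.Infinite := Set.infinite_range_of_injective (hinj2.comp fun a b h => by
    simpa using h)
  have CR : C ⊆ T \ S := by rintro _ ⟨n, rfl⟩; exact (hf1 n).1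
  have EQ : E ⊆ S ∩ T := by rintro _ ⟨n, rfl⟩; exact (hf1 _).2.1
  have EQ' : E' ⊆ S ∩ T := by rintro _ ⟨n, rfl⟩; exact (hf1 _).2.1
  have EE' : ∀ i ∈ E', i ∉ E := by
    rintro _ ⟨n, rfl⟩ ⟨m, hm⟩
    have := hinj2 hm
    lia
  have relE : ∀ c ∈ C, ∀ q ∈ E, ¬ rel c q := by
    rintro _ ⟨m, rfl⟩ _ ⟨n, rfl⟩; exact hrel _ _
  have relE' : ∀ c ∈ C, ∀ q ∈ E', ¬ rel c q := by
    rintro _ ⟨m, rfl⟩ _ ⟨n, rfl⟩; exact hrel _ _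
  have QC : S ∩ T ⊆ T \ C := fun i hi => ⟨hi.2, fun h => (CR h).2 hi.1⟩
  have RE : T \ S ⊆ T \ E := fun i hi => ⟨hi.1, fun h => hi.2 (EQ h).1⟩
  obtain ⟨γ, γ1, γ2, γ3⟩ := perm_exists T C E (fun i hi => (CR hi).1) (fun i hi => (EQ hi).2)
    iC iE (hQ.mono QC) (hR.mono RE)
  have γH : (ph γ : (ℕ × W) ≃ₜ (ℕ × W)) ∈ H := hT _ (Sup.ph γ1)
  have γ4 : ∀ x : ℕ × W, (ph γ x).1 ∈ E ↔ x.1 ∈ C := fun x => γ3 x.1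
  have γ5 : ∀ x : ℕ × W, ((ph γ)⁻¹ x).1 ∈ C ↔ x.1 ∈ E := fun x => by
    rw [← γ4, hinv_right]
  let vf : ℕ × W → ℕ × W := fun x =>
    if x.1 ∈ E then g ((ph γ)⁻¹ x) else if (g⁻¹ x).1 ∈ C then ph γ (g⁻¹ x) else x
  have v1 : ∀ x, x.1 ∈ E → vf x = g ((ph γ)⁻¹ x) := fun x hx => if_pos hx
  have v2 : ∀ x, x.1 ∉ E → (g⁻¹ x).1 ∈ C → vf x = ph γ (g⁻¹ x) := fun x hx hx' => by
    show (if _ then _ else _) = _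
    rw [if_neg hx, if_pos hx']
  have v3 : ∀ x, x.1 ∉ E → (g⁻¹ x).1 ∉ C → vf x = x := fun x hx hx' => by
    show (if _ then _ else _) = _
    rw [if_neg hx, if_neg hx']
  have v4 : ∀ x : ℕ × W, x.1 ∈ C → (g x).1 ∉ E := fun x hx hx' =>
    relE _ hx _ hx' ⟨x.2, rfl⟩
  have vinv : Function.Involutive vf := by
    intro x
    by_cases hx : x.1 ∈ E
    · rw [v1 x hx]
      have h := (γ5 x).2 hx
      rw [v2 _ (v4 _ h) (by rwa [hinv_left]), hinv_left, hinv_right]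
    · by_cases hx' : (g⁻¹ x).1 ∈ C
      · rw [v2 x hx hx', v1 _ ((γ4 _).2 hx'), hinv_left, hinv_right]
      · rw [v3 x hx hx', v3 x hx hx']
  have vcont : Continuous vf := by
    refine cont_ite (clopen_fst E id continuous_id) ?_
      (cont_ite (clopen_fst C _ (g⁻¹).continuous) ?_ continuous_id)
    · exact g.continuous.comp ((ph γ)⁻¹ : (ℕ × W) ≃ₜ (ℕ × W)).continuous
    · exact (ph γ : (ℕ × W) ≃ₜ (ℕ × W)).continuous.comp (g⁻¹).continuous
  let v : (ℕ × W) ≃ₜ (ℕ × W) := ⟨vinv.toPerm, vcont, vcont⟩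
  have hv : ∀ x, v x = vf x := fun x => rfl
  set D : Set ℕ := E ∪ {j | ∃ c ∈ C, rel c j} with hD
  have DST : D ⊆ S ∪ T := by
    rintro j (hj | ⟨c, hc, w, rfl⟩)
    · exact Or.inl (EQ hj).1
    · exact hg.mem (x := (c, w)) (Or.inr (CR hc).1)
  have vD : Sup D v := by
    intro x hx
    rw [hv]
    apply v3
    · exact fun h => hx (Or.inl h)
    · refine fun h => hx (Or.inr ⟨_, h, (g⁻¹ x).2, ?_⟩)
      show (g (g⁻¹ x)).1 = _
      rw [hinv_right]
  have hvH : v ∈ H := by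
    obtain ⟨b, b1, b2, b3⟩ := perm_exists T (D ∩ T) (S ∩ T) Set.inter_subset_right
      Set.inter_subset_right
      (iE.mono fun i hi => ⟨Or.inl hi, (EQ hi).2⟩) hQ
      (iE'.mono fun i hi => ⟨(EQ' hi).2, fun h => by
        rcases h.1 with h | ⟨c, hc, h⟩
        · exact EE' i hi h
        · exact relE' c hc i hi h⟩)
      (hR.mono fun i hi => ⟨hi.1, fun h => hi.2 h.1⟩)
    refine conj_mem H hS (hT _ (Sup.ph b1)) (b := ph b) ?_
    intro x hx
    apply vD
    intro hxD
    apply hx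
    show b x.1 ∈ S
    by_cases hxT : x.1 ∈ T
    · exact ((b3 x.1).2 ⟨hxD, hxT⟩).1
    · rw [b1 _ hxT]
      exact (DST hxD).resolve_right hxT
  have hkH : (ph γ)⁻¹ * v * g ∈ H := by
    obtain ⟨b, b1, b2, b3⟩ := perm_exists T C (T \ S) (fun i hi => (CR hi).1)
      Set.sdiff_subset iC hR (hQ.mono QC)
      (hQ.mono fun i hi => ⟨hi.2, fun h => h.2 hi.1⟩)
    refine conj_mem H hS (hT _ (Sup.ph b1)) (b := ph b) ?_
    intro x hx
    replace hx : b x.1 ∉ S := hx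
    simp only [hmul_apply]
    by_cases hxT : x.1 ∈ T
    · have hxC : x.1 ∈ C := (b3 _).1 ⟨(b2 _).2 hxT, hx⟩
      rw [hv, v2 _ (v4 x hxC) (by rwa [hinv_left]), hinv_left, hinv_left]
    · rw [b1 _ hxT] at hx
      have hxST : x.1 ∉ S ∪ T := fun h => h.elim hx hxT
      rw [hg x hxST, vD x fun h => hxST (DST h)]
      exact (Sup.ph γ1).inv x hxT
  have : g = v⁻¹ * ph γ * ((ph γ)⁻¹ * v * g) := by group
  rw [this]
  exact H.mul_mem (H.mul_mem (H.inv_mem hvH) γH) hkH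

/-- almost disjoint family -/
def adf (ξ : ℕ → Bool) : Set ℕ := Set.range fun n => Encodable.encode ((List.range n).map ξ)

theorem adf_inf (ξ : ℕ → Bool) : (adf ξ).Infinite := by
  apply Set.infinite_range_of_injective
  intro m n h
  have := congrArg List.length (Encodable.encode_injective h)
  simpa using this

theorem adf_fin {ξ η : ℕ → Bool} (h : ξ ≠ η) : (adf ξ ∩ adf η).Finite := by
  obtain ⟨k, hk⟩ := Function.ne_iff.1 h
  refine ((Set.finite_Iic k).image fun n => Encodable.encode ((List.range n).map ξ)).subset ?_
  rintro _ ⟨⟨n, rfl⟩, ⟨m, hm⟩⟩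
  refine ⟨n, ?_, rfl⟩
  by_contra hcon
  have hkn : k < n := by simpa using hcon
  have h1 := Encodable.encode_injective hm
  have h2 : m = n := by simpa using congrArg List.length h1
  subst h2
  have h3 := List.map_inj_left.1 h1 k (List.mem_range.2 hkn)
  exact hk h3.symm

theorem adf_third (ξ η : ℕ → Bool) : (adf ξ ∪ adf η)ᶜ.Infinite := by
  have : ∃ ζ : ℕ → Bool, ζ ≠ ξ ∧ ζ ≠ η := by
    refine ⟨fun n => if n = 0 then !(ξ 0) else !(η n), fun h => ?_, fun h => ?_⟩
    · simpa using congrFun h 0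
    · simpa using congrFun h 1
  obtain ⟨ζ, h1, h2⟩ := this
  refine ((adf_inf ζ).sdiff ((adf_fin h1).union (adf_fin h2))).mono ?_
  rintro i ⟨hi, hi'⟩ (h | h)
  · exact hi' (Or.inl ⟨hi, h⟩)
  · exact hi' (Or.inr ⟨hi, h⟩)

theorem step3 [CompactSpace W] (H : Subgroup ((ℕ × W) ≃ₜ (ℕ × W)))
    (hH : Cardinal.mk (((ℕ × W) ≃ₜ (ℕ × W)) ⧸ H) < 2 ^ Cardinal.aleph0) :
    ∃ Z : Set ℕ, Zᶜ.Finite ∧ ∀ g, Sup Z g → g ∈ H := by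
  obtain ⟨S, iS, iS', hS⟩ := step2 H hH
  have hσ : ∀ ξ : ℕ → Bool, ∃ σ : Equiv.Perm ℕ, ∀ i, σ i ∈ (adf ξ)ᶜ ↔ i ∈ S := by
    intro ξ
    obtain ⟨σ, -, -, h⟩ := perm_exists Set.univ S (adf ξ)ᶜ (Set.subset_univ _)
      (Set.subset_univ _) iS ((adf_third ξ ξ).mono (by simp)) (by rwa [← Set.compl_eq_univ_sdiff])
      (by rw [← Set.compl_eq_univ_sdiff, compl_compl]; exact adf_inf ξ)
    exact ⟨σ, h⟩
  choose σ hσ using hσ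
  obtain ⟨ξ, η, hne, hm⟩ := pigeon H hH (fun ξ => (ph (σ ξ) : (ℕ × W) ≃ₜ (ℕ × W)))
  have hmem : ∀ ζ i, σ ζ i ∈ adf ζ ↔ i ∉ S := fun ζ i => by
    rw [← hσ ζ i]; simp
  let T : Set ℕ := {i | σ ξ i ∉ adf η}
  have hT : ∀ g, Sup T g → g ∈ H := by
    intro g hg
    refine conj_mem H hS (H.inv_mem hm) ?_
    intro x hx
    apply hg
    intro hxT
    apply hx
    have : ((((ph (σ ξ))⁻¹ * ph (σ η))⁻¹ : (ℕ × W) ≃ₜ (ℕ × W)) x).1 = (σ η).symm (σ ξ x.1) := by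
      rw [mul_inv_rev, inv_inv]; rfl
    rw [this, ← hσ η, Equiv.apply_symm_apply]
    exact hxT
  refine ⟨S ∪ T, ?_, step4 H S T hS hT ?_ ?_⟩
  · refine ((adf_fin hne).preimage (f := σ ξ) (σ ξ).injective.injOn).subset ?_
    intro i hi
    simp only [Set.mem_compl_iff, Set.mem_union, not_or] at hi
    exact ⟨(hmem ξ i).2 hi.1, by simpa [T] using hi.2⟩
  · refine Set.Infinite.mono ?_ ((adf_third ξ η).preimage (f := σ ξ) (by
      rw [(σ ξ).range_eq_univ]; exact Set.subset_univ _))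
    intro i hi
    simp only [Set.mem_preimage, Set.mem_compl_iff, Set.mem_union, not_or] at hi
    exact ⟨(hσ ξ i).1 hi.1, hi.2⟩
  · have : (adf ξ \ (adf ξ ∩ adf η)).Infinite := (adf_inf ξ).sdiff (adf_fin hne)
    refine Set.Infinite.mono ?_ (this.preimage (f := σ ξ) (by
      rw [(σ ξ).range_eq_univ]; exact Set.subset_univ _))
    rintro i ⟨h1, h2⟩
    exact ⟨fun h => h2 ⟨h1, h⟩, (hmem ξ i).1 h1⟩

/-- small index property -/
def SIP (X : Type u) [TopologicalSpace X] : Prop :=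
  ∀ H : Subgroup (X ≃ₜ X), Cardinal.mk ((X ≃ₜ X) ⧸ H) < 2 ^ Cardinal.aleph0 →
    ∃ A : Finset (Set X), (∀ B ∈ A, IsClopen B) ∧
      ∀ g : X ≃ₜ X, (∀ B ∈ A, ⇑g '' B = B) → g ∈ H

/-- a homeomorphism acting on a single piece -/
def atI (i : ℕ) : (W ≃ₜ W) →* ((ℕ × W) ≃ₜ (ℕ × W)) where
  toFun a := glue (fun x : ℕ × W => x.1) (lc_fst id)
    (fun j => if j = i then (Homeomorph.refl ℕ).prodCongr a else 1)
    (fun x => by split_ifs <;> rfl)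
    (fun x => by split_ifs <;> rfl)
  map_one' := by
    ext1 x
    rw [glue_apply]
    split_ifs <;> rfl
  map_mul' a b := by
    ext1 x
    rw [hmul_apply, glue_apply, glue_apply, glue_apply]
    by_cases h : x.1 = i
    · simp [h]; rfl
    · simp [h]

theorem atI_apply (i : ℕ) (a : W ≃ₜ W) (w : W) : atI i a (i, w) = (i, a w) := by
  show (if i = i then _ else _ : (ℕ × W) ≃ₜ (ℕ × W)) _ = _
  rw [if_pos rfl]; rfl

theorem atI_ne (i : ℕ) (a : W ≃ₜ W) (x : ℕ × W) (h : x.1 ≠ i) : atI i a x = x := by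
  show (if x.1 = i then _ else _ : (ℕ × W) ≃ₜ (ℕ × W)) _ = _
  rw [if_neg h]; rfl

/-- restriction to a piece -/
def resI (i : ℕ) (g : (ℕ × W) ≃ₜ (ℕ × W)) (h : ∀ w, (g (i, w)).1 = i)
    (h' : ∀ w, (g⁻¹ (i, w)).1 = i) : W ≃ₜ W where
  toFun w := (g (i, w)).2
  invFun w := (g⁻¹ (i, w)).2
  left_inv w := by
    show (g⁻¹ (i, (g (i, w)).2)).2 = w
    have : (i, (g (i, w)).2) = g (i, w) := Prod.ext (h w).symm rfl
    rw [this, hinv_left]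
  right_inv w := by
    show (g (i, (g⁻¹ (i, w)).2)).2 = w
    have : (i, (g⁻¹ (i, w)).2) = g⁻¹ (i, w) := Prod.ext (h' w).symm rfl
    rw [this, hinv_right]
  continuous_toFun := by fun_prop
  continuous_invFun := by
    have := (g⁻¹).continuous
    fun_prop

theorem atI_resI (i : ℕ) (g : (ℕ × W) ≃ₜ (ℕ × W)) (h : ∀ w, (g (i, w)).1 = i)
    (h' : ∀ w, (g⁻¹ (i, w)).1 = i) (x : ℕ × W) (hx : x.1 = i) :
    atI i (resI i g h h') x = g x := by
  obtain ⟨j, w⟩ := x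
  obtain rfl : j = i := hx
  rw [atI_apply]
  exact Prod.ext (h w).symm rfl

theorem step5 [CompactSpace W] (hW : SIP W) (H : Subgroup ((ℕ × W) ≃ₜ (ℕ × W)))
    (hH : Cardinal.mk (((ℕ × W) ≃ₜ (ℕ × W)) ⧸ H) < 2 ^ Cardinal.aleph0) :
    ∃ A : Finset (Set (ℕ × W)), (∀ B ∈ A, IsClopen B ∧ IsCompact B) ∧
      ∀ g : (ℕ × W) ≃ₜ (ℕ × W), (∀ B ∈ A, ⇑g '' B = B) → g ∈ H := by
  classical
  obtain ⟨Z, fZ, hZ⟩ := step3 H hH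
  have hA := fun i : ℕ => hW (H.comap (atI i)) (small_comap (atI i) H hH)
  choose A hA1 hA2 using hA
  let A' : Finset (Set (ℕ × W)) := fZ.toFinset.biUnion fun i =>
    (A i).image (fun B => {i} ×ˢ B) ∪ {{i} ×ˢ Set.univ}
  have memA' : ∀ B, B ∈ A' ↔ ∃ i, i ∉ Z ∧ ((∃ B' ∈ A i, {i} ×ˢ B' = B) ∨ B = {i} ×ˢ Set.univ) := by
    intro B
    simp [A', or_comm]
  refine ⟨A', ?_, ?_⟩
  · intro B hB
    obtain ⟨i, -, hB⟩ := (memA' B).1 hB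
    have : ∃ B', IsClopen B' ∧ B = {i} ×ˢ B' := by
      rcases hB with ⟨B', hB', rfl⟩ | rfl
      · exact ⟨B', hA1 i B' hB', rfl⟩
      · exact ⟨_, isClopen_univ, rfl⟩
    obtain ⟨B', h, rfl⟩ := this
    exact ⟨(isClopen_discrete {i}).prod h, isCompact_singleton.prod h.isClosed.isCompact⟩
  · have key : ∀ F : Finset ℕ, (∀ i ∈ F, i ∉ Z) → ∀ g : (ℕ × W) ≃ₜ (ℕ × W),
        (∀ B ∈ A', ⇑g '' B = B) → Sup (Z ∪ F) g → g ∈ H := by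
      intro F
      induction F using Finset.induction_on with
      | empty =>
        intro _ g _ hg
        exact hZ g (hg.mono (by simp))
      | insert i F hi ih =>
        intro hF g hgA hg
        have hiZ : i ∉ Z := hF i (Finset.mem_insert_self _ _)
        have himg : ⇑g '' ({i} ×ˢ Set.univ) = {i} ×ˢ Set.univ :=
          hgA _ ((memA' _).2 ⟨i, hiZ, Or.inr rfl⟩)
        have h1 : ∀ w, (g (i, w)).1 = i := by
          intro w
          have : g (i, w) ∈ ⇑g '' ({i} ×ˢ Set.univ) := ⟨(i, w), by simp, rfl⟩
          rw [himg] at this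
          simpa using this
        have h2 : ∀ w, (g⁻¹ (i, w)).1 = i := by
          intro w
          have : (i, w) ∈ ⇑g '' ({i} ×ˢ Set.univ) := by rw [himg]; simp
          obtain ⟨x, hx, hx'⟩ := this
          rw [hinv_of g hx']
          simpa using hx
        set k := atI i (resI i g h1 h2) with hk
        have k1 : ∀ x : ℕ × W, x.1 = i → k x = g x := atI_resI i g h1 h2
        have k2 : ∀ x : ℕ × W, x.1 ≠ i → k x = x := atI_ne i _
        have kH : k ∈ H := by
          refine hA2 i _ ?_
          intro B hB
          have h3 := hgA _ ((memA' _).2 ⟨i, hiZ, Or.inl ⟨B, hB, rfl⟩⟩)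
          ext w
          constructor
          · rintro ⟨w', hw', rfl⟩
            have : g (i, w') ∈ ⇑g '' ({i} ×ˢ B) := ⟨(i, w'), by simpa using hw', rfl⟩
            rw [h3] at this
            exact this.2
          · intro hw
            have : (i, w) ∈ ⇑g '' ({i} ×ˢ B) := by rw [h3]; simpa using hw
            obtain ⟨⟨j, w'⟩, hx, hx'⟩ := this
            obtain rfl : j = i := by simpa using hx.1
            exact ⟨w', hx.2, congrArg Prod.snd hx'⟩
        have kA : ∀ B ∈ A', ⇑k '' B = B := by
          intro B hB
          obtain ⟨j, -, hj⟩ := (memA' B).1 hB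
          have hj' : ∀ x ∈ B, x.1 = j := by
            rcases hj with ⟨B', -, rfl⟩ | rfl
            · intro x hx; simpa using hx.1
            · intro x hx; simpa using hx.1
          by_cases hji : j = i
          · rw [← hgA B hB]
            conv_rhs => rw [← hgA B hB]
            rw [hgA B hB]
            exact Set.image_congr fun x hx => k1 x ((hj' x hx).trans hji)
          · conv_rhs => rw [← Set.image_id B]
            exact Set.image_congr fun x hx => k2 x (by rw [hj' x hx]; exact hji)
        have h4 : k⁻¹ * g ∈ H := by
          apply ih (fun j hj => hF j (Finset.mem_insert_of_mem hj))
          · intro B hB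
            have : ⇑(k⁻¹ * g) = ⇑(k⁻¹) ∘ ⇑g := rfl
            rw [this, Set.image_comp, hgA B hB]
            conv_lhs => rw [← kA B hB]
            rw [← Set.image_comp]
            conv_rhs => rw [← Set.image_id B]
            exact Set.image_congr fun x _ => hinv_left k x
          · intro x hx
            rw [hmul_apply]
            apply hinv_of
            by_cases hxi : x.1 = i
            · exact k1 x hxi
            · rw [k2 x hxi, hg x]
              intro h
              rcases h with h | h
              · exact hx (Or.inl h)
              · rcases Finset.mem_insert.1 (Finset.mem_coe.1 h) with h | h
                · exact hxi h
                · exact hx (Or.inr h)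
        have : g = k * (k⁻¹ * g) := by group
        rw [this]
        exact H.mul_mem kH h4
    intro g hg
    refine key fZ.toFinset (by simp) g hg ?_
    intro x hx
    exact absurd (by simp) hx

/-- extension of a homeomorphism to the one point compactification -/
def extH {X Y : Type u} [TopologicalSpace X] [TopologicalSpace Y] (k : OnePoint Y ≃ₜ X) :
    (Y ≃ₜ Y) →* (X ≃ₜ X) where
  toFun f := k.symm.trans (f.onePointCongr.trans k)
  map_one' := by
    ext1 x
    show k (OnePoint.map id (k.symm x)) = x
    rw [OnePoint.map_id]; simp
  map_mul' f g := by
    ext1 x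
    show k (OnePoint.map (f ∘ g) (k.symm x)) =
      k (OnePoint.map f (k.symm (k (OnePoint.map g (k.symm x)))))
    rw [k.symm_apply_apply, OnePoint.map_comp]; rfl

theorem sip_step {X : Type u} [TopologicalSpace X] [CompactSpace X] [T2Space X] [CompactSpace W]
    (hW : SIP W) (p : X) (e : ℕ × W → X) (he : IsOpenEmbedding e) (hr : Set.range e = {p}ᶜ)
    (hp : ∀ g : X ≃ₜ X, g p = p) : SIP X := by
  intro H hH
  let k := OnePoint.equivOfIsEmbeddingOfRangeEq p e he.isEmbedding hr
  have k1 : ∀ y : ℕ × W, k (y : OnePoint (ℕ × W)) = e y := fun y => rfl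
  have k2 : k OnePoint.infty = p := rfl
  have ex1 : ∀ f y, extH k f (e y) = e (f y) := by
    intro f y
    rw [← k1 y, ← k1 (f y)]
    show k (OnePoint.map f (k.symm (k (y : OnePoint (ℕ × W))))) = _
    rw [k.symm_apply_apply]; rfl
  have ex2 : ∀ f, extH k f p = p := by
    intro f
    rw [← k2]
    show k (OnePoint.map f (k.symm (k _))) = _
    rw [k.symm_apply_apply]; rfl
  obtain ⟨A, hA1, hA2⟩ := step5 hW (H.comap (extH k)) (small_comap _ H hH)
  classical
  refine ⟨A.image (fun B => e '' B), ?_, ?_⟩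
  · intro B hB
    obtain ⟨B', hB', rfl⟩ := Finset.mem_image.1 hB
    exact ⟨((hA1 B' hB').2.image he.continuous).isClosed,
      he.isOpenMap _ (hA1 B' hB').1.isOpen⟩
  · intro g hg
    have hgr : ∀ g : X ≃ₜ X, ∀ y, ∃ y', e y' = g (e y) := by
      intro g y
      have : g (e y) ∈ Set.range e := by
        rw [hr]
        intro h
        have h' : e y = p := g.injective (h.trans (hp g).symm)
        have : e y ∈ ({p}ᶜ : Set X) := hr ▸ ⟨y, rfl⟩
        exact this h'
      exact this
    choose F hF using hgr
    have hc : ∀ g : X ≃ₜ X, Continuous (F g) := by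
      intro g
      rw [he.isInducing.continuous_iff]
      have : e ∘ F g = g ∘ e := funext fun y => hF g y
      rw [this]
      exact g.continuous.comp he.continuous
    let f : (ℕ × W) ≃ₜ (ℕ × W) :=
      { toFun := F g
        invFun := F g⁻¹
        left_inv := fun y => he.injective (by rw [hF, hF, hinv_left])
        right_inv := fun y => he.injective (by rw [hF, hF, hinv_right])
        continuous_toFun := hc g
        continuous_invFun := hc g⁻¹ }
    have hf : ∀ y, e (f y) = g (e y) := hF g
    have hfg : extH k f = g := by
      ext1 x
      by_cases hx : x = p
      · rw [hx, ex2, hp]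
      · have : x ∈ Set.range e := by rw [hr]; exact hx
        obtain ⟨y, rfl⟩ := this
        rw [ex1, hf]
    have : f ∈ H.comap (extH k) := by
      apply hA2
      intro B hB
      apply he.injective.image_injective
      have h3 := hg _ (Finset.mem_image_of_mem _ hB)
      rw [← Set.image_comp] at h3 ⊢
      conv_rhs => rw [← h3]
      exact Set.image_congr fun y _ => hf y
    rw [← hfg]
    exact this

/-- iterated derived sets -/
def Rk (X : Type*) [TopologicalSpace X] : ℕ → Set X
  | 0 => Set.univ
  | n + 1 => derivedSet (Rk X n)

theorem accPt_emb {X Y : Type*} [TopologicalSpace X] [TopologicalSpace Y] {e : Y → X}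
    (he : IsOpenEmbedding e) (A : Set X) (y : Y) :
    AccPt (e y) (Filter.principal A) ↔ AccPt y (Filter.principal (e ⁻¹' A)) := by
  rw [accPt_iff_nhds, accPt_iff_nhds]
  constructor
  · intro h U hU
    obtain ⟨x, ⟨⟨z, hz, rfl⟩, hx⟩, hne⟩ := h (e '' U) (he.image_mem_nhds.2 hU)
    exact ⟨z, ⟨hz, hx⟩, fun h => hne (by rw [h])⟩
  · intro h U hU
    obtain ⟨z, ⟨hz, hx⟩, hne⟩ := h (e ⁻¹' U) (he.continuous.continuousAt.preimage_mem_nhds hU)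
    exact ⟨e z, ⟨hz, hx⟩, fun h => hne (he.injective h)⟩

theorem Rk_emb {X Y : Type*} [TopologicalSpace X] [TopologicalSpace Y] {e : Y → X}
    (he : IsOpenEmbedding e) (n : ℕ) : e ⁻¹' (Rk X n) = Rk Y n := by
  induction n with
  | zero => rfl
  | succ n ih =>
    ext y
    show AccPt (e y) _ ↔ AccPt y _
    rw [accPt_emb he, ih]

theorem Rk_step {X : Type u} [TopologicalSpace X] [CompactSpace X] [T2Space X] [T2Space W]
    (n : ℕ) (w : W) (hw : Rk W n = {w}) (p : X) (e : ℕ × W → X) (he : IsOpenEmbedding e)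
    (hr : Set.range e = {p}ᶜ) : Rk X (n + 1) = {p} := by
  have hemb : ∀ i : ℕ, IsOpenEmbedding fun w : W => e (i, w) := by
    intro i
    refine he.comp ?_
    refine ⟨⟨?_, ?_⟩, ?_⟩
    · exact (Topology.IsInducing.of_comp (g := Prod.snd) (by fun_prop) continuous_snd
        Topology.IsInducing.id)
    · intro a b h
      simpa using h
    · have : Set.range (fun w : W => (i, w)) = {i} ×ˢ Set.univ := by
        ext ⟨a, b⟩; simp [eq_comm]
      rw [this]
      exact (isOpen_discrete {i}).prod isOpen_univ
  have hne : ∀ y, e y ≠ p := by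
    intro y h
    have : e y ∈ ({p}ᶜ : Set X) := hr ▸ ⟨y, rfl⟩
    exact this h
  ext x
  constructor
  · intro hx
    by_contra hxp
    have : x ∈ Set.range e := by rw [hr]; exact hxp
    obtain ⟨⟨i, w'⟩, rfl⟩ := this
    have h1 : w' ∈ Rk W (n + 1) := by
      rw [← Rk_emb (hemb i)]; exact hx
    have h2 : AccPt w' (Filter.principal (Rk W n)) := h1
    rw [hw, accPt_iff_nhds] at h2
    by_cases h : w' = w
    · obtain ⟨y, ⟨-, hy⟩, hne⟩ := h2 Set.univ Filter.univ_mem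
      exact hne (by rw [h]; exact hy)
    · obtain ⟨y, ⟨hy, hy'⟩, -⟩ := h2 {w}ᶜ (isOpen_compl_singleton.mem_nhds h)
      exact hy hy'
  · rintro rfl
    show AccPt x _
    rw [accPt_iff_nhds]
    intro U hU
    obtain ⟨V, hVU, hV, hxV⟩ := mem_nhds_iff.1 hU
    have hw' : ∀ i, e (i, w) ∈ Rk X n := by
      intro i
      have : w ∈ (fun w : W => e (i, w)) ⁻¹' (Rk X n) := by
        rw [Rk_emb (hemb i), hw]; rfl
      exact this
    suffices ∃ i, e (i, w) ∈ V by
      obtain ⟨i, hi⟩ := this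
      exact ⟨_, ⟨hVU hi, hw' i⟩, hne _⟩
    by_contra hcon
    push Not at hcon
    have hK : IsCompact (e ⁻¹' Vᶜ) := by
      rw [he.isEmbedding.isCompact_iff, Set.image_preimage_eq_iff.2]
      · exact (isClosed_compl_iff.2 hV).isCompact
      · rw [hr]
        intro z hz h
        rw [h] at hz
        exact hz hxV
    have hfin := (hK.image continuous_fst).finite_of_discrete
    refine Set.infinite_univ (α := ℕ) (hfin.subset ?_)
    intro i _
    exact ⟨(i, w), hcon i, rfl⟩

theorem fix_top {X : Type*} [TopologicalSpace X] {n : ℕ} {p : X} (h : Rk X n = {p})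
    (g : X ≃ₜ X) : g p = p := by
  have h1 : p ∈ ⇑g ⁻¹' (Rk X n) := by
    rw [Rk_emb g.isOpenEmbedding, h]; rfl
  rw [h] at h1
  exact h1

section ord

open Order

theorem pieces_lt {δ : Ordinal.{u}} {i j : ℕ} (hij : i < j) {β β' : Ordinal.{u}} (h : β ≤ δ)
    (h' : 1 ≤ β') : δ * i + β < δ * j + β' := by
  calc δ * i + β ≤ δ * i + δ := by gcongr
    _ = δ * (i + 1 : ℕ) := by rw [Nat.cast_add_one, mul_add_one]
    _ ≤ δ * j := by gcongr; exact_mod_cast hij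
    _ < δ * j + β' := by
      have : (0 : Ordinal) < β' := lt_of_lt_of_le zero_lt_one h'
      simpa using this

/-- one piece -/
def pieceMap (δ : Ordinal.{u}) (x : ℕ × OrdIcc δ) : OrdIcc (δ * omega0) :=
  ⟨δ * x.1 + x.2, le_trans x.2.2.1 (le_add_left le_rfl), by
    calc δ * x.1 + x.2 ≤ δ * x.1 + δ := by gcongr; exact x.2.2.2
      _ = δ * (x.1 + 1 : ℕ) := by rw [Nat.cast_add_one, mul_add_one]
      _ ≤ δ * omega0 := by gcongr; exact (Ordinal.natCast_lt_omega0 _).le⟩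

theorem pieceMap_cont (δ : Ordinal.{u}) (i : ℕ) : Continuous fun y => pieceMap δ (i, y) := by
  refine Continuous.subtype_mk ?_ _
  exact (Ordinal.isNormal_add_right (δ * i)).continuous.comp continuous_subtype_val

theorem pieceMap_inj (δ : Ordinal.{u}) : Function.Injective (pieceMap δ) := by
  rintro ⟨i, y⟩ ⟨j, z⟩ h
  have h1 : δ * i + y = δ * j + z := congrArg Subtype.val h
  rcases lt_trichotomy i j with hij | hij | hij
  · exact absurd h1 (pieces_lt hij y.2.2 z.2.1).ne
  · subst hij
    have : (y : Ordinal) = z := by simpa using h1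
    rw [Subtype.ext this]
  · exact absurd h1 (pieces_lt hij z.2.2 y.2.1).ne'

theorem pieceMap_surj (δ : Ordinal.{u}) (γ : Ordinal.{u}) (h1 : 1 ≤ γ) (h : γ < δ * omega0) :
    ∃ i : ℕ, ∃ β, 1 ≤ β ∧ β ≤ δ ∧ γ = δ * i + β := by
  classical
  have hex : ∃ k : ℕ, γ ≤ δ * (k + 1 : ℕ) := by
    obtain ⟨c, hc, hc'⟩ := (Ordinal.lt_mul_iff_of_isSuccLimit Ordinal.isSuccLimit_omega0).1 h
    obtain ⟨k, rfl⟩ := Ordinal.lt_omega0.1 hc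
    refine ⟨k, hc'.le.trans ?_⟩
    gcongr
    exact_mod_cast Nat.le_succ k
  have hlt : δ * (Nat.find hex : ℕ) < γ := by
    rcases hk : Nat.find hex with _ | m
    · simpa using lt_of_lt_of_le zero_lt_one h1
    · have := Nat.find_min hex (m := m) (by lia)
      exact not_le.1 this
  refine ⟨Nat.find hex, γ - δ * (Nat.find hex : ℕ), ?_, ?_, ?_⟩
  · rw [Order.one_le_iff_pos]
    exact Ordinal.lt_sub.2 (by simpa using hlt)
  · rw [Ordinal.sub_le, ← mul_add_one, ← Nat.cast_add_one]
    exact Nat.find_spec hex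
  · exact (Ordinal.add_sub_cancel_of_le hlt.le).symm

theorem pieceMap_range (δ : Ordinal.{u}) (h1 : 1 ≤ δ * omega0) :
    Set.range (pieceMap δ) = {(⟨δ * omega0, h1, le_rfl⟩ : OrdIcc (δ * omega0))}ᶜ := by
  have hδ : 0 < δ := by
    rcases eq_zero_or_pos δ with h | h
    · subst h; simp at h1
    · exact h
  ext ⟨γ, hγ⟩
  constructor
  · rintro ⟨⟨i, y⟩, h⟩ h'
    have e1 : δ * i + y = γ := congrArg Subtype.val h
    have e2 : γ = δ * omega0 := congrArg Subtype.val h'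
    have : δ * i + y < δ * omega0 := by
      calc δ * i + y ≤ δ * i + δ := by gcongr; exact y.2.2
        _ = δ * (i + 1 : ℕ) := by rw [Nat.cast_add_one, mul_add_one]
        _ < δ * omega0 := by
          exact (mul_lt_mul_iff_right₀ hδ).2 (Ordinal.natCast_lt_omega0 _)
    rw [e1, e2] at this
    exact lt_irrefl _ this
  · intro h
    have hlt : γ < δ * omega0 := lt_of_le_of_ne hγ.2 fun h' => h (Subtype.ext h')
    obtain ⟨i, β, hb1, hb2, hb3⟩ := pieceMap_surj δ γ hγ.1 hlt
    exact ⟨(i, ⟨β, hb1, hb2⟩), Subtype.ext hb3.symm⟩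

theorem pieceMap_range_i (δ : Ordinal.{u}) (i : ℕ) :
    IsOpen (Set.range fun y => pieceMap δ (i, y)) := by
  have : (Set.range fun y => pieceMap δ (i, y)) =
      Subtype.val ⁻¹' (Set.Ioo (δ * i) (succ (δ * i + δ))) := by
    ext ⟨γ, hγ⟩
    constructor
    · rintro ⟨y, h⟩
      have e1 : δ * i + y = γ := congrArg Subtype.val h
      show δ * i < γ ∧ γ < _
      rw [← e1, lt_succ_iff]
      refine ⟨?_, ?_⟩
      · have : (0 : Ordinal) < y := lt_of_lt_of_le zero_lt_one y.2.1
        simpa using this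
      · gcongr; exact y.2.2
    · rintro ⟨h1, h2⟩
      rw [lt_succ_iff] at h2
      refine ⟨⟨γ - δ * i, ?_, Ordinal.sub_le.2 h2⟩,
        Subtype.ext (Ordinal.add_sub_cancel_of_le h1.le)⟩
      rw [Order.one_le_iff_pos]
      exact Ordinal.lt_sub.2 (by simpa using h1)
  rw [this]
  exact isOpen_Ioo.preimage continuous_subtype_val

theorem pieceMap_emb (δ : Ordinal.{u}) : IsOpenEmbedding (pieceMap δ) := by
  refine IsOpenEmbedding.of_continuous_injective_isOpenMap
    (continuous_prod_of_discrete_left.2 (pieceMap_cont δ)) (pieceMap_inj δ) ?_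
  intro U hU
  have hi : ∀ i, IsOpenEmbedding fun y => pieceMap δ (i, y) := fun i =>
    ⟨((pieceMap_cont δ i).isClosedEmbedding fun a b h => by
      simpa using pieceMap_inj δ h).isEmbedding, pieceMap_range_i δ i⟩
  have : pieceMap δ '' U = ⋃ i : ℕ, (fun y => pieceMap δ (i, y)) '' ((fun y => (i, y)) ⁻¹' U) := by
    ext x
    simp only [Set.mem_image, Set.mem_iUnion, Set.mem_preimage, Prod.exists]
  rw [this]
  exact isOpen_iUnion fun i => (hi i).isOpenMap _ (hU.preimage (by fun_prop))

theorem main (n : ℕ) : ∃ γ : Ordinal.{u}, γ = omega0 ^ (n : Ordinal.{u}) ∧ ∃ h1 : 1 ≤ γ,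
    SIP (OrdIcc γ) ∧ Rk (OrdIcc γ) n = {⟨γ, h1, le_rfl⟩} := by
  induction n with
  | zero =>
    have hs : ∀ x : OrdIcc (1 : Ordinal.{u}), x = ⟨1, le_rfl, le_rfl⟩ := fun x =>
      Subtype.ext (le_antisymm x.2.2 x.2.1)
    refine ⟨1, by simp, le_rfl, ?_, ?_⟩
    · intro H _
      refine ⟨∅, by simp, fun g _ => ?_⟩
      have : g = 1 := by
        ext1 x
        rw [hs (g x), hs x]; rfl
      rw [this]
      exact H.one_mem
    · ext x
      simp only [Set.mem_singleton_iff]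
      exact ⟨fun _ => hs x, fun _ => Set.mem_univ x⟩
  | succ n ih =>
    obtain ⟨δ, hδ, h1, hS, hR⟩ := ih
    have h1' : 1 ≤ δ * omega0 := by
      calc (1 : Ordinal) = 1 * 1 := by simp
        _ ≤ δ * omega0 := by gcongr; exact Ordinal.one_lt_omega0.le
    have hR' : Rk (OrdIcc (δ * omega0)) (n + 1) = {⟨δ * omega0, h1', le_rfl⟩} :=
      Rk_step n _ hR _ (pieceMap δ) (pieceMap_emb δ) (pieceMap_range δ h1')
    refine ⟨δ * omega0, ?_, h1', ?_, hR'⟩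
    · rw [hδ, Nat.cast_add_one, Ordinal.opow_add, Ordinal.opow_one]
    · exact sip_step hS _ (pieceMap δ) (pieceMap_emb δ) (pieceMap_range δ h1') (fix_top hR')

end ord

end SIPx

/-- For a positive natural number `α`, the group `G` of homeomorphisms of
`X = [1, ω^α]` (order topology) has the small index property: every subgroup `H` of `G`
of index `< 2^ℵ₀` contains the pointwise stabilizer of a finite set of clopen subsets of `X`. -/
theorem smallIndexProperty_homeoGroup_omega_pow (α : ℕ) (hα : 0 < α)
    (H : Subgroup (OrdIcc (omega0 ^ (α : Ordinal)) ≃ₜ OrdIcc (omega0 ^ (α : Ordinal))))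
    (hH : Cardinal.mk ((OrdIcc (omega0 ^ (α : Ordinal)) ≃ₜ OrdIcc (omega0 ^ (α : Ordinal))) ⧸ H)
      < 2 ^ Cardinal.aleph0) :
    ∃ A : Finset (Set (OrdIcc (omega0 ^ (α : Ordinal)))),
      (∀ B ∈ A, IsClopen B) ∧
      ∀ g : OrdIcc (omega0 ^ (α : Ordinal)) ≃ₜ OrdIcc (omega0 ^ (α : Ordinal)),
        (∀ B ∈ A, ⇑g '' B = B) → g ∈ H := by
  obtain ⟨γ, rfl, -, h, -⟩ := SIPx.main α
  exact h H hH
end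
end

section
/- Let α and a be positive natural numbers and let X = [1, ω^α·a] be the set of ordinals β with 1 ≤ β ≤ ω^α·a (ordinal exponentiation and multiplication), equipped with the order topology, and let G be the group of homeomorphisms of X onto itself. Then G has the small index property: every subgroup H of G whose index, as a cardinal, is strictly less than 2^ℵ₀ contains the pointwise stabilizer {g ∈ G : g(B) = B for all B ∈ A} of some finite set A of clopen subsets of X. -/
open Ordinal Topology

noncomputable section

namespace SIPaux

set_option linter.unusedSectionVars false

open Function

/-- A universe-free form of "index less than the continuum". -/
def Sm {G : Type*} [Group G] (H : Subgroup G) : Prop :=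
  ∀ f : (ℕ → Bool) → G, ∃ x y, x ≠ y ∧ (f x)⁻¹ * f y ∈ H

theorem Sm.comap {G G' : Type*} [Group G] [Group G'] {H : Subgroup G} (h : Sm H) (φ : G' →* G) :
    Sm (H.comap φ) := by
  intro f
  obtain ⟨x, y, hxy, hm⟩ := h (fun x => φ (f x))
  exact ⟨x, y, hxy, by simpa [Subgroup.mem_comap] using hm⟩

theorem sm_of_card {G : Type*} [Group G] (H : Subgroup G)
    (h : Cardinal.mk (G ⧸ H) < 2 ^ Cardinal.aleph0) : Sm H := by
  intro f
  by_contra hc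
  push Not at hc
  have hinj : Injective (fun x => (QuotientGroup.mk (f x) : G ⧸ H)) := by
    intro x y hxy
    by_contra hne
    exact hc x y hne (QuotientGroup.eq.1 hxy)
  have := Cardinal.lift_mk_le_lift_mk_of_injective hinj
  have h2 : Cardinal.mk (ℕ → Bool) = Cardinal.continuum := by simp
  rw [h2] at this
  simp only [Cardinal.lift_continuum, Cardinal.lift_uzero] at this
  rw [Cardinal.two_power_aleph0] at h
  exact absurd this (not_le.2 h)

section Core

variable {ι : Type*} {Y : Type*} [TopologicalSpace ι] [DiscreteTopology ι] [TopologicalSpace Y]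

theorem mul_app {X : Type*} [TopologicalSpace X] (f g : X ≃ₜ X) (x : X) : (f * g) x = f (g x) := rfl
theorem one_app {X : Type*} [TopologicalSpace X] (x : X) : (1 : X ≃ₜ X) x = x := rfl
theorem inv_app_self {X : Type*} [TopologicalSpace X] (f : X ≃ₜ X) (x : X) : f⁻¹ (f x) = x :=
  f.symm_apply_apply x
theorem app_inv_self {X : Type*} [TopologicalSpace X] (f : X ≃ₜ X) (x : X) : f (f⁻¹ x) = x :=
  f.apply_symm_apply x

/-- `g` is the identity off `S × Y`. -/
def Sp (S : Set ι) (g : ι × Y ≃ₜ ι × Y) : Prop := ∀ z : ι × Y, z.1 ∉ S → g z = z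

theorem Sp.one (S : Set ι) : Sp S (1 : ι × Y ≃ₜ ι × Y) := fun _ _ => rfl

theorem Sp.mono {S T : Set ι} {g : ι × Y ≃ₜ ι × Y} (h : Sp S g) (hST : S ⊆ T) : Sp T g :=
  fun z hz => h z fun h' => hz (hST h')

theorem Sp.inv {S : Set ι} {g : ι × Y ≃ₜ ι × Y} (h : Sp S g) : Sp S g⁻¹ := by
  intro z hz
  apply g.injective
  rw [app_inv_self, h z hz]

theorem Sp.mul {S : Set ι} {g k : ι × Y ≃ₜ ι × Y} (h : Sp S g) (h' : Sp S k) : Sp S (g * k) := by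
  intro z hz
  rw [mul_app, h' z hz, h z hz]

theorem Sp.mem {S : Set ι} {g : ι × Y ≃ₜ ι × Y} (h : Sp S g) {z : ι × Y} (hz : z.1 ∈ S) :
    (g z).1 ∈ S := by
  by_contra hc
  have := g.injective (h _ hc)
  rw [this] at hc
  exact hc hz

theorem cont_of_local {W : Type*} [TopologicalSpace W] {F : ι × Y → W}
    (h : ∀ n, ∃ G : ι × Y → W, Continuous G ∧ ∀ y, F (n, y) = G (n, y)) : Continuous F := by
  rw [continuous_iff_continuousAt]
  rintro ⟨n, y⟩
  obtain ⟨G, hG, hFG⟩ := h n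
  refine hG.continuousAt.congr ?_
  have : ∀ᶠ z : ι × Y in nhds (n, y), z.1 = n := by
    have ho : IsOpen {z : ι × Y | z.1 = n} := (isOpen_discrete {n}).preimage continuous_fst
    exact ho.mem_nhds rfl
  filter_upwards [this] with z hz
  obtain ⟨m, w⟩ := z
  simp only at hz
  subst hz
  exact (hFG w).symm

/-- glue a family of homeomorphisms with disjoint supports -/
def glue {κ : Type*} (c : ι → κ) (g : κ → (ι × Y ≃ₜ ι × Y)) (hg : ∀ i, Sp (c ⁻¹' {i}) (g i)) :
    ι × Y ≃ₜ ι × Y where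
  toFun z := g (c z.1) z
  invFun z := (g (c z.1))⁻¹ z
  left_inv z := by
    have : c (g (c z.1) z).1 = c z.1 := (hg (c z.1)).mem (z := z) rfl
    show (g (c (g (c z.1) z).1))⁻¹ (g (c z.1) z) = z
    rw [this, inv_app_self]
  right_inv z := by
    have : c ((g (c z.1))⁻¹ z).1 = c z.1 := (hg (c z.1)).inv.mem (z := z) rfl
    show (g (c ((g (c z.1))⁻¹ z).1)) ((g (c z.1))⁻¹ z) = z
    rw [this, app_inv_self]
  continuous_toFun := cont_of_local fun n => ⟨g (c n), (g (c n)).continuous, fun _ => rfl⟩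
  continuous_invFun :=
    cont_of_local fun n => ⟨((g (c n))⁻¹ : ι × Y ≃ₜ ι × Y), ((g (c n))⁻¹).continuous, fun _ => rfl⟩

theorem glue_app {κ : Type*} (c : ι → κ) (g : κ → (ι × Y ≃ₜ ι × Y))
    (hg : ∀ i, Sp (c ⁻¹' {i}) (g i)) (z : ι × Y) : glue c g hg z = g (c z.1) z := rfl

theorem glue_inv_app {κ : Type*} (c : ι → κ) (g : κ → (ι × Y ≃ₜ ι × Y))
    (hg : ∀ i, Sp (c ⁻¹' {i}) (g i)) (z : ι × Y) : (glue c g hg)⁻¹ z = (g (c z.1))⁻¹ z := rfl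

/-- homeomorphism induced by a permutation of the index set -/
def P (σ : Equiv.Perm ι) : ι × Y ≃ₜ ι × Y where
  toFun z := (σ z.1, z.2)
  invFun z := (σ.symm z.1, z.2)
  left_inv z := by simp
  right_inv z := by simp
  continuous_toFun := (continuous_of_discreteTopology.comp continuous_fst).prodMk continuous_snd
  continuous_invFun := (continuous_of_discreteTopology.comp continuous_fst).prodMk continuous_snd

theorem P_app (σ : Equiv.Perm ι) (z : ι × Y) : P σ z = (σ z.1, z.2) := rfl
theorem P_inv_app (σ : Equiv.Perm ι) (z : ι × Y) : (P σ)⁻¹ z = (σ.symm z.1, z.2) := rfl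

theorem Sp.conjP {S : Set ι} {g : ι × Y ≃ₜ ι × Y} (h : Sp S g) (σ : Equiv.Perm ι) (T : Set ι)
    (hT : ∀ n, n ∈ S → σ n ∈ T) : Sp T (P σ * g * (P σ)⁻¹) := by
  intro z hz
  have : g ((P σ)⁻¹ z) = (P σ)⁻¹ z := by
    apply h
    intro h'
    have := hT _ h'
    rw [P_inv_app] at this
    simp at this
    exact hz this
  rw [mul_app, mul_app, this, app_inv_self]

/-- swindle: everything supported on one block is a commutator -/
theorem swindle (e : ℤ × ℕ ↪ ι) (g : ι × Y ≃ₜ ι × Y) (hg : Sp (e '' {p | p.1 = 0}) g) :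
    ∃ τ k : ι × Y ≃ₜ ι × Y, Sp (Set.range e) τ ∧ Sp (Set.range e) k ∧
      τ * k * τ⁻¹ * k⁻¹ = g⁻¹ := by
  classical
  let sh : Equiv.Perm (ℤ × ℕ) := (Equiv.addRight (1 : ℤ)).prodCongr (Equiv.refl ℕ)
  let σ : Equiv.Perm ι := sh.viaEmbedding e
  have hσ : ∀ m r, σ (e (m, r)) = e (m + 1, r) := fun m r =>
    Equiv.Perm.viaEmbedding_apply sh e (m, r)
  have hσ' : ∀ n, n ∉ Set.range e → σ n = n := fun n hn =>
    Equiv.Perm.viaEmbedding_apply_of_notMem sh e n hn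
  let τ : ι × Y ≃ₜ ι × Y := P σ
  have hτ : Sp (Set.range e) τ := fun z hz => by
    show (σ z.1, z.2) = z
    rw [hσ' _ hz]
  let c : ι → ℤ := extend e Prod.fst (fun _ => -1)
  have hc : ∀ m r, c (e (m, r)) = m := fun m r => e.injective.extend_apply _ _ _
  have hc' : ∀ n, n ∉ Set.range e → c n = -1 := fun n hn => extend_apply' _ _ _ (by simpa using hn)
  have hc0 : ∀ m, 0 ≤ m → c ⁻¹' {m} ⊆ e '' {p | p.1 = m} := by
    intro m hm n hn
    by_cases h : n ∈ Set.range e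
    · obtain ⟨⟨a, b⟩, rfl⟩ := h
      refine ⟨(a, b), ?_, rfl⟩
      have : c (e (a, b)) = m := hn
      rw [hc] at this
      exact this
    · have : c n = m := hn
      rw [hc' n h] at this
      omega
  have hc1 : ∀ m, e '' {p | p.1 = m} ⊆ c ⁻¹' {m} := by
    rintro m _ ⟨⟨a, b⟩, h, rfl⟩
    simp only [Set.mem_ofPred_eq] at h
    subst h
    exact hc _ _
  have hpow : ∀ n : ℕ, Sp (e '' {p | p.1 = (n : ℤ)}) (τ ^ n * g * (τ ^ n)⁻¹) := by
    intro n
    induction n with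
    | zero => simpa using hg
    | succ n ih =>
      have := ih.conjP σ (e '' {p | p.1 = ((n + 1 : ℕ) : ℤ)}) (by
        rintro _ ⟨⟨a, b⟩, h, rfl⟩
        simp only [Set.mem_ofPred_eq] at h
        exact ⟨(a + 1, b), by simp [h], (hσ a b).symm⟩)
      have h2 : τ ^ (n + 1) * g * (τ ^ (n + 1))⁻¹ = P σ * (τ ^ n * g * (τ ^ n)⁻¹) * (P σ)⁻¹ := by
        show _ = τ * (τ ^ n * g * (τ ^ n)⁻¹) * τ⁻¹
        rw [pow_succ']
        group
      rw [h2]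
      exact this
  let G : ℤ → (ι × Y ≃ₜ ι × Y) := fun m =>
    if 0 ≤ m then τ ^ m.toNat * g * (τ ^ m.toNat)⁻¹ else 1
  have hGneg : ∀ m, m < 0 → G m = 1 := fun m hm => if_neg (by omega)
  have hG0 : G 0 = g := by simp [G]
  have hGs : ∀ m, 0 ≤ m → G (m + 1) = τ * G m * τ⁻¹ := by
    intro m hm
    simp only [G, if_pos hm, if_pos (show 0 ≤ m + 1 by omega)]
    rw [show (m + 1).toNat = m.toNat + 1 by omega, pow_succ']
    group
  have hG : ∀ m, Sp (c ⁻¹' {m}) (G m) := by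
    intro m
    by_cases hm : 0 ≤ m
    · simp only [G, if_pos hm]
      have := hpow m.toNat
      rw [Int.toNat_of_nonneg hm] at this
      exact this.mono (hc1 m)
    · simp only [G, if_neg hm]
      exact Sp.one _
  let k := glue c G hG
  have hk : Sp (Set.range e) k := by
    intro z hz
    show G (c z.1) z = z
    rw [hc' _ hz, hGneg _ (by omega)]
    rfl
  refine ⟨τ, k, hτ, hk, ?_⟩
  have key : g * (τ * k) = k * τ := by
    ext1 z
    obtain ⟨n, y⟩ := z
    rw [mul_app, mul_app, mul_app]
    by_cases hn : n ∈ Set.range e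
    · obtain ⟨⟨m, r⟩, rfl⟩ := hn
      have e1 : k (e (m, r), y) = G m (e (m, r), y) := by
        show G (c (e (m, r))) _ = _
        rw [hc]
      have e2 : τ (e (m, r), y) = (e (m + 1, r), y) := by
        show (σ _, _) = _
        rw [hσ]
      have e3 : k (τ (e (m, r), y)) = G (m + 1) (τ (e (m, r), y)) := by
        rw [e2]
        show G (c (e (m + 1, r))) _ = _
        rw [hc]
      rw [e3, e1]
      rcases lt_trichotomy m (-1) with h | h | h
      · rw [hGneg _ (by omega), hGneg _ (by omega), one_app, one_app]
        apply hg
        rw [e2]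
        rintro ⟨⟨a, b⟩, h1, h2⟩
        simp only [Set.mem_ofPred_eq] at h1
        have := e.injective h2
        simp only [Prod.mk.injEq] at this
        omega
      · subst h
        rw [hGneg _ (by omega), show (-1 + 1 : ℤ) = 0 by rfl, hG0, one_app]
      · rw [hGs _ (by omega), mul_app, mul_app, inv_app_self]
        apply hg
        have h3 : (G m (e (m, r), y)).1 ∈ c ⁻¹' {m} := (hG m).mem (hc m r)
        obtain ⟨⟨a, b⟩, h4, h5⟩ := hc0 m (by omega) h3
        simp only [Set.mem_ofPred_eq] at h4
        subst h4
        show σ _ ∉ _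
        rw [← h5, hσ]
        rintro ⟨⟨a', b'⟩, h1, h2⟩
        simp only [Set.mem_ofPred_eq] at h1
        have := e.injective h2
        simp only [Prod.mk.injEq] at this
        omega
    · rw [hk _ hn, hτ _ hn, hk _ hn]
      apply hg
      rintro ⟨q, -, h⟩
      exact hn ⟨q, h⟩
  have h2 : g⁻¹ = (τ * k) * (k * τ)⁻¹ := by rw [← key]; group
  rw [h2]
  group

/-- Step 1 -/
theorem step1 (H : Subgroup (ι × Y ≃ₜ ι × Y)) (hH : Sm H) (c : ι → ℕ) :
    ∃ i, ∀ g : ι × Y ≃ₜ ι × Y, Sp (c ⁻¹' {i}) g → ∃ h ∈ H, ∀ z : ι × Y, c z.1 = i → h z = g z := by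
  by_contra hcon
  push Not at hcon
  choose g hg hng using hcon
  have hs : ∀ (x : ℕ → Bool) i, Sp (c ⁻¹' {i}) (if x i then g i else 1) := by
    intro x i
    split_ifs
    · exact hg i
    · exact Sp.one _
  obtain ⟨x, y, hxy, hm⟩ := hH (fun x => glue c (fun i => if x i then g i else 1) (hs x))
  have aux : ∀ x y : ℕ → Bool, ∀ i, x i = false → y i = true →
      (glue c (fun i => if x i then g i else 1) (hs x))⁻¹ *
        glue c (fun i => if y i then g i else 1) (hs y) ∈ H → False := by
    intro x y i hx hy hm
    obtain ⟨z, hz, hne⟩ := hng i _ hm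
    apply hne
    rw [mul_app, glue_app, glue_inv_app]
    simp only [hz, hy, if_true]
    have : c (g i z).1 = i := (hg i).mem (z := z) hz
    rw [this]
    simp only [hx]
    rfl
  obtain ⟨i, hi⟩ := Function.ne_iff.1 hxy
  cases hx : x i <;> cases hy : y i
  · simp [hx, hy] at hi
  · exact aux x y i hx hy hm
  · refine aux y x i hy hx ?_
    have := H.inv_mem hm
    simpa using this
  · simp [hx, hy] at hi

/-- Step 2 -/
theorem step2 (H : Subgroup (ι × Y ≃ₜ ι × Y)) (hH : Sm H) (e : ℕ × (ℤ × ℕ) ↪ ι) (S : Set ι)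
    (heS : Set.range e ⊆ S)
    (hS : ∀ g : ι × Y ≃ₜ ι × Y, Sp S g → ∃ h ∈ H, ∀ z : ι × Y, z.1 ∈ S → h z = g z) :
    ∃ j, ∀ g : ι × Y ≃ₜ ι × Y, Sp (Set.range fun r => e (j, 0, r)) g → g ∈ H := by
  by_contra hcon
  push Not at hcon
  choose g hg hng using hcon
  let ej : ℕ → (ℤ × ℕ ↪ ι) := fun j => ⟨fun p => e (j, p), fun p q h => by
    simpa using e.injective h⟩
  have hsw := fun j => swindle (ej j) (g j) (by
    refine (hg j).mono ?_
    rintro _ ⟨r, rfl⟩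
    exact ⟨(0, r), rfl, rfl⟩)
  choose τ k hτ hk hcomm using hsw
  let c : ι → ℕ := extend e Prod.fst (fun _ => 0)
  have hc : ∀ p, c (e p) = p.1 := fun p => e.injective.extend_apply _ _ _
  have hcr : ∀ j, Set.range (ej j) ⊆ c ⁻¹' {j} := by
    rintro j _ ⟨p, rfl⟩
    exact hc (j, p)
  have hrS : ∀ j, Set.range (ej j) ⊆ S := by
    rintro j _ ⟨p, rfl⟩
    exact heS ⟨_, rfl⟩
  have hs : ∀ (x : ℕ → Bool) i, Sp (c ⁻¹' {i}) (if x i then k i else 1) := by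
    intro x i
    split_ifs
    · exact (hk i).mono (hcr i)
    · exact Sp.one _
  let f : (ℕ → Bool) → (ι × Y ≃ₜ ι × Y) := fun x => glue c (fun i => if x i then k i else 1) (hs x)
  have hfS : ∀ x, Sp S (f x) := by
    intro x z hz
    show (if x (c z.1) then k (c z.1) else 1) z = z
    split_ifs
    · exact ((hk _).mono (hrS _)) z hz
    · rfl
  have aux : ∀ x y : ℕ → Bool, ∀ i, x i = false → y i = true → (f x)⁻¹ * f y ∈ H → False := by
    intro x y i hx hy hm
    set n := (f x)⁻¹ * f y with hn
    have hnS : Sp S n := (hfS x).inv.mul (hfS y)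
    have hnc : ∀ z, c (n z).1 = c z.1 := by
      intro z
      rw [hn, mul_app]
      have h1 : c (f y z).1 = c z.1 := (hs y (c z.1)).mem (z := z) rfl
      have h2 : c ((f x)⁻¹ (f y z)).1 = c (f y z).1 :=
        (hs x (c (f y z).1)).inv.mem (z := f y z) rfl
      rw [h2, h1]
    have hni : ∀ z, c z.1 = i → n z = k i z := by
      intro z hz
      have h1 : f y z = k i z := by
        show (if y (c z.1) then k (c z.1) else 1) z = _
        rw [hz, if_pos hy]
      have h2 : c (k i z).1 = i := ((hk i).mono (hcr i)).mem (z := z) hz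
      rw [hn, mul_app, h1]
      show (if x (c (k i z).1) then k (c (k i z).1) else 1)⁻¹ (k i z) = _
      rw [h2, hx]
      rfl
    obtain ⟨h, hhH, hh⟩ := hS (τ i) ((hτ i).mono (hrS i))
    have hτS : Sp S (τ i) := (hτ i).mono (hrS i)
    have hτc : ∀ z, c (τ i z).1 = c z.1 := by
      intro z
      by_cases hz : c z.1 = i
      · rw [hz]; exact ((hτ i).mono (hcr i)).mem (z := z) hz
      · rw [((hτ i).mono (hcr i)) z hz]
    -- h n = g⁻¹ n h
    have key : h * n = (g i)⁻¹ * (n * h) := by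
      have hcm : τ i * k i = (g i)⁻¹ * (k i * τ i) := by
        rw [← hcomm i]; group
      have hgS : Sp (c ⁻¹' {i}) (g i)⁻¹ := by
        refine Sp.inv ((hg i).mono ?_)
        rintro _ ⟨r, rfl⟩
        exact hc _
      have hgS' : Sp S (g i)⁻¹ := by
        refine Sp.inv ((hg i).mono ?_)
        rintro _ ⟨r, rfl⟩
        exact heS ⟨_, rfl⟩
      ext1 z
      simp only [mul_app]
      by_cases hz : z.1 ∈ S
      · rw [hh z hz, hh (n z) (hnS.mem hz)]
        by_cases hzi : c z.1 = i
        · rw [hni z hzi, hni (τ i z) (by rw [hτc, hzi])]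
          exact DFunLike.congr_fun hcm z
        · have ht : ∀ w : ι × Y, c w.1 ≠ i → τ i w = w := fun w hw =>
            ((hτ i).mono (hcr i)) w hw
          rw [ht z hzi, ht (n z) (by rw [hnc]; exact hzi), hgS (n z) (by
            show ¬ (c (n z).1 = i)
            rw [hnc]; exact hzi)]
      · have hhz : (h z).1 ∉ S := by
          intro hc1
          have h3 : h ((τ i)⁻¹ (h z)) = τ i ((τ i)⁻¹ (h z)) := hh _ (hτS.inv.mem hc1)
          rw [app_inv_self] at h3
          have h4 := h.injective h3
          have h5 := hτS.inv.mem hc1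
          rw [h4] at h5
          exact hz h5
        rw [hnS z hz, hnS _ hhz, hgS' _ hhz]
    apply hng i
    have : g i = n * h * (h * n)⁻¹ := by rw [key]; group
    rw [this]
    exact H.mul_mem (H.mul_mem hm hhH) (H.inv_mem (H.mul_mem hhH hm))
  obtain ⟨x, y, hxy, hm⟩ := hH f
  obtain ⟨i, hi⟩ := Function.ne_iff.1 hxy
  cases hx : x i <;> cases hy : y i
  · simp [hx, hy] at hi
  · exact aux x y i hx hy hm
  · refine aux y x i hy hx ?_
    have := H.inv_mem hm
    simpa using this
  · simp [hx, hy] at hi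

theorem exists_perm [Countable ι] (C A B : Set ι) (hA : A ⊆ C) (hB : B ⊆ C) (iA : A.Infinite)
    (iB : B.Infinite) (iA' : (C \ A).Infinite) (iB' : (C \ B).Infinite) :
    ∃ p : Equiv.Perm ι, (∀ n, n ∉ C → p n = n) ∧ (∀ n, n ∈ A → p n ∈ B) ∧
      (∀ n, n ∈ C → n ∉ A → p n ∈ C ∧ p n ∉ B) := by
  classical
  have h1 : Infinite {x : C // x.1 ∈ A} := by
    have := iA.to_subtype
    exact Infinite.of_injective (fun a : A => (⟨⟨a.1, hA a.2⟩, a.2⟩ : {x : C // x.1 ∈ A}))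
      (fun a b h => by simpa [Subtype.ext_iff] using h)
  have h2 : Infinite {x : C // x.1 ∈ B} := by
    have := iB.to_subtype
    exact Infinite.of_injective (fun a : B => (⟨⟨a.1, hB a.2⟩, a.2⟩ : {x : C // x.1 ∈ B}))
      (fun a b h => by simpa [Subtype.ext_iff] using h)
  have h3 : Infinite {x : C // ¬ x.1 ∈ A} := by
    have := iA'.to_subtype
    exact Infinite.of_injective
      (fun a : ↥(C \ A) => (⟨⟨a.1, a.2.1⟩, a.2.2⟩ : {x : C // ¬ x.1 ∈ A}))
      (fun a b h => by simpa [Subtype.ext_iff] using h)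
  have h4 : Infinite {x : C // ¬ x.1 ∈ B} := by
    have := iB'.to_subtype
    exact Infinite.of_injective
      (fun a : ↥(C \ B) => (⟨⟨a.1, a.2.1⟩, a.2.2⟩ : {x : C // ¬ x.1 ∈ B}))
      (fun a b h => by simpa [Subtype.ext_iff] using h)
  obtain ⟨u⟩ : Nonempty ({x : C // x.1 ∈ A} ≃ {x : C // x.1 ∈ B}) := nonempty_equiv_of_countable
  obtain ⟨v⟩ : Nonempty ({x : C // ¬ x.1 ∈ A} ≃ {x : C // ¬ x.1 ∈ B}) := nonempty_equiv_of_countable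
  let q : Equiv.Perm C := Equiv.subtypeCongr u v
  have hqA : ∀ x : C, x.1 ∈ A → (q x).1 ∈ B := by
    intro x hx
    have : q x = (u ⟨x, hx⟩).1 := by simp [q, Equiv.subtypeCongr, Equiv.sumCompl, hx]
    rw [this]; exact (u ⟨x, hx⟩).2
  have hqA' : ∀ x : C, ¬ x.1 ∈ A → ¬ (q x).1 ∈ B := by
    intro x hx
    have : q x = (v ⟨x, hx⟩).1 := by simp [q, Equiv.subtypeCongr, Equiv.sumCompl, hx]
    rw [this]; exact (v ⟨x, hx⟩).2
  refine ⟨Equiv.Perm.ofSubtype (p := (· ∈ C)) q, ?_, ?_, ?_⟩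
  · intro n hn
    exact Equiv.Perm.ofSubtype_apply_of_not_mem (p := (· ∈ C)) q hn
  · intro n hn
    rw [Equiv.Perm.ofSubtype_apply_of_mem (p := (· ∈ C)) q (hA hn)]
    exact hqA ⟨n, hA hn⟩ hn
  · intro n hn hnA
    rw [Equiv.Perm.ofSubtype_apply_of_mem (p := (· ∈ C)) q hn]
    exact ⟨(q ⟨n, hn⟩).2, hqA' ⟨n, hn⟩ hnA⟩

/-- branch node -/
def pre (x : ℕ → Bool) (n : ℕ) : Finset ℕ := (Finset.range n).filter (fun i => x i = true)

theorem pre_ne {x y : ℕ → Bool} {j n : ℕ} (h : x j ≠ y j) (hn : j < n) : pre x n ≠ pre y n := by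
  intro he
  have := Finset.ext_iff.1 he j
  simp only [pre, Finset.mem_filter, Finset.mem_range, hn, true_and] at this
  exact h (Bool.eq_iff_iff.2 this)

theorem pre_ne_self (x : ℕ → Bool) (n : ℕ) : ({n} : Finset ℕ) ≠ pre x n := by
  intro he
  have := Finset.ext_iff.1 he n
  simp [pre] at this

/-- the swap of `inr n` with the `n`th branch node -/
def wfun (x : ℕ → Bool) : (ℕ × Finset ℕ) ⊕ ℕ → (ℕ × Finset ℕ) ⊕ ℕ
  | .inl p => if p.2 = pre x p.1 then .inr p.1 else .inl p
  | .inr n => .inl (n, pre x n)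

theorem wfun_inv (x : ℕ → Bool) : Involutive (wfun x) := by
  rintro (⟨n, F⟩ | n)
  · by_cases h : F = pre x n
    · simp [wfun, h]
    · simp [wfun, h]
  · simp [wfun]

theorem step3a [Countable ι] (H : Subgroup (ι × Y ≃ₜ ι × Y)) (hH : Sm H) (S : Set ι)
    (hS : S.Infinite) (hS' : Sᶜ.Infinite) (hSH : ∀ g : ι × Y ≃ₜ ι × Y, Sp S g → g ∈ H) :
    ∃ T : Set ι, (∀ g : ι × Y ≃ₜ ι × Y, Sp T g → g ∈ H) ∧ (S ∪ T)ᶜ.Finite ∧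
      (S \ T).Infinite ∧ (S ∩ T).Infinite := by
  classical
  have := hS.to_subtype
  have := hS'.to_subtype
  obtain ⟨s⟩ : Nonempty ((ℕ × Finset ℕ) ≃ S) := nonempty_equiv_of_countable
  obtain ⟨t⟩ : Nonempty (ℕ ≃ ↥(Sᶜ)) := nonempty_equiv_of_countable
  let v : (ℕ × Finset ℕ) ⊕ ℕ ≃ ι := (Equiv.sumCongr s t).trans (Equiv.Set.sumCompl S)
  have vl : ∀ p, v (.inl p) ∈ S := fun p => (s p).2
  have vr : ∀ p, v (.inr p) ∉ S := fun p => (t p).2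
  let π : (ℕ → Bool) → Equiv.Perm ι := fun x => v.permCongr (wfun_inv x).toPerm
  have hπ : ∀ x q, π x (v q) = v (wfun x q) := fun x q => by simp [π, Equiv.permCongr_apply]
  have hπi : ∀ x n, π x (π x n) = n := by
    intro x n
    obtain ⟨q, rfl⟩ := v.surjective n
    rw [hπ, hπ, wfun_inv x q]
  obtain ⟨x, y, hxy, hm⟩ := hH (fun x => P (π x))
  obtain ⟨j, hj⟩ := Function.ne_iff.1 hxy
  let T : Set ι := {n | π y (π x n) ∈ S}
  have hT : ∀ q, v q ∈ T ↔ v (wfun y (wfun x q)) ∈ S := fun q => by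
    show π y (π x (v q)) ∈ S ↔ _
    rw [hπ, hπ]
  have hPinv : ∀ x, (P (π x) : ι × Y ≃ₜ ι × Y)⁻¹ = P (π x) := by
    intro x
    rw [inv_eq_iff_mul_eq_one]
    ext1 z
    simp only [mul_app, P_app, hπi]
    rfl
  refine ⟨T, ?_, ?_, ?_, ?_⟩
  · intro g hg
    have h1 := hg.conjP (π x) (π y ⁻¹' S) (fun n hn => hn)
    have h2 := h1.conjP (π y) S (fun n hn => hn)
    have h3 := hSH _ h2
    have h4 := H.mul_mem (H.mul_mem hm h3) (H.inv_mem hm)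
    convert h4 using 1
    have e2 := hPinv y
    rw [inv_eq_iff_mul_eq_one] at e2
    have e3 : ∀ X V : ι × Y ≃ₜ ι × Y, X⁻¹ * V * (V * (X * g * X⁻¹) * V⁻¹) * (X⁻¹ * V)⁻¹ =
        X⁻¹ * (V * V) * X * g * X⁻¹ * (V * V)⁻¹ * X := by intro X V; group
    rw [e3, e2]
    group
  · refine ((Set.finite_Iic j).image (fun n => v (.inr n))).subset ?_
    intro n hn
    obtain ⟨q | m, rfl⟩ := v.surjective n
    · exact absurd (Or.inl (vl q)) hn
    · refine ⟨m, ?_, rfl⟩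
      by_contra hmj
      apply hn
      right
      rw [hT]
      have := pre_ne hj (not_le.1 hmj)
      simp [wfun, this, vl]
  · refine Set.infinite_of_injective_forall_mem (f := fun n => v (.inl (n + (j + 1), pre y (n + (j+1)))))
      ?_ ?_
    · intro a b h
      have := v.injective h
      simp at this
      exact this.1
    · intro n
      refine ⟨vl _, ?_⟩
      have := (pre_ne (n := n + (j + 1)) hj (by omega)).symm
      rw [hT]
      simp [wfun, this, vr]
  · refine Set.infinite_of_injective_forall_mem (f := fun n => v (.inl (n, {n}))) ?_ ?_
    · intro a b h
      have := v.injective h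
      simp at this
      exact this
    · intro n
      refine ⟨vl _, ?_⟩
      rw [hT]
      simp [wfun, pre_ne_self, vl]

theorem step3c [Countable ι] [CompactSpace Y] (H : Subgroup (ι × Y ≃ₜ ι × Y)) (S T : Set ι)
    (hSH : ∀ g : ι × Y ≃ₜ ι × Y, Sp S g → g ∈ H) (hTH : ∀ g : ι × Y ≃ₜ ι × Y, Sp T g → g ∈ H)
    (hST : (S \ T).Infinite) (hST' : (S ∩ T).Infinite) (g : ι × Y ≃ₜ ι × Y) (hg : Sp (S ∪ T) g) :
    g ∈ H := by
  classical
  -- 3b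
  have hb : ∀ N : Set ι, N ⊆ S → N.Infinite → (S \ N).Infinite →
      ∀ g : ι × Y ≃ₜ ι × Y, Sp ((S ∪ T) \ N) g → g ∈ H := by
    intro N hNS hN hN' g hg
    obtain ⟨p, hp1, hp2, hp3⟩ := exists_perm S N (S \ T) hNS Set.sdiff_subset hN hST hN'
      (by simpa using hST')
    have hpH : (P p : ι × Y ≃ₜ ι × Y) ∈ H := hSH _ fun z hz => by
      rw [P_app, hp1 _ hz]
    have h1 := hTH _ (hg.conjP p T (by
      rintro n ⟨hn, hnN⟩
      by_cases hnS : n ∈ S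
      · have := hp3 n hnS hnN
        by_contra hc
        exact this.2 ⟨this.1, hc⟩
      · rw [hp1 n hnS]
        exact hn.resolve_left hnS))
    have h2 := H.mul_mem (H.mul_mem (H.inv_mem hpH) h1) hpH
    convert h2 using 1
    group
  -- locally finite
  let r0 : ι → ι → Prop := fun m n => ∃ y, (g (n, y)).1 = m
  have fin1 : ∀ (k : ι × Y ≃ₜ ι × Y) (n : ι), {m | ∃ y, (k (n, y)).1 = m}.Finite := by
    intro k n
    have hcont : Continuous fun y => (k (n, y)).1 :=
      continuous_fst.comp (k.continuous.comp (continuous_const.prodMk continuous_id))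
    exact (isCompact_range hcont).finite (isDiscrete_iff_discreteTopology.2 inferInstance)
  have fin2 : ∀ m, {n | r0 m n}.Finite := by
    intro m
    refine (fin1 g⁻¹ m).subset ?_
    rintro n ⟨y, hy⟩
    refine ⟨(g (n, y)).2, ?_⟩
    have : (m, (g (n, y)).2) = g (n, y) := by rw [← hy]
    rw [this, inv_app_self]
  let r : ι → ι → Prop := fun m n => m ≠ n ∧ ¬ r0 m n ∧ ¬ r0 n m
  have : Std.Symm r := ⟨fun m n h => ⟨h.1.symm, h.2.2, h.2.1⟩⟩
  have hSinf : S.Infinite := hST.mono Set.sdiff_subset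
  obtain ⟨f, hfS, hfr⟩ := exists_seq_of_forall_finset_exists' (fun n => n ∈ S) r (by
    intro s _
    have hfin : ((s : Set ι) ∪ ⋃ m ∈ s, ({n | r0 m n} ∪ {n | r0 n m})).Finite := by
      refine s.finite_toSet.union (s.finite_toSet.biUnion fun m _ => ?_)
      exact (fin2 m).union (fin1 g m)
    obtain ⟨n, hn, hn'⟩ := (hSinf.sdiff hfin).nonempty
    refine ⟨n, hn, fun m hm => ⟨?_, ?_, ?_⟩⟩
    · rintro rfl
      exact hn' (Or.inl hm)
    · intro h
      exact hn' (Or.inr (Set.mem_biUnion hm (Or.inl h)))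
    · intro h
      exact hn' (Or.inr (Set.mem_biUnion hm (Or.inr h))))
  have hfinj : Injective f := by
    intro a b h
    by_contra hne
    exact (hfr hne).1 h
  have hN : ∀ l, (Set.range fun i => f (3 * i + l)).Infinite := fun l =>
    Set.infinite_range_of_injective fun a b h => by
      have := hfinj h
      omega
  let N : ℕ → Set ι := fun l => Set.range fun i => f (3 * i + l)
  have hNS : ∀ l, N l ⊆ S := by
    rintro l _ ⟨i, rfl⟩
    exact hfS _
  have hdisj : ∀ l l' n, l < 3 → l' < 3 → l ≠ l' → n ∈ N l → n ∈ N l' → False := by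
    rintro l l' _ h1 h2 h3 ⟨i, rfl⟩ ⟨i', h⟩
    have := hfinj h
    omega
  have hNinf : ∀ l, l < 3 → (S \ N l).Infinite := by
    intro l hl
    refine (hN ((l + 1) % 3)).mono fun n hn => ⟨hNS _ hn, fun h => ?_⟩
    exact hdisj l ((l + 1) % 3) n hl (Nat.mod_lt _ (by norm_num)) (by omega) h hn
  have hgN : ∀ n y l l', l < 3 → l' < 3 → l ≠ l' → n ∈ N l → (g (n, y)).1 ∉ N l' := by
    rintro _ y l l' h1 h2 h3 ⟨i, rfl⟩ ⟨i', h⟩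
    refine (hfr (i := 3 * i' + l') (j := 3 * i + l) (by omega)).2.1 ⟨y, h.symm⟩
  -- σ
  let sw : ℕ → ℕ := fun n => if n % 3 = 0 then n + 2 else if n % 3 = 2 then n - 2 else n
  have hsw : Involutive sw := by
    intro n
    simp only [sw]
    split_ifs <;> omega
  let σ : Equiv.Perm ι := hsw.toPerm.viaEmbedding ⟨f, hfinj⟩
  have hσf : ∀ i, σ (f i) = f (sw i) := fun i =>
    Equiv.Perm.viaEmbedding_apply hsw.toPerm ⟨f, hfinj⟩ i
  have hσo : ∀ n, n ∉ Set.range f → σ n = n := fun n hn =>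
    Equiv.Perm.viaEmbedding_apply_of_notMem hsw.toPerm ⟨f, hfinj⟩ n hn
  have hσσ : ∀ n, σ (σ n) = n := by
    intro n
    by_cases h : n ∈ Set.range f
    · obtain ⟨i, rfl⟩ := h
      rw [hσf, hσf, hsw i]
    · rw [hσo n h, hσo n h]
  have hσ0 : ∀ n, n ∈ N 0 → σ n ∈ N 2 := by
    rintro _ ⟨i, rfl⟩
    refine ⟨i, ?_⟩
    show _ = σ (f (3 * i + 0))
    rw [hσf]
    simp only [sw]
    rw [if_pos (by omega)]
  have hσ2 : ∀ n, n ∈ N 2 → σ n ∈ N 0 := by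
    rintro _ ⟨i, rfl⟩
    refine ⟨i, ?_⟩
    show _ = σ (f (3 * i + 2))
    rw [hσf]
    simp only [sw]
    rw [if_neg (by omega), if_pos (by omega)]
    rfl
  have hσ1 : ∀ n, n ∉ N 0 → n ∉ N 2 → σ n = n := by
    intro n h0 h2
    by_cases h : n ∈ Set.range f
    · obtain ⟨i, rfl⟩ := h
      rw [hσf]
      simp only [sw]
      rw [if_neg, if_neg]
      · intro h
        exact h2 ⟨i / 3, by show f (3 * (i / 3) + 2) = _; congr 1; omega⟩
      · intro h
        exact h0 ⟨i / 3, by show f (3 * (i / 3) + 0) = _; congr 1; omega⟩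
    · exact hσo n h
  let Qh : ι × Y ≃ₜ ι × Y := P σ
  have hQQ : ∀ z, Qh (Qh z) = z := fun z => by
    show (σ (σ z.1), z.2) = z
    rw [hσσ]
  -- ρ
  let ρf : ι × Y → ι × Y := fun z =>
    if z.1 ∈ N 2 then g (Qh z) else if (g⁻¹ z).1 ∈ N 0 then Qh (g⁻¹ z) else z
  have hρ2 : ∀ z, z.1 ∈ N 2 → ρf z = g (Qh z) := fun z hz => if_pos hz
  have hρ0 : ∀ z, z.1 ∈ N 0 → ρf (g z) = Qh z := by
    intro z hz
    have h1 : (g z).1 ∉ N 2 := hgN z.1 z.2 0 2 (by omega) (by omega) (by omega) hz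
    show (if _ then _ else _) = _
    rw [if_neg h1, inv_app_self, if_pos hz]
  have hρ1 : ∀ z : ι × Y, z.1 ∉ N 2 → (g⁻¹ z).1 ∉ N 0 → ρf z = z := by
    intro z h1 h2
    show (if _ then _ else _) = _
    rw [if_neg h1, if_neg h2]
  have hρρ : Involutive ρf := by
    intro z
    by_cases h1 : z.1 ∈ N 2
    · rw [hρ2 z h1, hρ0 _ (hσ2 _ h1), hQQ]
    · by_cases h2 : (g⁻¹ z).1 ∈ N 0
      · obtain ⟨w, rfl⟩ := g.surjective z
        rw [inv_app_self] at h2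
        rw [hρ0 w h2, hρ2 _ (hσ0 _ h2), hQQ]
      · rw [hρ1 z h1 h2, hρ1 z h1 h2]
  have hclopen : ∀ A : Set ι, IsClopen {z : ι × Y | z.1 ∈ A} := fun A =>
    (isClopen_discrete A).preimage continuous_fst
  have hρc : Continuous ρf := by
    refine continuous_if (fun a ha => ?_) (g.continuous.comp Qh.continuous).continuousOn
      (Continuous.continuousOn ?_)
    · rw [(hclopen (N 2)).frontier_eq] at ha
      exact absurd ha (by simp)
    · refine continuous_if (fun a ha => ?_) 
        (Qh.continuous.comp (g⁻¹).continuous).continuousOn continuous_id.continuousOn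
      have hcl : IsClopen {z : ι × Y | (g⁻¹ z).1 ∈ N 0} := (hclopen (N 0)).preimage (g⁻¹).continuous
      rw [hcl.frontier_eq] at ha
      exact absurd ha (by simp)
  let ρ : ι × Y ≃ₜ ι × Y :=
    { hρρ.toPerm with
      continuous_toFun := hρc
      continuous_invFun := hρc }
  have hρapp : ∀ z, ρ z = ρf z := fun z => rfl
  have hQH : Qh ∈ H := by
    refine hSH _ fun z hz => ?_
    show (σ z.1, z.2) = z
    rw [hσ1 _ (fun h => hz (hNS _ h)) (fun h => hz (hNS _ h))]
  have hρH : ρ ∈ H := by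
    refine hb (N 1) (hNS 1) (hN 1) (hNinf 1 (by omega)) _ fun z hz => ?_
    rw [hρapp]
    have h2 : z.1 ∉ N 2 := fun h => hz ⟨Or.inl (hNS _ h), fun h' =>
      hdisj 1 2 _ (by omega) (by omega) (by omega) h' h⟩
    refine hρ1 z h2 fun h => ?_
    obtain ⟨w, rfl⟩ := g.surjective z
    rw [inv_app_self] at h
    refine hz ⟨hg.mem (Or.inl (hNS _ h)), ?_⟩
    exact hgN w.1 w.2 0 1 (by omega) (by omega) (by omega) h
  have hk : ∀ z : ι × Y, z.1 ∈ N 0 → (ρ * Qh) z = g z := by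
    intro z hz
    rw [mul_app, hρapp, hρ2 _ (hσ0 _ hz), hQQ]
  have hkH : ρ * Qh ∈ H := H.mul_mem hρH hQH
  have hkE : Sp (S ∪ T) (ρ * Qh) := by
    intro z hz
    have h1 : Qh z = z := by
      show (σ z.1, z.2) = z
      rw [hσ1 _ (fun h => hz (Or.inl (hNS _ h))) (fun h => hz (Or.inl (hNS _ h)))]
    rw [mul_app, h1, hρapp]
    refine hρ1 z (fun h => hz (Or.inl (hNS _ h))) fun h => ?_
    rw [hg.inv z hz] at h
    exact hz (Or.inl (hNS _ h))
  have hfH : (ρ * Qh)⁻¹ * g ∈ H := by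
    refine hb (N 0) (hNS 0) (hN 0) (hNinf 0 (by omega)) _ fun z hz => ?_
    by_cases h : z.1 ∈ N 0
    · rw [mul_app, ← hk z h, inv_app_self]
    · have h' : z.1 ∉ S ∪ T := fun h'' => hz ⟨h'', h⟩
      exact hkE.inv.mul hg z h'
  have := H.mul_mem hkH hfH
  rwa [mul_inv_cancel_left] at this

theorem core [Countable ι] [Infinite ι] [CompactSpace Y] (H : Subgroup (ι × Y ≃ₜ ι × Y))
    (hH : Sm H) : ∃ E : Finset ι, ∀ g : ι × Y ≃ₜ ι × Y, Sp (E : Set ι)ᶜ g → g ∈ H := by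
  classical
  obtain ⟨e⟩ : Nonempty ((ℕ × (ℕ × (ℤ × ℕ))) ≃ ι) := nonempty_equiv_of_countable
  obtain ⟨i, hi⟩ := step1 H hH (fun n => (e.symm n).1)
  obtain ⟨j, hj⟩ := step2 H hH ⟨fun p => e (i, p), fun p q h => by simpa using h⟩
    ((fun n => (e.symm n).1) ⁻¹' {i}) (by
      rintro _ ⟨p, rfl⟩
      show (e.symm (e (i, p))).1 = i
      simp) hi
  change ∀ g : ι × Y ≃ₜ ι × Y, Sp (Set.range fun r => e (i, j, 0, r)) g → g ∈ H at hj
  obtain ⟨T, hT, hfin, h1, h2⟩ := step3a H hH _ (Set.infinite_range_of_injective (by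
      intro a b h
      simpa using h))
    (by
      refine Set.infinite_of_injective_forall_mem (f := fun n : ℕ => e (i, j, 1, n)) ?_ ?_
      · intro a b h
        simpa using h
      · rintro n ⟨m, hm⟩
        simp at hm) hj
  refine ⟨hfin.toFinset, fun g hg => step3c H _ T hj hT h1 h2 g ?_⟩
  refine hg.mono ?_
  rw [Set.Finite.coe_toFinset, compl_compl]

end Core

/-- small index property -/
def SIP (X : Type*) [TopologicalSpace X] : Prop :=
  ∀ H : Subgroup (X ≃ₜ X), Sm H → ∃ A : Finset (Set X), (∀ B ∈ A, IsClopen B) ∧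
    ∀ g : X ≃ₜ X, (∀ B ∈ A, g '' B = B) → g ∈ H

section Fin

variable {ι : Type*} {Y : Type*} [TopologicalSpace ι] [DiscreteTopology ι] [TopologicalSpace Y]

open Classical in
/-- act on the `n`th copy only -/
def psi (n : ι) : (Y ≃ₜ Y) →* (ι × Y ≃ₜ ι × Y) where
  toFun f :=
    { toFun := fun z => if z.1 = n then (z.1, f z.2) else z
      invFun := fun z => if z.1 = n then (z.1, f.symm z.2) else z
      left_inv := fun z => by by_cases h : z.1 = n <;> simp [h, Prod.ext_iff]
      right_inv := fun z => by by_cases h : z.1 = n <;> simp [h, Prod.ext_iff]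
      continuous_toFun := cont_of_local fun m => by
        by_cases h : m = n
        · exact ⟨fun z => (z.1, f z.2), by fun_prop, fun y => by simp [h]⟩
        · exact ⟨id, continuous_id, fun y => by simp [h]⟩
      continuous_invFun := cont_of_local fun m => by
        by_cases h : m = n
        · exact ⟨fun z => (z.1, f.symm z.2), by fun_prop, fun y => by simp [h]⟩
        · exact ⟨id, continuous_id, fun y => by simp [h]⟩ }
  map_one' := by
    ext1 z
    show (if z.1 = n then (z.1, z.2) else z) = z
    simp
  map_mul' f g := by
    ext1 z
    show (if z.1 = n then (z.1, f (g z.2)) else z) =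
      (if (if z.1 = n then (z.1, g z.2) else z).1 = n then
        ((if z.1 = n then (z.1, g z.2) else z).1, f (if z.1 = n then (z.1, g z.2) else z).2)
        else (if z.1 = n then (z.1, g z.2) else z))
    by_cases h : z.1 = n <;> simp [h]

theorem psi_same (n : ι) (f : Y ≃ₜ Y) (y : Y) : psi n f (n, y) = (n, f y) := if_pos rfl
theorem psi_ne (n : ι) (f : Y ≃ₜ Y) (z : ι × Y) (h : z.1 ≠ n) : psi n f z = z := if_neg h

theorem isClopen_piece (n : ι) {B : Set Y} (hB : IsClopen B) : IsClopen ({n} ×ˢ B : Set (ι × Y)) :=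
  (isClopen_discrete {n}).prod hB

theorem restrict_piece (g : ι × Y ≃ₜ ι × Y) (n : ι)
    (hg : g '' ({n} ×ˢ Set.univ) = {n} ×ˢ Set.univ) :
    ∃ f : Y ≃ₜ Y, ∀ y, g (n, y) = (n, f y) := by
  have h1 : ∀ y, (g (n, y)).1 = n := by
    intro y
    have : g (n, y) ∈ g '' ({n} ×ˢ Set.univ) := ⟨_, by simp, rfl⟩
    rw [hg] at this
    simpa using this
  have h2 : ∀ y, (g.symm (n, y)).1 = n := by
    intro y
    have : (n, y) ∈ ({n} ×ˢ Set.univ : Set (ι × Y)) := by simp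
    rw [← hg] at this
    obtain ⟨z, hz, hz'⟩ := this
    rw [← hz', g.symm_apply_apply]
    simpa using hz
  refine ⟨{ toFun := fun y => (g (n, y)).2
            invFun := fun y => (g.symm (n, y)).2
            left_inv := fun y => ?_
            right_inv := fun y => ?_
            continuous_toFun := by fun_prop
            continuous_invFun := by fun_prop }, fun y => ?_⟩
  · have : (n, (g (n, y)).2) = g (n, y) := Prod.ext (h1 y).symm rfl
    simp only [this, g.symm_apply_apply]
  · have : (n, (g.symm (n, y)).2) = g.symm (n, y) := Prod.ext (h2 y).symm rfl
    simp only [this, g.apply_symm_apply]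
  · exact Prod.ext (h1 y) rfl

theorem fin_helper [CompactSpace Y] (hY : SIP Y) (H : Subgroup (ι × Y ≃ₜ ι × Y)) (hH : Sm H)
    (E : Finset ι) (hE : ∀ g : ι × Y ≃ₜ ι × Y, Sp (E : Set ι)ᶜ g → g ∈ H) :
    ∃ A : Finset (Set (ι × Y)), (∀ B ∈ A, IsClopen B ∧ IsCompact B) ∧
      ∀ g : ι × Y ≃ₜ ι × Y, (∀ B ∈ A, g '' B = B) → g ∈ H := by
  classical
  have key : ∀ F : Finset ι, ∃ A : Finset (Set (ι × Y)), (∀ B ∈ A, IsClopen B ∧ IsCompact B) ∧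
      ∀ g : ι × Y ≃ₜ ι × Y, (∀ B ∈ A, g '' B = B) →
        ∃ h ∈ H, Sp (F : Set ι) h ∧ ∀ z : ι × Y, z.1 ∈ F → h z = g z := by
    intro F
    induction F using Finset.induction_on with
    | empty => exact ⟨∅, by simp, fun g _ => ⟨1, H.one_mem, Sp.one _, by simp⟩⟩
    | insert n F hn ih =>
      obtain ⟨A, hA, hAg⟩ := ih
      obtain ⟨A', hA', hAg'⟩ := hY _ (hH.comap (psi n))
      refine ⟨A ∪ (insert Set.univ A').image (fun B => ({n} ×ˢ B : Set (ι × Y))), ?_, ?_⟩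
      · intro B hB
        rw [Finset.mem_union] at hB
        rcases hB with hB | hB
        · exact hA B hB
        · obtain ⟨C, hC, rfl⟩ := Finset.mem_image.1 hB
          have hCc : IsClopen C := by
            rcases Finset.mem_insert.1 hC with rfl | hC
            · exact isClopen_univ
            · exact hA' C hC
          exact ⟨isClopen_piece n hCc, isCompact_singleton.prod hCc.1.isCompact⟩
      · intro g hg
        obtain ⟨h, hhH, hsp, hh⟩ := hAg g fun B hB => hg B (Finset.mem_union_left _ hB)
        have hg2 : ∀ C ∈ insert Set.univ A', g '' ({n} ×ˢ C) = {n} ×ˢ C := fun C hC =>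
          hg _ (Finset.mem_union_right _ (Finset.mem_image_of_mem _ hC))
        obtain ⟨f, hf⟩ := restrict_piece g n (hg2 _ (Finset.mem_insert_self _ _))
        have hfH : psi n f ∈ H := by
          refine hAg' f fun C hC => ?_
          have h1 := hg2 C (Finset.mem_insert_of_mem hC)
          ext y
          have h2 := Set.ext_iff.1 h1 (n, y)
          constructor
          · rintro ⟨w, hw, rfl⟩
            have := h2.1 ⟨(n, w), ⟨rfl, hw⟩, hf w⟩
            exact this.2
          · intro hy
            obtain ⟨⟨m, w⟩, ⟨hm, hw⟩, h3⟩ := h2.2 ⟨rfl, hy⟩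
            simp only [Set.mem_singleton_iff] at hm
            subst hm
            rw [hf] at h3
            exact ⟨w, hw, (Prod.ext_iff.1 h3).2⟩
        refine ⟨h * psi n f, H.mul_mem hhH hfH, ?_, ?_⟩
        · intro z hz
          simp only [Finset.coe_insert, Set.mem_insert_iff, not_or] at hz
          rw [mul_app, psi_ne _ _ _ hz.1, hsp _ hz.2]
        · intro z hz
          rw [mul_app]
          rcases Finset.mem_insert.1 hz with h1 | h1
          · obtain ⟨m, y⟩ := z
            simp only at h1
            subst h1
            rw [psi_same, hf, hsp]
            exact hn
          · rw [psi_ne, hh z h1]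
            rintro rfl
            exact hn h1
  obtain ⟨A, hA, hAg⟩ := key E
  refine ⟨A, hA, fun g hg => ?_⟩
  obtain ⟨h, hhH, -, hh⟩ := hAg g hg
  have : h⁻¹ * g ∈ H := hE _ fun z hz => by
    rw [mul_app, ← hh z (by simpa using hz), inv_app_self]
  have := H.mul_mem hhH this
  rwa [mul_inv_cancel_left] at this

theorem sip_finite [Finite ι] [CompactSpace Y] (hY : SIP Y) : SIP (ι × Y) := by
  intro H hH
  have := Fintype.ofFinite ι
  obtain ⟨A, hA, h⟩ := fin_helper hY H hH Finset.univ (fun g hg => by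
    have : g = 1 := by
      ext1 z
      exact hg z (by simp)
    rw [this]
    exact H.one_mem)
  exact ⟨A, fun B hB => (hA B hB).1, h⟩

end Fin

/-- extension to the one-point compactification -/
def opHom (Z : Type*) [TopologicalSpace Z] : (Z ≃ₜ Z) →* (OnePoint Z ≃ₜ OnePoint Z) where
  toFun f := f.onePointCongr
  map_one' := by
    ext1 z
    induction z using OnePoint.rec <;> rfl
  map_mul' f g := by
    ext1 z
    induction z using OnePoint.rec <;> rfl

theorem opHom_coe {Z : Type*} [TopologicalSpace Z] (f : Z ≃ₜ Z) (z : Z) :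
    opHom Z f (z : OnePoint Z) = (f z : Z) := rfl

theorem exists_opHom {Z : Type*} [TopologicalSpace Z] (g : OnePoint Z ≃ₜ OnePoint Z)
    (hg : g OnePoint.infty = OnePoint.infty) : ∃ f, opHom Z f = g := by
  have h1 : ∀ z : Z, ∃ w : Z, (w : OnePoint Z) = g z := by
    intro z
    have : g z ≠ OnePoint.infty := by
      rw [← hg]
      intro h
      exact OnePoint.coe_ne_infty z (g.injective h)
    exact OnePoint.ne_infty_iff_exists.1 this
  have h2 : ∀ z : Z, ∃ w : Z, (w : OnePoint Z) = g.symm z := by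
    intro z
    have : g.symm z ≠ OnePoint.infty := by
      intro h
      have := g.symm_apply_eq.1 h
      rw [hg] at this
      exact OnePoint.coe_ne_infty z this
    exact OnePoint.ne_infty_iff_exists.1 this
  choose u hu using h1
  choose v hv using h2
  refine ⟨{ toFun := u, invFun := v, left_inv := ?_, right_inv := ?_,
            continuous_toFun := ?_, continuous_invFun := ?_ }, ?_⟩
  · intro z
    apply OnePoint.coe_injective
    rw [hv, hu, g.symm_apply_apply]
  · intro z
    apply OnePoint.coe_injective
    rw [hu, hv, g.apply_symm_apply]
  · rw [OnePoint.isOpenEmbedding_coe.isEmbedding.continuous_iff]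
    have : ((↑) : Z → OnePoint Z) ∘ u = g ∘ (↑) := funext hu
    rw [this]
    exact g.continuous.comp OnePoint.continuous_coe
  · rw [OnePoint.isOpenEmbedding_coe.isEmbedding.continuous_iff]
    have : ((↑) : Z → OnePoint Z) ∘ v = g.symm ∘ (↑) := funext hv
    rw [this]
    exact g.symm.continuous.comp OnePoint.continuous_coe
  · ext1 z
    induction z using OnePoint.rec with
    | infty => exact hg.symm
    | coe z => exact hu z

theorem sip_onePoint {Y : Type*} [TopologicalSpace Y] [CompactSpace Y] (hY : SIP Y)
    (hfix : ∀ g : OnePoint (ℕ × Y) ≃ₜ OnePoint (ℕ × Y), g OnePoint.infty = OnePoint.infty) :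
    SIP (OnePoint (ℕ × Y)) := by
  classical
  intro H hH
  have hH' := hH.comap (opHom (ℕ × Y))
  obtain ⟨E, hE⟩ := core _ hH'
  obtain ⟨A, hA, hAg⟩ := fin_helper hY _ hH' E hE
  refine ⟨A.image (fun B => ((↑) : ℕ × Y → OnePoint (ℕ × Y)) '' B), ?_, ?_⟩
  · intro B hB
    obtain ⟨C, hC, rfl⟩ := Finset.mem_image.1 hB
    obtain ⟨h1, h2⟩ := hA C hC
    exact ⟨OnePoint.isClosed_image_coe.2 ⟨h1.1, h2⟩, OnePoint.isOpenMap_coe _ h1.2⟩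
  · intro g hg
    obtain ⟨f, rfl⟩ := exists_opHom g (hfix g)
    refine hAg f fun C hC => ?_
    have := hg _ (Finset.mem_image_of_mem _ hC)
    apply OnePoint.coe_injective.image_injective
    rw [Set.image_image] at this ⊢
    exact this

theorem SIP.congr {X X' : Type*} [TopologicalSpace X] [TopologicalSpace X'] (e : X ≃ₜ X')
    (h : SIP X) : SIP X' := by
  classical
  intro H hH
  let φ : (X ≃ₜ X) →* (X' ≃ₜ X') :=
    { toFun := fun f => (e.symm.trans f).trans e
      map_one' := by
        ext1 z
        exact e.apply_symm_apply z
      map_mul' := fun f g => by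
        ext1 z
        show e (f (g (e.symm z))) = e (f (e.symm (e (g (e.symm z)))))
        rw [e.symm_apply_apply] }
  obtain ⟨A, hA, hAg⟩ := h _ (hH.comap φ)
  refine ⟨A.image (fun B => e '' B), ?_, ?_⟩
  · intro B hB
    obtain ⟨C, hC, rfl⟩ := Finset.mem_image.1 hB
    exact ⟨e.isClosedMap _ (hA C hC).1, e.isOpenMap _ (hA C hC).2⟩
  · intro g hg
    have hφ : φ ((e.trans g).trans e.symm) = g := by
      ext1 z
      show e (e.symm (g (e (e.symm z)))) = g z
      simp
    rw [← hφ]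
    refine hAg _ fun C hC => ?_
    have := hg _ (Finset.mem_image_of_mem _ hC)
    apply e.injective.image_injective
    rw [Set.image_image] at this ⊢
    simpa using this

section Ord

universe u

instance compact_ordIcc (γ : Ordinal.{u}) : CompactSpace (OrdIcc γ) :=
  isCompact_iff_compactSpace.1 isCompact_Icc

theorem blk_lt {w β γ : Ordinal.{u}} {n m : ℕ} (hβ : β ≤ w) (hγ : 1 ≤ γ) (h : n < m) :
    w * n + β < w * m + γ := by
  calc w * n + β ≤ w * n + w := by gcongr
    _ = w * ((n + 1 : ℕ) : Ordinal) := by push_cast; rw [mul_add_one]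
    _ ≤ w * m := by
      have : ((n + 1 : ℕ) : Ordinal.{u}) ≤ m := by exact_mod_cast h
      gcongr
    _ < w * m + 1 := lt_add_one _
    _ ≤ w * m + γ := by gcongr

theorem blk_inj {w β γ : Ordinal.{u}} {n m : ℕ} (hβ : β ≤ w) (hβ' : 1 ≤ β) (hγ : γ ≤ w)
    (hγ' : 1 ≤ γ) (h : w * n + β = w * m + γ) : n = m ∧ β = γ := by
  rcases lt_trichotomy n m with h1 | h1 | h1
  · exact absurd h (blk_lt hβ hγ' h1).ne
  · subst h1
    exact ⟨rfl, by simpa using h⟩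
  · exact absurd h (blk_lt hγ hβ' h1).ne'

theorem blk_surj {w x : Ordinal.{u}} (hx : 1 ≤ x) (N : ℕ) (hxN : x ≤ w * N) :
    ∃ n : ℕ, n < N ∧ ∃ β, 1 ≤ β ∧ β ≤ w ∧ w * n + β = x := by
  induction N with
  | zero => simp at hxN; simp [hxN] at hx
  | succ N ih =>
    by_cases h : x ≤ w * N
    · obtain ⟨n, hn, r⟩ := ih h
      exact ⟨n, by omega, r⟩
    · push Not at h
      refine ⟨N, by omega, x - w * N, ?_, ?_, ?_⟩
      · rw [Order.one_le_iff_pos]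
        rw [Ordinal.lt_sub]; simpa using h
      · rw [Ordinal.sub_le]
        push_cast at hxN
        rwa [mul_add_one] at hxN
      · exact Ordinal.add_sub_cancel_of_le h.le

theorem blk_le {w β : Ordinal.{u}} {n N : ℕ} (hβ : β ≤ w) (h : n < N) :
    w * n + β ≤ w * N := by
  calc w * n + β ≤ w * n + w := by gcongr
    _ = w * ((n + 1 : ℕ) : Ordinal) := by push_cast; rw [mul_add_one]
    _ ≤ w * N := by
      have : ((n + 1 : ℕ) : Ordinal.{u}) ≤ N := by exact_mod_cast h
      gcongr

theorem one_le_blk {w β : Ordinal.{u}} (n : ℕ) (hβ : 1 ≤ β) : 1 ≤ w * n + β :=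
  hβ.trans le_add_self

theorem cont_blk (w : Ordinal.{u}) (n : ℕ) : Continuous (fun β : OrdIcc w => w * n + β.1) :=
  (Ordinal.isNormal_add_right (w * n)).continuous.comp continuous_subtype_val

theorem homeo_fin (w : Ordinal.{u}) (a : ℕ) : Nonempty (Fin a × OrdIcc w ≃ₜ OrdIcc (w * a)) := by
  let F : Fin a × OrdIcc w → OrdIcc (w * a) := fun z =>
    ⟨w * (z.1 : ℕ) + z.2.1, one_le_blk _ z.2.2.1, blk_le z.2.2.2 z.1.2⟩
  have hF : Bijective F := by
    constructor
    · rintro ⟨n, β⟩ ⟨m, γ⟩ h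
      have := blk_inj β.2.2 β.2.1 γ.2.2 γ.2.1 (congrArg Subtype.val h)
      exact Prod.ext (Fin.ext this.1) (Subtype.ext this.2)
    · rintro ⟨x, hx1, hx2⟩
      obtain ⟨n, hn, β, h1, h2, h3⟩ := blk_surj hx1 a hx2
      exact ⟨(⟨n, hn⟩, ⟨β, h1, h2⟩), Subtype.ext h3⟩
  have hc : Continuous F := by
    refine Continuous.subtype_mk ?_ _
    exact cont_of_local fun n => ⟨fun z => w * (n : ℕ) + z.2.1,
      (cont_blk w n).comp continuous_snd, fun y => rfl⟩
  exact ⟨Continuous.homeoOfEquivCompactToT2 (f := Equiv.ofBijective F hF) hc⟩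

theorem lt_mul_omega {w x : Ordinal.{u}} (h : x < w * ω) : ∃ n : ℕ, x < w * n := by
  rw [Ordinal.lt_mul_iff_of_isSuccLimit Ordinal.isSuccLimit_omega0] at h
  obtain ⟨c, hc, hx⟩ := h
  obtain ⟨n, rfl⟩ := Ordinal.lt_omega0.1 hc
  exact ⟨n, hx⟩

theorem homeo_op (w : Ordinal.{u}) (hw : 0 < w) :
    ∃ e : OnePoint (ℕ × OrdIcc w) ≃ₜ OrdIcc (w * ω), (e OnePoint.infty).1 = w * ω := by
  have hnat : ∀ n : ℕ, w * n < w * ω := fun n =>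
    (mul_lt_mul_iff_right₀ hw).2 (Ordinal.natCast_lt_omega0 n)
  have hlt : ∀ z : ℕ × OrdIcc w, w * z.1 + z.2.1 < w * ω := fun z =>
    (blk_le z.2.2.2 (Nat.lt_succ_self _)).trans_lt (hnat _)
  let top : OrdIcc (w * ω) := ⟨w * ω, by
    rw [Order.one_le_iff_pos]; exact zero_le.trans_lt (hnat 0), le_rfl⟩
  let f : ℕ × OrdIcc w → OrdIcc (w * ω) := fun z =>
    ⟨w * (z.1 : ℕ) + z.2.1, one_le_blk _ z.2.2.1, (hlt z).le⟩
  let F : OnePoint (ℕ × OrdIcc w) → OrdIcc (w * ω) := fun z => z.elim top f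
  have hF : Bijective F := by
    constructor
    · intro x y h
      induction x using OnePoint.rec with
      | infty =>
        induction y using OnePoint.rec with
        | infty => rfl
        | coe y => exact absurd (congrArg Subtype.val h) (hlt y).ne'
      | coe x =>
        induction y using OnePoint.rec with
        | infty => exact absurd (congrArg Subtype.val h) (hlt x).ne
        | coe y =>
          have := blk_inj x.2.2.2 x.2.2.1 y.2.2.2 y.2.2.1 (congrArg Subtype.val h)
          rw [Prod.ext this.1 (Subtype.ext this.2)]
    · rintro ⟨x, hx1, hx2⟩
      rcases hx2.eq_or_lt with h | h
      · exact ⟨OnePoint.infty, Subtype.ext h.symm⟩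
      · obtain ⟨N, hN⟩ := lt_mul_omega h
        obtain ⟨n, -, β, h1, h2, h3⟩ := blk_surj hx1 N hN.le
        exact ⟨((n, ⟨β, h1, h2⟩) : ℕ × OrdIcc w), Subtype.ext h3⟩
  have hc : Continuous F := by
    rw [continuous_iff_continuousAt, OnePoint.forall]
    constructor
    · rw [OnePoint.continuousAt_infty]
      intro s hs
      rw [nhds_subtype_eq_comap, Filter.mem_comap] at hs
      obtain ⟨t, ht, hts⟩ := hs
      obtain ⟨l, hl, hlt'⟩ := exists_Ioc_subset_of_mem_nhds ht ⟨0, zero_le.trans_lt (hnat 0)⟩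
      obtain ⟨n, hn⟩ := lt_mul_omega (show l < w * ω from hl)
      refine ⟨Set.Iic n ×ˢ Set.univ, ?_, ?_, ?_⟩
      · exact (isClosed_discrete _).prod isClosed_univ
      · exact (Set.finite_Iic n).isCompact.prod isCompact_univ
      · intro z hz
        have hz' : n < z.1 := by
          by_contra h
          exact hz ⟨not_lt.1 h, trivial⟩
        apply hts
        apply hlt'
        refine ⟨?_, (hlt z).le⟩
        refine hn.trans ?_
        have := blk_lt (w := w) (β := 0) zero_le z.2.2.1 hz'
        show w * (n:Ordinal) < w * (z.1:Ordinal) + z.2.1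
        simpa using this
    · intro z
      rw [OnePoint.continuousAt_coe]
      have : Continuous f := by
        refine Continuous.subtype_mk ?_ _
        exact cont_of_local fun n => ⟨fun z => w * (n : ℕ) + z.2.1,
          (cont_blk w n).comp continuous_snd, fun y => rfl⟩
      exact this.continuousAt
  exact ⟨Continuous.homeoOfEquivCompactToT2 (f := Equiv.ofBijective F hF) hc, rfl⟩

/-- iterated derived set -/
def Rk (X : Type*) [TopologicalSpace X] : ℕ → Set X
  | 0 => Set.univ
  | j + 1 => {x | ∃ᶠ y in 𝓝[≠] x, y ∈ Rk X j}

theorem Rk_homeo {X : Type*} [TopologicalSpace X] (g : X ≃ₜ X) (j : ℕ) (x : X) :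
    x ∈ Rk X j → g x ∈ Rk X j := by
  induction j generalizing x with
  | zero => intro _; trivial
  | succ j ih =>
    intro hx
    have hx : ∃ᶠ y in 𝓝[≠] x, y ∈ Rk X j := hx
    show ∃ᶠ y in 𝓝[≠] (g x), y ∈ Rk X j
    have ht : Filter.Tendsto g (𝓝[≠] x) (𝓝[≠] (g x)) := by
      refine tendsto_nhdsWithin_iff.2 ⟨(g.continuous.tendsto x).mono_left nhdsWithin_le_nhds, ?_⟩
      filter_upwards [self_mem_nhdsWithin] with y hy h
      exact hy (g.injective h)
    exact ht.frequently (hx.mono fun y hy => ih y hy)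

theorem freq_iff {γ : Ordinal.{u}} (x : OrdIcc γ) (s : Set (OrdIcc γ)) :
    (∃ᶠ y in 𝓝[≠] x, y ∈ s) ↔ ∀ l < x.1, ∃ y ∈ s, l < y.1 ∧ y.1 < x.1 := by
  constructor
  · intro h l hl
    have hnb : {y : OrdIcc γ | l < y.1 ∧ y.1 < x.1 + 1} ∈ 𝓝 x := by
      have : Set.Ioo l (x.1 + 1) ∈ 𝓝 x.1 := Ioo_mem_nhds hl (lt_add_one _)
      exact continuous_subtype_val.continuousAt this
    have h2 : {y : OrdIcc γ | l < y.1 ∧ y.1 < x.1 + 1} ∩ {x}ᶜ ∈ 𝓝[≠] x :=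
      Filter.inter_mem (mem_nhdsWithin_of_mem_nhds hnb) self_mem_nhdsWithin
    obtain ⟨y, hy, hy'⟩ := (h.and_eventually h2).exists
    refine ⟨y, hy, hy'.1.1, lt_of_le_of_ne (Order.lt_add_one_iff.1 hy'.1.2) ?_⟩
    intro he
    exact hy'.2 (Subtype.ext he)
  · intro h
    rw [Filter.frequently_iff]
    intro U hU
    rw [mem_nhdsWithin] at hU
    obtain ⟨V, hV, hxV, hVU⟩ := hU
    have hVn := hV.mem_nhds hxV
    rw [nhds_subtype_eq_comap, Filter.mem_comap] at hVn
    obtain ⟨t, ht, hts⟩ := hVn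
    obtain ⟨l, hl, hlt'⟩ := exists_Ioc_subset_of_mem_nhds ht
      ⟨0, (zero_lt_one).trans_le x.2.1⟩
    obtain ⟨y, hy, h1, h2⟩ := h l hl
    exact ⟨y, hVU ⟨hts (hlt' ⟨h1, h2.le⟩), fun he => h2.ne (congrArg Subtype.val he)⟩, hy⟩

theorem Rk_ord {γ : Ordinal.{u}} (j : ℕ) (x : OrdIcc γ) :
    x ∈ Rk (OrdIcc γ) j ↔ (ω ^ (j : Ordinal.{u})) ∣ x.1 := by
  induction j generalizing x with
  | zero => simp [Rk]
  | succ j ih =>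
    have hx0 : (0 : Ordinal.{u}) < x.1 := (zero_lt_one).trans_le x.2.1
    have hw0 : (0 : Ordinal.{u}) < ω ^ (j : Ordinal.{u}) := Ordinal.opow_pos _ Ordinal.omega0_pos
    show (∃ᶠ y in 𝓝[≠] x, y ∈ Rk (OrdIcc γ) j) ↔ _
    rw [freq_iff]
    simp only [ih]
    push_cast
    rw [Ordinal.opow_add, Ordinal.opow_one]
    set w := ω ^ (j : Ordinal.{u}) with hw
    constructor
    · intro h
      have hdvd : w ∣ x.1 := by
        by_contra hnd
        have hm : x.1 % w ≠ 0 := fun h => hnd (Ordinal.dvd_of_mod_eq_zero h)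
        have hdm := Ordinal.div_add_mod x.1 w
        have hl : w * (x.1 / w) < x.1 := by
          conv_rhs => rw [← hdm]
          simpa using pos_iff_ne_zero.2 hm
        obtain ⟨y, ⟨c, hc⟩, h1, h2⟩ := h _ hl
        rw [hc] at h1 h2
        have h3 := (mul_lt_mul_iff_right₀ hw0).1 h1
        have h5 : w * (x.1 / w + 1) ≤ w * c := by
          gcongr
          exact Order.add_one_le_of_lt h3
        have h6 : x.1 < w * (x.1 / w + 1) := by
          rw [Ordinal.lt_mul_iff_div_lt hw0.ne']
          exact lt_add_one _
        exact absurd h2 (not_lt.2 (h6.le.trans h5))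
      obtain ⟨q, hq⟩ := hdvd
      have hq0 : q ≠ 0 := by
        rintro rfl
        rw [mul_zero] at hq
        exact hx0.ne' hq
      have hlim : Order.IsSuccLimit q := by
        rw [Order.isSuccLimit_iff]
        refine ⟨by simpa using hq0, ?_⟩
        intro b hb
        have hbl : b < q := hb.1
        obtain ⟨y, ⟨c, hc⟩, h1, h2⟩ := h (w * b) (by rw [hq]; exact (mul_lt_mul_iff_right₀ hw0).2 hbl)
        rw [hc] at h1 h2
        rw [hq] at h2
        exact hb.2 ((mul_lt_mul_iff_right₀ hw0).1 h1) ((mul_lt_mul_iff_right₀ hw0).1 h2)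
      obtain ⟨r, hr⟩ := (Ordinal.isSuccLimit_iff_omega0_dvd.1 hlim).2
      exact ⟨r, by rw [hq, hr, mul_assoc]⟩
    · rintro ⟨r, hr⟩ l hl
      have hr0 : r ≠ 0 := by
        rintro rfl
        rw [mul_zero] at hr
        exact hx0.ne' hr
      have hlim : Order.IsSuccLimit (ω * r) :=
        Ordinal.isSuccLimit_iff_omega0_dvd.2 ⟨mul_ne_zero Ordinal.omega0_ne_zero hr0, ⟨r, rfl⟩⟩
      rw [mul_assoc] at hr
      rw [hr, Ordinal.lt_mul_iff_of_isSuccLimit hlim] at hl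
      obtain ⟨c, hc, hl⟩ := hl
      have hcx : w * c < x.1 := by rw [hr]; exact (mul_lt_mul_iff_right₀ hw0).2 hc
      refine ⟨⟨w * c, ?_, hcx.le.trans x.2.2⟩, ⟨c, rfl⟩, hl, hcx⟩
      rw [Order.one_le_iff_pos]
      exact zero_le.trans_lt hl

theorem sip_omega_pow (k : ℕ) : SIP (OrdIcc.{u} (ω ^ (k : Ordinal.{u}))) := by
  induction k with
  | zero =>
    intro H _
    refine ⟨∅, by simp, fun g _ => ?_⟩
    have : g = 1 := by
      ext1 z
      have h : ∀ z : OrdIcc.{u} (ω ^ ((0 : ℕ) : Ordinal.{u})), z.1 = 1 := fun z =>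
        le_antisymm (by simpa using z.2.2) z.2.1
      exact Subtype.ext ((h _).trans (h _).symm)
    rw [this]
    exact H.one_mem
  | succ k ih =>
    have hw0 : (0 : Ordinal.{u}) < ω ^ (k : Ordinal.{u}) := Ordinal.opow_pos _ Ordinal.omega0_pos
    have hs : ω ^ ((k + 1 : ℕ) : Ordinal.{u}) = ω ^ (k : Ordinal.{u}) * ω := by
      push_cast
      rw [Ordinal.opow_add, Ordinal.opow_one]
    obtain ⟨e, he⟩ := homeo_op _ hw0
    rw [hs]
    refine SIP.congr e (sip_onePoint ih fun g => ?_)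
    let g' := (e.symm.trans g).trans e
    have h1 : e OnePoint.infty ∈ Rk (OrdIcc (ω ^ (k : Ordinal.{u}) * ω)) (k + 1) := by
      rw [Rk_ord, he, hs]
    have h2 := Rk_homeo g' (k + 1) _ h1
    rw [Rk_ord, hs] at h2
    have h3 : g' (e OnePoint.infty) = e OnePoint.infty := by
      apply Subtype.ext
      rw [he]
      refine le_antisymm (g' (e OnePoint.infty)).2.2 ?_
      refine Ordinal.le_of_dvd ?_ h2
      exact ((zero_lt_one).trans_le (g' (e OnePoint.infty)).2.1).ne'
    have h4 : g' (e OnePoint.infty) = e (g OnePoint.infty) := by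
      show e (g (e.symm (e _))) = _
      rw [e.symm_apply_apply]
    rw [h4] at h3
    exact e.injective h3

end Ord

end SIPaux

/-- For positive natural numbers `α` and `a`, the group `G` of homeomorphisms
of `X = [1, ω^α·a]` (order topology) has the small index property: every subgroup `H` of `G`
of index `< 2^ℵ₀` contains the pointwise stabilizer of a finite set of clopen subsets of `X`. -/
theorem smallIndexProperty_homeoGroup_omega_pow_mul (α a : ℕ) (hα : 0 < α) (ha : 0 < a)
    (H : Subgroup (OrdIcc (omega0 ^ (α : Ordinal) * (a : Ordinal)) ≃ₜ
      OrdIcc (omega0 ^ (α : Ordinal) * (a : Ordinal))))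
    (hH : Cardinal.mk ((OrdIcc (omega0 ^ (α : Ordinal) * (a : Ordinal)) ≃ₜ
      OrdIcc (omega0 ^ (α : Ordinal) * (a : Ordinal))) ⧸ H) < 2 ^ Cardinal.aleph0) :
    ∃ A : Finset (Set (OrdIcc (omega0 ^ (α : Ordinal) * (a : Ordinal)))),
      (∀ B ∈ A, IsClopen B) ∧
      ∀ g : OrdIcc (omega0 ^ (α : Ordinal) * (a : Ordinal)) ≃ₜ
          OrdIcc (omega0 ^ (α : Ordinal) * (a : Ordinal)),
        (∀ B ∈ A, ⇑g '' B = B) → g ∈ H := by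
  obtain ⟨e⟩ := SIPaux.homeo_fin (omega0 ^ (α : Ordinal)) a
  exact SIPaux.SIP.congr e (SIPaux.sip_finite (SIPaux.sip_omega_pow α)) H (SIPaux.sm_of_card H hH)
end
end

section
/- Let α be a positive natural number (a finite ordinal) and let X = [1, ω^α] be the set of ordinals β with 1 ≤ β ≤ ω^α (ordinal exponentiation), equipped with the order topology, and let G be the group of homeomorphisms of X onto itself. Then G has no proper normal subgroup of index strictly less than 2^ℵ₀: if N is a normal subgroup of G whose index, as a cardinal, is strictly less than 2^ℵ₀, then N = G. -/
open Ordinal Topology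

noncomputable section

section AbstractPart

variable {W : Type*} [TopologicalSpace W]

theorem hm_mul (f g : W ≃ₜ W) (w : W) : (f * g) w = f (g w) := rfl
theorem hm_one (w : W) : (1 : W ≃ₜ W) w = w := rfl
theorem hm_inv_app (f : W ≃ₜ W) (w : W) : f⁻¹ (f w) = w := f.symm_apply_apply w
theorem hm_app_inv (f : W ≃ₜ W) (w : W) : f (f⁻¹ w) = w := f.apply_symm_apply w

/-- `h` is supported on `A`. -/
def SuppOn (h : W ≃ₜ W) (A : Set W) : Prop := ∀ w, w ∉ A → h w = w

theorem SuppOn.mapsTo {h : W ≃ₜ W} {A : Set W} (hh : SuppOn h A) {w : W} (hw : w ∈ A) :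
    h w ∈ A := by
  by_contra hc
  have := hh _ hc
  exact hc (by rwa [h.injective this])

theorem SuppOn.inv {h : W ≃ₜ W} {A : Set W} (hh : SuppOn h A) : SuppOn h⁻¹ A := by
  intro w hw
  apply h.injective
  rw [hm_app_inv, hh w hw]

theorem SuppOn.mem_iff {h : W ≃ₜ W} {A : Set W} (hh : SuppOn h A) {w : W} :
    h w ∈ A ↔ w ∈ A := by
  refine ⟨fun hw => ?_, hh.mapsTo⟩
  by_contra hc
  rw [hh w hc] at hw
  exact hc hw

theorem SuppOn.map_eq {I : Type*} {b : W → I} {i : I} {h : W ≃ₜ W}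
    (hh : SuppOn h (b ⁻¹' {i})) (w : W) : b (h w) = b w := by
  by_cases hw : w ∈ b ⁻¹' {i}
  · have h1 := hh.mapsTo hw
    simp only [Set.mem_preimage, Set.mem_singleton_iff] at h1 hw
    rw [h1, hw]
  · rw [hh w hw]

/-- Gluing along a locally constant function. -/
def glueB {I : Type*} [TopologicalSpace I] [DiscreteTopology I] (b : W → I) (hb : Continuous b)
    (h : I → (W ≃ₜ W)) (hh : ∀ i w, b (h i w) = b w) : W ≃ₜ W where
  toFun w := h (b w) w
  invFun w := (h (b w)).symm w
  left_inv w := by simp [hh]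
  right_inv w := by
    have : b ((h (b w)).symm w) = b w := by
      conv_rhs => rw [← (h (b w)).apply_symm_apply w, hh]
    simp [this]
  continuous_toFun := by
    have : Continuous (fun p : I × W => h p.1 p.2) :=
      continuous_prod_of_discrete_left.mpr fun i => (h i).continuous
    exact this.comp (hb.prodMk continuous_id)
  continuous_invFun := by
    have : Continuous (fun p : I × W => (h p.1).symm p.2) :=
      continuous_prod_of_discrete_left.mpr fun i => (h i).symm.continuous
    exact this.comp (hb.prodMk continuous_id)

theorem glueB_apply {I : Type*} [TopologicalSpace I] [DiscreteTopology I] (b : W → I)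
    (hb : Continuous b)
    (h : I → (W ≃ₜ W)) (hh : ∀ i w, b (h i w) = b w) (w : W) :
    glueB b hb h hh w = h (b w) w := rfl

theorem comm_mem {N : Subgroup (W ≃ₜ W)} (hN : N.Normal) {A : Set W} {f g n : W ≃ₜ W}
    (hf : SuppOn f A) (hg : SuppOn g A) (hn : n ∈ N) (hnf : ∀ w ∈ A, n w = f w) :
    f * g * f⁻¹ * g⁻¹ ∈ N := by
  have h1 : n * (g * n⁻¹ * g⁻¹) ∈ N := N.mul_mem hn (hN.conj_mem _ (N.inv_mem hn) g)
  have hm : ∀ w ∈ A, (f⁻¹ * n) w = w := by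
    intro w hw
    rw [hm_mul, hnf w hw, hm_inv_app]
  have hc : (f⁻¹ * n) * g = g * (f⁻¹ * n) := by
    apply Homeomorph.ext
    intro w
    rw [hm_mul (f⁻¹ * n), hm_mul g]
    by_cases hw : w ∈ A
    · rw [hm w hw, hm _ (hg.mapsTo hw)]
    · have : (f⁻¹ * n) w ∉ A := by
        intro hc
        have := hm _ hc
        rw [(f⁻¹ * n).injective this] at hc
        exact hw hc
      rw [hg _ hw, hg _ this]
  have h2 : n * g * n⁻¹ = f * g * f⁻¹ := by
    have : n = f * (f⁻¹ * n) := by group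
    have h3 : n * g = f * g * f⁻¹ * n := by
      calc n * g = f * ((f⁻¹ * n) * g) := by group
        _ = _ := by rw [hc]; group
    rw [h3]; group
  rw [← h2]
  simpa [mul_assoc] using h1

theorem exists_block {I : Type} [TopologicalSpace I] [DiscreteTopology I] [Countable I]
    [Infinite I] (b : W → I) (hb : Continuous b) (N : Subgroup (W ≃ₜ W))
    (hN : Cardinal.mk ((W ≃ₜ W) ⧸ N) < 2 ^ Cardinal.aleph0) :
    ∃ i : I, ∀ f : W ≃ₜ W, SuppOn f (b ⁻¹' {i}) → ∃ n ∈ N, ∀ w ∈ b ⁻¹' {i}, n w = f w := by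
  classical
  by_contra hcon
  push Not at hcon
  choose f hf hfn using hcon
  have hk : ∀ S : Set I, ∀ i w, b ((if i ∈ S then f i else 1 : W ≃ₜ W) w) = b w := by
    intro S i w
    split_ifs
    · exact (hf i).map_eq w
    · rfl
  let k : Set I → (W ≃ₜ W) := fun S => glueB b hb (fun i => if i ∈ S then f i else 1) (hk S)
  have key : ∀ S T : Set I, (k S)⁻¹ * k T ∈ N → ∀ i ∈ T, i ∈ S := by
    intro S T hST i hiT
    by_contra hiS
    obtain ⟨w, hw, hne⟩ := hfn i _ hST
    apply hne
    rw [hm_mul]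
    apply (k S).injective
    rw [hm_app_inv]
    simp only [Set.mem_preimage, Set.mem_singleton_iff] at hw
    have h1 : b (f i w) = i := by rw [(hf i).map_eq, hw]
    simp only [k, glueB_apply, hw, h1, hiS, hiT, if_true, if_false, hm_one]
  have hinj : Function.Injective (fun S : Set I => (QuotientGroup.mk (k S) : (W ≃ₜ W) ⧸ N)) := by
    intro S T hST
    have h1 : (k S)⁻¹ * k T ∈ N := QuotientGroup.eq.1 hST
    have h2 : (k T)⁻¹ * k S ∈ N := QuotientGroup.eq.1 hST.symm
    exact Set.Subset.antisymm (key _ _ h2) (key _ _ h1)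
  have := Cardinal.lift_mk_le_lift_mk_of_injective hinj
  rw [Cardinal.mk_set, Cardinal.mk_eq_aleph0 I] at this
  simp only [Cardinal.lift_power, Cardinal.lift_ofNat, Cardinal.lift_aleph0, Cardinal.lift_id'] at this
  exact absurd hN (not_lt.2 this)

end AbstractPart

section Swindle

variable {Y : Type*} [TopologicalSpace Y]

/-- index type -/
abbrev Idx : Type := ℤ × ℤ × ℕ

/-- Permutations of the index set act on `ι × Y`. -/
def permH {ι : Type} [TopologicalSpace ι] [DiscreteTopology ι] (π : ι ≃ ι) :
    (ι × Y) ≃ₜ (ι × Y) :=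
  (π.toHomeomorphOfDiscrete).prodCongr (Homeomorph.refl Y)

theorem permH_apply {ι : Type} [TopologicalSpace ι] [DiscreteTopology ι] (π : ι ≃ ι) (w : ι × Y) :
    permH π w = (π w.1, w.2) := rfl

theorem permH_inv_apply {ι : Type} [TopologicalSpace ι] [DiscreteTopology ι] (π : ι ≃ ι)
    (w : ι × Y) : (permH π)⁻¹ w = (π.symm w.1, w.2) := rfl

/-- shift by `t` in block `i` -/
def shP (i t : ℤ) : Idx ≃ Idx where
  toFun x := (x.1, (if x.1 = i then x.2.1 + t else x.2.1), x.2.2)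
  invFun x := (x.1, (if x.1 = i then x.2.1 - t else x.2.1), x.2.2)
  left_inv x := by
    ext <;> simp
    split_ifs <;> simp
  right_inv x := by
    ext <;> simp
    split_ifs <;> simp

theorem exists_small (N : Subgroup ((Idx × Y) ≃ₜ (Idx × Y))) (hNn : N.Normal)
    (hN : Cardinal.mk (((Idx × Y) ≃ₜ (Idx × Y)) ⧸ N) < 2 ^ Cardinal.aleph0) :
    ∃ i : ℤ, ∀ h : (Idx × Y) ≃ₜ (Idx × Y),
      SuppOn h {w | w.1.1 = i ∧ w.1.2.1 = 0} → h ∈ N := by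
  have hb : Continuous (fun w : Idx × Y => w.1.1) := by fun_prop
  have hc : Continuous (fun w : Idx × Y => w.1.2.1) := by fun_prop
  obtain ⟨i, hi⟩ := exists_block (fun w : Idx × Y => w.1.1) hb N hN
  refine ⟨i, fun h hh => ?_⟩
  let σ : ℤ → ((Idx × Y) ≃ₜ (Idx × Y)) := fun t => permH (shP i t)
  have hσ : ∀ t (w : Idx × Y), σ t w =
    ((w.1.1, (if w.1.1 = i then w.1.2.1 + t else w.1.2.1), w.1.2.2), w.2) := fun t w => rfl
  have hσi : ∀ t (w : Idx × Y), (σ t)⁻¹ w =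
    ((w.1.1, (if w.1.1 = i then w.1.2.1 - t else w.1.2.1), w.1.2.2), w.2) := fun t w => rfl
  have hσadd : ∀ s t, σ s * σ t = σ (s + t) := by
    intro s t
    apply Homeomorph.ext
    intro w
    rw [hm_mul, hσ, hσ, hσ]
    by_cases hw : w.1.1 = i <;> simp [hw]; ring
  have hσ0 : σ 0 = 1 := by
    apply Homeomorph.ext
    intro w
    rw [hσ, hm_one]
    simp
  have hσinv : ∀ t, (σ t)⁻¹ = σ (-t) := by
    intro t
    rw [inv_eq_iff_mul_eq_one, hσadd, add_neg_cancel, hσ0]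
  let H : ℤ → ((Idx × Y) ≃ₜ (Idx × Y)) := fun j => if 0 ≤ j then σ j * h * (σ j)⁻¹ else 1
  have hH : ∀ j, SuppOn (H j) {w | w.1.1 = i ∧ w.1.2.1 = j} := by
    intro j w hw
    simp only [H]
    split_ifs
    · rw [hm_mul, hm_mul, hh, hm_app_inv]
      intro hc
      apply hw
      rw [hσi] at hc
      simp only [Set.mem_ofPred_eq] at hc ⊢
      refine ⟨hc.1, ?_⟩
      have := hc.2
      rw [if_pos hc.1] at this
      linarith
    · rfl
  have hHc : ∀ j (w : Idx × Y), (H j w).1.2.1 = w.1.2.1 := by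
    intro j w
    have h1 : SuppOn (H j) ((fun w : Idx × Y => w.1.2.1) ⁻¹' {j}) := by
      intro w hw
      apply hH
      intro hc
      exact hw hc.2
    exact h1.map_eq w
  have hHb : ∀ j (w : Idx × Y), (H j w).1.1 = w.1.1 := by
    intro j w
    have h1 : SuppOn (H j) ((fun w : Idx × Y => w.1.1) ⁻¹' {i}) := by
      intro w hw
      apply hH
      intro hc
      exact hw hc.1
    exact h1.map_eq w
  let h' := glueB (fun w : Idx × Y => w.1.2.1) hc H hHc
  have hh' : ∀ w, h' w = H w.1.2.1 w := fun w => rfl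
  have hs' : SuppOn h' ((fun w : Idx × Y => w.1.1) ⁻¹' {i}) := by
    intro w hw
    rw [hh']
    apply hH
    intro hc
    exact hw hc.1
  have hsσ : SuppOn (σ 1) ((fun w : Idx × Y => w.1.1) ⁻¹' {i}) := by
    intro w hw
    simp only [Set.mem_preimage, Set.mem_singleton_iff] at hw
    rw [hσ, if_neg hw]
  obtain ⟨n, hn, hnf⟩ := hi h' hs'
  have hmem := comm_mem hNn hs' hsσ hn hnf
  convert hmem using 1
  have hmain : h' = h * (σ 1 * h' * (σ 1)⁻¹) := by
    apply Homeomorph.ext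
    intro w
    rw [hm_mul, hm_mul, hm_mul, hh', hh']
    by_cases hw : w.1.1 = i
    · have e1 : ((σ 1)⁻¹ w).1.2.1 = w.1.2.1 - 1 := by rw [hσi]; simp [hw]
      rw [e1]
      have e2 : σ 1 (H (w.1.2.1 - 1) ((σ 1)⁻¹ w)) =
          (if 1 ≤ w.1.2.1 then H w.1.2.1 else 1) w := by
        rw [← hm_mul, ← hm_mul]
        congr 1
        simp only [H]
        by_cases h1 : 1 ≤ w.1.2.1
        · rw [if_pos (by linarith), if_pos h1, if_pos (by linarith)]
          have : σ w.1.2.1 = σ 1 * σ (w.1.2.1 - 1) := by rw [hσadd]; congr 1; ring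
          rw [this]; group
        · rw [if_neg (by linarith), if_neg h1]; group
      rw [e2]
      by_cases h1 : 1 ≤ w.1.2.1
      · rw [if_pos h1, hh]
        intro hc
        have := hc.2
        rw [hHc] at this
        linarith
      · rw [if_neg h1, hm_one]
        by_cases h0 : w.1.2.1 = 0
        · rw [h0]
          simp [H, hσ0]
        · rw [hh]
          · simp only [H]
            rw [if_neg, hm_one]
            omega
          · intro hc
            exact h0 hc.2
    · have e0 : ∀ j, SuppOn (H j) ((fun w : Idx × Y => w.1.1) ⁻¹' {i}) := by
        intro j w hw
        apply hH
        intro hc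
        exact hw hc.1
      have e1 : (σ 1)⁻¹ w = w := hsσ.inv w hw
      rw [e1, e0 _ w hw, hsσ w hw, hh]
      intro hc
      exact hw hc.1
  have h5 : h' * σ 1 * h'⁻¹ * (σ 1)⁻¹ = h' * (σ 1 * h' * (σ 1)⁻¹)⁻¹ := by group
  rw [h5]
  exact eq_mul_inv_of_mul_eq hmain.symm

end Swindle

section Final

variable {Y : Type*} [TopologicalSpace Y]

theorem exists_perm {ι : Type} [Countable ι] (J J' : Set ι) (h1 : J.Infinite)
    (h2 : Jᶜ.Infinite) (h3 : J'.Infinite) (h4 : J'ᶜ.Infinite) :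
    ∃ π : ι ≃ ι, ∀ x, π x ∈ J' ↔ x ∈ J := by
  classical
  have := h1.to_subtype
  have := h2.to_subtype
  have := h3.to_subtype
  have := h4.to_subtype
  obtain ⟨e1⟩ := nonempty_equiv_of_countable (α := J) (β := J')
  obtain ⟨e2⟩ := nonempty_equiv_of_countable (α := ↥Jᶜ) (β := ↥J'ᶜ)
  refine ⟨(Equiv.Set.sumCompl J).symm.trans ((Equiv.sumCongr e1 e2).trans
    (Equiv.Set.sumCompl J')), fun x => ?_⟩
  by_cases hx : x ∈ J
  · simp [Equiv.Set.sumCompl_symm_apply_of_mem hx, hx]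
  · simp only [Equiv.trans_apply, Equiv.Set.sumCompl_symm_apply_of_notMem hx, hx, iff_false]
    exact (e2 ⟨x, hx⟩).2

theorem conj_small {ι : Type} [TopologicalSpace ι] [DiscreteTopology ι] [Countable ι]
    {N : Subgroup ((ι × Y) ≃ₜ (ι × Y))} (hNn : N.Normal) (J J' : Set ι) (h1 : J.Infinite)
    (h2 : Jᶜ.Infinite) (h3 : J'.Infinite) (h4 : J'ᶜ.Infinite)
    (hJ : ∀ h : (ι × Y) ≃ₜ (ι × Y), SuppOn h (Prod.fst ⁻¹' J) → h ∈ N)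
    (h : (ι × Y) ≃ₜ (ι × Y)) (hh : SuppOn h (Prod.fst ⁻¹' J')) : h ∈ N := by
  obtain ⟨π, hπ⟩ := exists_perm J J' h1 h2 h3 h4
  have hk : (permH π)⁻¹ * h * permH π ∈ N := by
    apply hJ
    intro w hw
    rw [hm_mul, hm_mul, hh, hm_inv_app]
    simpa [permH_apply, hπ] using hw
  have := hNn.conj_mem _ hk (permH π)
  convert this using 1
  group

theorem glue_cont {W Z I : Type*} [TopologicalSpace W] [TopologicalSpace Z] [TopologicalSpace I]
    [DiscreteTopology I] (p : W → I) (hp : Continuous p) (F : W → Z)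
    (hF : ∀ i, Continuous (fun x : p ⁻¹' {i} => F x)) : Continuous F := by
  rw [continuous_iff_continuousAt]
  intro w
  have ho : IsOpen (p ⁻¹' {p w}) := (isOpen_discrete _).preimage hp
  have : ContinuousOn F (p ⁻¹' {p w}) := continuousOn_iff_continuous_domRestrict.2 (hF (p w))
  exact this.continuousAt (ho.mem_nhds rfl)

/-- Gluing homeomorphisms between clopen pieces. -/
def glueF {W I : Type*} [TopologicalSpace W] [TopologicalSpace I]
    [DiscreteTopology I] (p q : W → I) (hp : Continuous p) (hq : Continuous q)
    (e : ∀ i, (p ⁻¹' {i}) ≃ₜ (q ⁻¹' {i})) : W ≃ₜ W where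
  toFun w := e (p w) ⟨w, rfl⟩
  invFun w := (e (q w)).symm ⟨w, rfl⟩
  left_inv w := by
    have key : ∀ (i j : I) (hij : i = j) (x : p ⁻¹' {i}) (h : (e i x : W) ∈ q ⁻¹' {j}),
        ((e j).symm ⟨e i x, h⟩ : W) = x := by
      rintro i j rfl x h
      simp
    exact key _ _ (e (p w) ⟨w, rfl⟩).2.symm _ _
  right_inv w := by
    have key : ∀ (i j : I) (hij : i = j) (x : q ⁻¹' {i}) (h : ((e i).symm x : W) ∈ p ⁻¹' {j}),
        (e j ⟨(e i).symm x, h⟩ : W) = x := by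
      rintro i j rfl x h
      simp
    exact key _ _ ((e (q w)).symm ⟨w, rfl⟩).2.symm _ _
  continuous_toFun := by
    apply glue_cont p hp
    intro i
    have : (fun x : p ⁻¹' {i} => (e (p x) ⟨x, rfl⟩ : W)) = fun x => (e i x : W) := by
      funext ⟨x, hx⟩
      obtain rfl : p x = i := hx
      rfl
    rw [this]
    fun_prop
  continuous_invFun := by
    apply glue_cont q hq
    intro i
    have : (fun x : q ⁻¹' {i} => ((e (q x)).symm ⟨x, rfl⟩ : W)) = fun x => ((e i).symm x : W) := by
      funext ⟨x, hx⟩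
      obtain rfl : q x = i := hx
      rfl
    rw [this]
    fun_prop

theorem glueF_apply {W I : Type*} [TopologicalSpace W] [TopologicalSpace I]
    [DiscreteTopology I] (p q : W → I) (hp : Continuous p) (hq : Continuous q)
    (e : ∀ i, (p ⁻¹' {i}) ≃ₜ (q ⁻¹' {i})) (i : I) (w : W) (h : p w = i) :
    glueF p q hp hq e w = e i ⟨w, h⟩ := by
  subst h; rfl

open Classical in
/-- classifier of three pieces -/
def cls {W : Type*} (M C : Set W) (w : W) : Fin 3 :=
  if w ∈ M then 0 else if w ∈ C then 1 else 2

theorem cls0 {W : Type*} (M C : Set W) : M = cls M C ⁻¹' {0} := by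
  ext w
  by_cases h1 : w ∈ M <;> by_cases h2 : w ∈ C <;> simp [cls, h1, h2]

theorem cls1' {W : Type*} (M C : Set W) : Mᶜ ∩ C = cls M C ⁻¹' {1} := by
  ext w
  by_cases h1 : w ∈ M <;> by_cases h2 : w ∈ C <;> simp [cls, h1, h2]

theorem cls1 {W : Type*} (M C : Set W) (h : Disjoint M C) : C = cls M C ⁻¹' {1} := by
  rw [← cls1', Set.inter_eq_right.2]
  exact fun w hw hM => Set.disjoint_left.1 h hM hw

theorem cls2 {W : Type*} (M C : Set W) : (M ∪ C)ᶜ = cls M C ⁻¹' {2} := by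
  ext w
  by_cases h1 : w ∈ M <;> by_cases h2 : w ∈ C <;> simp [cls, h1, h2]

theorem cls_cont {W : Type*} [TopologicalSpace W] (M C : Set W) (hM : IsClopen M)
    (hC : IsClopen C) : Continuous (cls M C) := by
  rw [continuous_discrete_rng]
  intro b
  match b with
  | 0 => rw [← cls0]; exact hM.isOpen
  | 1 => rw [← cls1']; exact hM.compl.isOpen.inter hC.isOpen
  | 2 => rw [← cls2]; exact (hM.union hC).compl.isOpen

/-- family of homeomorphisms between pieces -/
def glueE {W : Type*} [TopologicalSpace W] (M C C' : Set W) (hMC : Disjoint M C)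
    (hMC' : Disjoint M C') (g1 : C ≃ₜ C') (θ : ↥(M ∪ C)ᶜ ≃ₜ ↥(M ∪ C')ᶜ) :
    ∀ i : Fin 3, (cls M C ⁻¹' {i}) ≃ₜ (cls M C' ⁻¹' {i})
  | 0 => (Homeomorph.setCongr (cls0 M C).symm).trans (Homeomorph.setCongr (cls0 M C'))
  | 1 => (Homeomorph.setCongr (cls1 M C hMC).symm).trans
        (g1.trans (Homeomorph.setCongr (cls1 M C' hMC')))
  | 2 => (Homeomorph.setCongr (cls2 M C).symm).trans
        (θ.trans (Homeomorph.setCongr (cls2 M C')))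

theorem exists_glue3 {W : Type*} [TopologicalSpace W] (M C : Set W) (hM : IsClopen M)
    (hC : IsClopen C) (hMC : Disjoint M C) (g : W ≃ₜ W) (hgMC : Disjoint M (g ⁻¹' C))
    (θ : ↥(M ∪ C)ᶜ ≃ₜ ↥(M ∪ g ⁻¹' C)ᶜ) :
    ∃ k : W ≃ₜ W, (∀ w ∈ M, k w = w) ∧ (∀ w ∈ C, g (k w) = w) := by
  have hC' : IsClopen (g ⁻¹' C) := hC.preimage g.continuous
  let g1 : C ≃ₜ ↥(g ⁻¹' C) := g.symm.subtype (fun w => by simp)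
  let e := glueE M C (g ⁻¹' C) hMC hgMC g1 θ
  refine ⟨glueF _ _ (cls_cont M C hM hC) (cls_cont M _ hM hC') e, ?_, ?_⟩
  · intro w hw
    rw [glueF_apply _ _ _ _ e 0 w ((cls0 M C).subset hw)]
    rfl
  · intro w hw
    rw [glueF_apply _ _ _ _ e 1 w ((cls1 M C hMC).subset hw)]
    exact g.apply_symm_apply w

theorem abstract_main [CompactSpace Y] (N : Subgroup ((Idx × Y) ≃ₜ (Idx × Y))) (hNn : N.Normal)
    (hN : Cardinal.mk (((Idx × Y) ≃ₜ (Idx × Y)) ⧸ N) < 2 ^ Cardinal.aleph0)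
    (F1 : ∀ A : Set (Idx × Y), IsClopen A → {i : Idx | Prod.fst ⁻¹' {i} ⊆ A}.Infinite →
      Nonempty (A ≃ₜ (Idx × Y))) : N = ⊤ := by
  obtain ⟨i, hi⟩ := exists_small N hNn hN
  have hsm : ∀ J' : Set Idx, J'.Infinite → J'ᶜ.Infinite →
      ∀ h : (Idx × Y) ≃ₜ (Idx × Y), SuppOn h (Prod.fst ⁻¹' J') → h ∈ N := by
    intro J' h3 h4
    refine conj_small hNn {x : Idx | x.1 = i ∧ x.2.1 = 0} J' ?_ ?_ h3 h4 hi
    · refine Set.infinite_of_injective_forall_mem (f := fun n : ℕ => ((i, 0, n) : Idx)) ?_ ?_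
      · intro a b hab; simpa using hab
      · intro n; simp
    · refine Set.infinite_of_injective_forall_mem (f := fun n : ℕ => ((i, 1, n) : Idx)) ?_ ?_
      · intro a b hab; simpa using hab
      · intro n; simp
  rw [eq_top_iff]
  intro g _
  have hK : ∀ n : Idx, IsCompact (Prod.fst ⁻¹' {n} : Set (Idx × Y)) := by
    intro n
    have : (Prod.fst ⁻¹' {n} : Set (Idx × Y)) = {n} ×ˢ Set.univ := by ext; simp
    rw [this]
    exact isCompact_singleton.prod isCompact_univ
  let R : Idx → Idx → Prop := fun n m => ∃ y, (g (n, y)).1 = m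
  have hR1 : ∀ n, {m | R n m}.Finite := by
    intro n
    have h1 : IsCompact ((fun w => (g w).1) '' (Prod.fst ⁻¹' {n} : Set (Idx × Y))) :=
      (hK n).image (continuous_fst.comp g.continuous)
    refine (isCompact_iff_finite.1 h1).subset ?_
    rintro m ⟨y, hy⟩
    exact ⟨(n, y), rfl, hy⟩
  have hR2 : ∀ m, {n | R n m}.Finite := by
    intro n
    have h1 : IsCompact ((fun w => (g.symm w).1) '' (Prod.fst ⁻¹' {n} : Set (Idx × Y))) :=
      (hK n).image (continuous_fst.comp g.symm.continuous)
    refine (isCompact_iff_finite.1 h1).subset ?_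
    rintro m ⟨y, hy⟩
    exact ⟨g (m, y), hy, by simp⟩
  let r : Idx → Idx → Prop := fun x y => x ≠ y ∧ ¬ R x y ∧ ¬ R y x
  have : Std.Symm r := ⟨fun x y h => ⟨h.1.symm, h.2.2, h.2.1⟩⟩
  obtain ⟨t, -, ht⟩ := exists_seq_of_forall_finset_exists' (fun _ : Idx => True) r (by
    intro s _
    have hfin : (⋃ x ∈ s, ({x} ∪ {m | R x m} ∪ {n | R n x})).Finite :=
      s.finite_toSet.biUnion fun x _ =>
        ((Set.finite_singleton x).union (hR1 x)).union (hR2 x)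
    obtain ⟨y, hy⟩ := hfin.infinite_compl.nonempty
    refine ⟨y, trivial, fun x hx => ?_⟩
    simp only [Set.mem_compl_iff, Set.mem_iUnion, not_exists] at hy
    have := hy x hx
    simp only [Set.mem_union, Set.mem_singleton_iff, Set.mem_ofPred_eq, not_or] at this
    exact ⟨fun h => this.1.1 h.symm, this.1.2, this.2⟩)
  have htinj : Function.Injective t := by
    intro a b hab
    by_contra hne
    exact (ht hne).1 hab
  let T : ℕ → Set Idx := fun c => {x | ∃ a, t (3 * a + c) = x}
  have hTinf : ∀ c, (T c).Infinite := by
    intro c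
    refine Set.infinite_of_injective_forall_mem (f := fun n : ℕ => t (3 * n + c)) ?_ ?_
    · intro a b hab
      have := htinj hab
      omega
    · intro n; exact ⟨n, rfl⟩
  have hTd : ∀ c d, c < 3 → d < 3 → c ≠ d → ∀ x ∈ T c, x ∉ T d := by
    rintro c d hc hd hcd x ⟨a, rfl⟩ ⟨b, hb⟩
    have := htinj hb
    omega
  have hTR : ∀ c d, c < 3 → d < 3 → c ≠ d → ∀ x ∈ T c, ∀ y ∈ T d, ¬ R x y := by
    rintro c d hc hd hcd x ⟨a, rfl⟩ y ⟨b, rfl⟩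
    exact (ht (show 3 * a + c ≠ 3 * b + d by omega)).2.1
  have hTc : ∀ c, c < 3 → (T c)ᶜ.Infinite := by
    intro c hc
    by_cases h0 : c = 0
    · subst h0
      exact (hTinf 1).mono fun x hx => hTd 1 0 (by simp) (by simp) (by simp) x hx
    · exact (hTinf 0).mono fun x hx => hTd 0 c (by simp) hc (Ne.symm h0) x hx
  have hclop : ∀ J : Set Idx, IsClopen (Prod.fst ⁻¹' J : Set (Idx × Y)) := fun J =>
    (isClopen_discrete J).preimage continuous_fst
  set M : Set (Idx × Y) := Prod.fst ⁻¹' (T 0) with hMdef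
  set C : Set (Idx × Y) := Prod.fst ⁻¹' (T 2) with hCdef
  have hMC : Disjoint M C := Set.disjoint_left.2 fun w h1 h2 =>
    hTd 0 2 (by simp) (by simp) (by simp) _ h1 h2
  have hgC : ∀ c, c < 2 → ∀ w : Idx × Y, w.1 ∈ T c → w ∉ g ⁻¹' C := by
    intro c hc w h1 h2
    exact hTR c 2 (by omega) (by simp) (by omega) _ h1 _ h2 ⟨w.2, rfl⟩
  have hgMC : Disjoint M (g ⁻¹' C) := Set.disjoint_left.2 fun w h1 h2 =>
    hgC 0 (by simp) w h1 h2
  obtain ⟨θ1⟩ := F1 (M ∪ C)ᶜ ((hclop _).union (hclop _)).compl (by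
    refine (hTinf 1).mono ?_
    intro x hx w hw
    obtain rfl : w.1 = x := hw
    rintro (h | h)
    · exact hTd 1 0 (by simp) (by simp) (by simp) _ hx h
    · exact hTd 1 2 (by simp) (by simp) (by simp) _ hx h)
  obtain ⟨θ2⟩ := F1 (M ∪ g ⁻¹' C)ᶜ ((hclop _).union ((hclop _).preimage g.continuous)).compl (by
    refine (hTinf 1).mono ?_
    intro x hx w hw
    obtain rfl : w.1 = x := hw
    rintro (h | h)
    · exact hTd 1 0 (by simp) (by simp) (by simp) _ hx h
    · exact hgC 1 (by simp) w hx h)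
  obtain ⟨k, hk1, hk2⟩ := exists_glue3 M C (hclop _) (hclop _) hMC g hgMC (θ1.trans θ2.symm)
  have m1 : k ∈ N := by
    refine hsm (T 0)ᶜ (hTc 0 (by simp)) (by rw [compl_compl]; exact hTinf 0) k ?_
    intro w hw
    apply hk1
    simpa [hMdef] using hw
  have m2 : g * k ∈ N := by
    refine hsm (T 2)ᶜ (hTc 2 (by simp)) (by rw [compl_compl]; exact hTinf 2) _ ?_
    intro w hw
    apply hk2
    simpa [hCdef] using hw
  have := N.mul_mem m2 (N.inv_mem m1)
  simpa using this

end Final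

section OrdinalPart

universe u

open Order Set

theorem enum_facts (a : Ordinal.{u}) (T : Set Ordinal.{u}) (hTo : IsOpen T)
    (hT : T ⊆ Ioo 0 (ω ^ a * ω))
    (hinf : {n : ℕ | Disjoint (Ioc (ω ^ a * (n : Ordinal.{u})) (ω ^ a * n + ω ^ a)) T}.Infinite) :
    ¬ BddAbove Tᶜ ∧ IsNormal (enumOrd Tᶜ) ∧ enumOrd Tᶜ 0 = 0 ∧
      enumOrd Tᶜ (ω ^ a * ω) = ω ^ a * ω := by
  have hβ : 0 < ω ^ a := opow_pos _ omega0_pos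
  have hlim : IsSuccLimit ω := isSuccLimit_omega0
  have hb : ¬ BddAbove Tᶜ := by
    rw [not_bddAbove_iff]
    intro x
    refine ⟨max (x + 1) (ω ^ a * ω), fun h => ?_, ?_⟩
    · exact absurd (hT h).2 (not_lt.2 (le_max_right _ _))
    · exact lt_of_lt_of_le (lt_add_one x) (le_max_left _ _)
  have h0 : enumOrd Tᶜ 0 = 0 := by
    rw [enumOrd_zero]
    have : (0 : Ordinal) ∈ Tᶜ := fun h => lt_irrefl _ (hT h).1
    exact le_antisymm (csInf_le' this) zero_le
  refine ⟨hb, (enumOrd_isNormal_iff_isClosed hb).2 hTo.isClosed_compl, h0, ?_⟩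
  have hE := enumOrd_strictMono hb
  have hnat : ∀ x, x < ω ^ a * ω → ∃ n : ℕ, x < ω ^ a * n := by
    intro x hx
    obtain ⟨c, hc, hxc⟩ := (lt_mul_iff_of_isSuccLimit hlim).1 hx
    obtain ⟨n, rfl⟩ := lt_omega0.1 hc
    exact ⟨n, hxc⟩
  have claim : ∀ m : ℕ, enumOrd Tᶜ (ω ^ a * m) < ω ^ a * ω := by
    intro m
    induction m with
    | zero =>
      simp only [Nat.cast_zero, mul_zero, h0]
      exact mul_pos hβ omega0_pos
    | succ m ih =>
      obtain ⟨n0, hn0⟩ := hnat _ ih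
      obtain ⟨n, hn, hnn⟩ := hinf.exists_gt n0
      have hle : enumOrd Tᶜ (ω ^ a * m) ≤ ω ^ a * n :=
        hn0.le.trans (by gcongr)
      have key : ∀ ξ, ξ ≤ ω ^ a → enumOrd Tᶜ (ω ^ a * m + ξ) ≤ ω ^ a * n + ξ := by
        intro ξ
        induction ξ using WellFoundedLT.induction with
        | _ ξ ihξ =>
        intro hξ
        rcases (zero_le (a := ξ)).eq_or_lt with h | h
        · subst h; simpa using hle
        · apply enumOrd_le_of_forall_lt
          · intro hmem
            refine Set.disjoint_left.1 hn ⟨?_, ?_⟩ hmem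
            · simpa using h
            · simpa using hξ
          · intro ζ hζ
            rcases lt_or_ge ζ (ω ^ a * m) with h1 | h1
            · exact ((hE h1).trans_le hle).trans_le (by simp)
            · obtain ⟨ξ', rfl⟩ := exists_add_of_le h1
              have h2 : ξ' < ξ := by simpa using hζ
              exact (ihξ ξ' h2 (h2.le.trans hξ)).trans_lt (by simpa using h2)
      have := key _ le_rfl
      rw [Nat.cast_succ, mul_add_one]
      refine this.trans_lt ?_
      rw [← mul_add_one, ← Nat.cast_succ]
      exact mul_lt_mul_of_pos_left (natCast_lt_omega0 _) hβ
  obtain ⟨δ, hδ⟩ := enumOrd_surjective hb (b := ω ^ a * ω) (fun h => lt_irrefl _ (hT h).2)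
  have h1 : δ ≤ ω ^ a * ω := by
    conv_rhs => rw [← hδ]
    exact le_enumOrd_self hb
  rcases h1.eq_or_lt with h | h
  · rw [← h, hδ, h]
  · obtain ⟨n, hn⟩ := hnat _ h
    have := (hE hn).trans (claim n)
    rw [hδ] at this
    exact absurd this (lt_irrefl _)

theorem homeo_diff (l : Ordinal.{u}) (T : Set Ordinal.{u}) (hb : ¬ BddAbove Tᶜ)
    (hn : IsNormal (enumOrd Tᶜ)) (h0 : enumOrd Tᶜ 0 = 0) (hl : enumOrd Tᶜ l = l) :
    Nonempty (↥(Ioo 0 l) ≃ₜ ↥(Ioo 0 l \ T)) := by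
  have hE := enumOrd_strictMono hb
  let f : ↥(Ioo 0 l) → ↥(Ioo 0 l \ T) := fun x => ⟨enumOrd Tᶜ x,
    ⟨by have := hE x.2.1; rwa [h0] at this, by have := hE x.2.2; rwa [hl] at this⟩,
    enumOrd_mem hb _⟩
  have hf : Function.Bijective f := by
    constructor
    · intro x y hxy
      exact Subtype.ext (hE.injective (congrArg Subtype.val hxy))
    · rintro ⟨x, hx, hxT⟩
      obtain ⟨y, rfl⟩ := enumOrd_surjective hb (b := x) hxT
      refine ⟨⟨y, ?_, ?_⟩, rfl⟩
      · have := hx.1; rw [← h0] at this; exact hE.lt_iff_lt.1 this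
      · have := hx.2; rw [← hl] at this; exact hE.lt_iff_lt.1 this
  let e := Equiv.ofBijective f hf
  have he : ∀ x, enumOrd Tᶜ (e.symm x) = x := fun x => congrArg Subtype.val (e.apply_symm_apply x)
  refine ⟨⟨e, ?_, ?_⟩⟩
  · exact (hn.continuous.comp continuous_subtype_val).subtype_mk _
  · rw [OrderTopology.topology_eq_generate_intervals (α := ↥(Ioo 0 l))]
    refine continuous_generateFrom_iff.2 ?_
    rintro s ⟨c, rfl | rfl⟩
    · have : e.symm ⁻¹' Ioi c = {x : ↥(Ioo 0 l \ T) | enumOrd Tᶜ c < x} := by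
        ext x
        simp only [mem_preimage, mem_Ioi, mem_ofPred_eq]
        rw [← Subtype.coe_lt_coe, ← hE.lt_iff_lt, he]
      change IsOpen (e.symm ⁻¹' Ioi c)
      rw [this]
      exact isOpen_lt continuous_const continuous_subtype_val
    · have : e.symm ⁻¹' Iio c = {x : ↥(Ioo 0 l \ T) | (x : Ordinal) < enumOrd Tᶜ c} := by
        ext x
        simp only [mem_preimage, mem_Iio, mem_ofPred_eq]
        rw [← Subtype.coe_lt_coe, ← hE.lt_iff_lt, he]
      change IsOpen (e.symm ⁻¹' Iio c)
      rw [this]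
      exact isOpen_lt continuous_subtype_val continuous_const

/-- The coordinate map. -/
def Qm (b : Ordinal.{u}) (e : Idx ≃ ℕ) (w : Idx × OrdIcc b) : Ordinal.{u} :=
  b * (e w.1 : ℕ) + w.2

theorem Qm_inj (b : Ordinal.{u}) (e : Idx ≃ ℕ) : Function.Injective (Qm b e) := by
  have key : ∀ n m : ℕ, ∀ y z : OrdIcc b, n < m → b * n + y < b * m + z := by
    intro n m y z h
    calc b * n + y ≤ b * n + b := by gcongr; exact y.2.2
      _ = b * (n + 1 : ℕ) := by rw [Nat.cast_succ, mul_add_one]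
      _ ≤ b * m := by gcongr; exact h
      _ < b * m + z := by
        have : 0 < (z : Ordinal) := lt_of_lt_of_le zero_lt_one z.2.1
        simpa using this
  rintro ⟨i, y⟩ ⟨j, z⟩ h
  simp only [Qm] at h
  rcases lt_trichotomy (e i) (e j) with h1 | h1 | h1
  · exact absurd h (key _ _ y z h1).ne
  · rw [h1] at h
    have h2 : (y : Ordinal) = z := by simpa using h
    rw [e.injective h1, Subtype.ext h2]
  · exact absurd h (key _ _ z y h1).ne'

theorem Qm_slice (b : Ordinal.{u}) (e : Idx ≃ ℕ) (i : Idx) (x : Ordinal.{u})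
    (hx : x ∈ Ioc (b * (e i : ℕ)) (b * (e i : ℕ) + b)) : ∃ y, Qm b e (i, y) = x := by
  obtain ⟨y, rfl⟩ := exists_add_of_le hx.1.le
  refine ⟨⟨y, ?_, ?_⟩, rfl⟩
  · have : 0 < y := by simpa using hx.1
    exact one_le_iff_pos.2 this
  · simpa using hx.2

theorem Qm_range (b : Ordinal.{u}) (hb : 0 < b) (e : Idx ≃ ℕ) :
    range (Qm b e) = Ioo 0 (b * ω) := by
  ext x
  constructor
  · rintro ⟨⟨i, y⟩, rfl⟩
    simp only [Qm]
    have : 0 < (y : Ordinal) := lt_of_lt_of_le zero_lt_one y.2.1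
    refine ⟨this.trans_le (by simp), ?_⟩
    calc b * (e i : ℕ) + y ≤ b * (e i : ℕ) + b := by gcongr; exact y.2.2
      _ = b * (e i + 1 : ℕ) := by rw [Nat.cast_succ, mul_add_one]
      _ < b * ω := mul_lt_mul_of_pos_left (natCast_lt_omega0 _) hb
  · rintro ⟨h0, h1⟩
    have hex : ∃ n : ℕ, x ≤ b * (n + 1 : ℕ) := by
      obtain ⟨c, hc, hxc⟩ := (lt_mul_iff_of_isSuccLimit isSuccLimit_omega0).1 h1
      obtain ⟨n, rfl⟩ := lt_omega0.1 hc
      exact ⟨n, hxc.le.trans (by gcongr; simp)⟩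
    classical
    let n := Nat.find hex
    have hn : x ≤ b * (n + 1 : ℕ) := Nat.find_spec hex
    have hn' : b * (n : ℕ) < x := by
      rcases Nat.eq_zero_or_pos n with h | h
      · rw [h]; simpa using h0
      · have := Nat.find_min hex (m := n - 1) (by omega)
        rw [Nat.sub_add_cancel h] at this
        exact not_le.1 this
    obtain ⟨y, hy⟩ := Qm_slice b e (e.symm n) x (by
      rw [e.apply_symm_apply]
      refine ⟨hn', ?_⟩
      rwa [Nat.cast_succ, mul_add_one] at hn)
    exact ⟨_, hy⟩

theorem Qm_open (b : Ordinal.{u}) (e : Idx ≃ ℕ) : IsOpenEmbedding (Qm b e) := by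
  have hc : ∀ i, Continuous (fun y => Qm b e (i, y)) := fun i =>
    ((isNormal_add_right (b * (e i : ℕ))).continuous).comp continuous_subtype_val
  refine .of_continuous_injective_isOpenMap (continuous_prod_of_discrete_left.2 hc) (Qm_inj b e)
    (isOpenMap_prod_of_discrete_left.2 fun i => ?_)
  have hinj : Function.Injective (fun y => Qm b e (i, y)) := by
    intro y z h
    simpa using Qm_inj b e h
  have hemb := (hc i).isClosedEmbedding hinj
  have hr : range (fun y => Qm b e (i, y)) =
      Ioo (b * (e i : ℕ)) (b * (e i : ℕ) + b + 1) := by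
    ext x
    constructor
    · rintro ⟨y, rfl⟩
      have : 0 < (y : Ordinal) := lt_of_lt_of_le zero_lt_one y.2.1
      refine ⟨by simpa [Qm] using this, ?_⟩
      rw [lt_add_one_iff]
      simpa [Qm] using y.2.2
    · rintro ⟨h1, h2⟩
      rw [lt_add_one_iff] at h2
      exact Qm_slice b e i x ⟨h1, h2⟩
  have : IsOpenEmbedding (fun y => Qm b e (i, y)) :=
    ⟨hemb.isEmbedding, by rw [hr]; exact isOpen_Ioo⟩
  exact this.isOpenMap

theorem F1_ord (a : Ordinal.{u}) (e : Idx ≃ ℕ) (A : Set (Idx × OrdIcc (ω ^ a))) (hA : IsClopen A)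
    (hinf : {i : Idx | Prod.fst ⁻¹' {i} ⊆ A}.Infinite) :
    Nonempty (A ≃ₜ (Idx × OrdIcc (ω ^ a))) := by
  have hβ : 0 < ω ^ a := opow_pos _ omega0_pos
  have hQ := Qm_open (ω ^ a) e
  have hr := Qm_range (ω ^ a) hβ e
  let T := Qm (ω ^ a) e '' Aᶜ
  have hTo : IsOpen T := hQ.isOpenMap _ hA.compl.isOpen
  have hT : T ⊆ Ioo 0 (ω ^ a * ω) := by rw [← hr]; exact image_subset_range _ _
  obtain ⟨hb, hn, h0, hl⟩ := enum_facts a T hTo hT (by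
    refine (hinf.image e.injective.injOn).mono ?_
    rintro _ ⟨i, hi, rfl⟩
    refine Set.disjoint_left.2 ?_
    rintro x hx ⟨w, hw, rfl⟩
    obtain ⟨y, hy⟩ := Qm_slice _ e i _ hx
    rw [← Qm_inj _ e hy] at hw
    exact hw (hi rfl))
  obtain ⟨φ⟩ := homeo_diff _ T hb hn h0 hl
  have hS : Qm (ω ^ a) e '' A = Ioo 0 (ω ^ a * ω) \ T := by
    rw [← hr, ← image_univ, ← image_sdiff (Qm_inj _ e), ← compl_eq_univ_sdiff, compl_compl]
  exact ⟨(hQ.isEmbedding.homeomorphImage A).trans ((Homeomorph.setCongr hS).trans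
    (φ.symm.trans ((Homeomorph.setCongr hr.symm).trans hQ.isEmbedding.toHomeomorph.symm)))⟩

/-- iterated derived sets -/
def Dk (X : Type*) [TopologicalSpace X] : ℕ → Set X
  | 0 => univ
  | k + 1 => derivedSet (Dk X k)

theorem Dk_map {X : Type*} [TopologicalSpace X] (g : X ≃ₜ X) (k : ℕ) :
    ∀ x ∈ Dk X k, g x ∈ Dk X k := by
  induction k with
  | zero => intro x _; trivial
  | succ k ih =>
    intro x hx
    have h1 := g.continuous.image_derivedSet (A := Dk X k) g.injective (mem_image_of_mem g hx)
    exact derivedSet_mono _ _ (image_subset_iff.2 ih) h1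

theorem Dk_iff (γ : Ordinal.{u}) (k : ℕ) :
    ∀ x : OrdIcc γ, x ∈ Dk (OrdIcc γ) k ↔ ω ^ (k : Ordinal.{u}) ∣ (x : Ordinal.{u}) := by
  induction k with
  | zero => intro x; simp [Dk]
  | succ k ih =>
    intro x
    have hx0 : 0 < (x : Ordinal.{u}) := lt_of_lt_of_le zero_lt_one x.2.1
    have hβ : 0 < ω ^ (k : Ordinal.{u}) := opow_pos _ omega0_pos
    have hacc : x ∈ Dk (OrdIcc γ) (k + 1) ↔ ∀ c < (x : Ordinal.{u}),
        ∃ y : Ordinal.{u}, c < y ∧ y < x ∧ ω ^ (k : Ordinal.{u}) ∣ y := by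
      change AccPt x _ ↔ _
      rw [accPt_iff_nhds]
      constructor
      · intro h c hc
        have hU : {y : OrdIcc γ | c < y ∧ (y : Ordinal) < x + 1} ∈ 𝓝 x := by
          apply IsOpen.mem_nhds
          · exact (isOpen_lt continuous_const continuous_subtype_val).inter
              (isOpen_lt continuous_subtype_val continuous_const)
          · exact ⟨hc, lt_add_one _⟩
        obtain ⟨y, ⟨hy1, hy2⟩, hne⟩ := h _ hU
        refine ⟨y, hy1.1, lt_of_le_of_ne (lt_add_one_iff.1 hy1.2) ?_, (ih y).1 hy2⟩
        exact fun h => hne (Subtype.ext h)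
      · intro h U hU
        obtain ⟨V, hV, hVU⟩ := mem_nhds_subtype _ _ _ |>.1 hU
        obtain ⟨c, hc, hcV⟩ := exists_Ioc_subset_of_mem_nhds hV ⟨0, hx0⟩
        obtain ⟨y, hy1, hy2, hy3⟩ := h c hc
        have hyγ : y ∈ Icc 1 γ := ⟨one_le_iff_pos.2 (lt_of_le_of_lt zero_le hy1),
          hy2.le.trans x.2.2⟩
        refine ⟨⟨y, hyγ⟩, ⟨hVU (hcV ⟨hy1, hy2.le⟩), (ih _).2 hy3⟩, ?_⟩
        intro h
        rw [← h] at hy2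
        exact lt_irrefl _ hy2
    rw [hacc, Nat.cast_succ, opow_add_one]
    generalize (x : Ordinal.{u}) = z at *
    generalize ω ^ (k : Ordinal.{u}) = β at *
    constructor
    · intro h
      have hmod : z % β = 0 := by
        by_contra hne
        have hlt : β * (z / β) < z := by
          conv_rhs => rw [← div_add_mod z β]
          simpa using pos_iff_ne_zero.2 hne
        obtain ⟨y, hy1, hy2, q, rfl⟩ := h _ hlt
        have h1 : z / β < q := lt_of_mul_lt_mul_left' hy1
        have h2 : z < β * q := (lt_mul_iff_div_lt hβ.ne').2 h1
        exact lt_asymm hy2 h2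
      obtain ⟨q, rfl⟩ := dvd_of_mod_eq_zero hmod
      apply mul_dvd_mul_left
      rw [← isSuccPrelimit_iff_omega0_dvd]
      intro p hp
      have hpq : q = p + 1 := by
        have := hp.succ_eq
        rw [← this, succ_eq_add_one]
      subst hpq
      obtain ⟨y, hy1, hy2, r, rfl⟩ := h (β * p) (by rw [mul_add_one]; simpa using hβ)
      have h1 : p < r := lt_of_mul_lt_mul_left' hy1
      have h2 : r < p + 1 := lt_of_mul_lt_mul_left' hy2
      exact absurd (lt_add_one_iff.1 h2) (not_le.2 h1)
    · rintro ⟨q, rfl⟩ c hc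
      have hlim : IsSuccLimit (ω * q) := by
        rw [Ordinal.isSuccLimit_iff, isSuccPrelimit_iff_omega0_dvd]
        refine ⟨?_, dvd_mul_right _ _⟩
        intro h
        rw [mul_assoc, h, mul_zero] at hx0
        exact lt_irrefl _ hx0
      rw [mul_assoc] at hc ⊢
      obtain ⟨d, hd, hcd⟩ := (lt_mul_iff_of_isSuccLimit hlim).1 hc
      exact ⟨β * d, hcd, mul_lt_mul_of_pos_left hd hβ, dvd_mul_right _ _⟩

theorem top_fixed (k : ℕ) (g : OrdIcc (ω ^ (k : Ordinal.{u})) ≃ₜ OrdIcc (ω ^ (k : Ordinal.{u})))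
    (x : OrdIcc (ω ^ (k : Ordinal.{u}))) (hx : (x : Ordinal.{u}) = ω ^ (k : Ordinal.{u})) :
    g x = x := by
  have h1 : x ∈ Dk _ k := (Dk_iff _ k x).2 (by rw [hx])
  have h2 := (Dk_iff _ k _).1 (Dk_map g k x h1)
  apply Subtype.ext
  have h3 : 0 < (g x : Ordinal.{u}) := lt_of_lt_of_le zero_lt_one (g x).2.1
  rw [hx]
  exact le_antisymm (g x).2.2 (le_of_dvd h3.ne' h2)

theorem transfer {W X : Type u} [TopologicalSpace W] [TopologicalSpace X] [T2Space X]
    [CompactSpace X] (q : W → X) (y : X) (hq : IsEmbedding q) (hr : range q = {y}ᶜ)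
    (hfix : ∀ g : X ≃ₜ X, g y = y) (N : Subgroup (X ≃ₜ X)) (hNn : N.Normal)
    (hN : Cardinal.mk ((X ≃ₜ X) ⧸ N) < 2 ^ Cardinal.aleph0)
    (hW : ∀ N' : Subgroup (W ≃ₜ W), N'.Normal →
      Cardinal.mk ((W ≃ₜ W) ⧸ N') < 2 ^ Cardinal.aleph0 → N' = ⊤) : N = ⊤ := by
  let c := OnePoint.equivOfIsEmbeddingOfRangeEq y q hq hr
  let Φ : (W ≃ₜ W) →* (X ≃ₜ X) :=
    { toFun := fun h => (c.symm.trans h.onePointCongr).trans c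
      map_one' := by
        apply Homeomorph.ext
        intro x
        obtain ⟨z, rfl⟩ := c.surjective x
        cases z using OnePoint.rec <;> simp
      map_mul' := by
        intro f g
        apply Homeomorph.ext
        intro x
        obtain ⟨z, rfl⟩ := c.surjective x
        rw [hm_mul]
        cases z using OnePoint.rec <;> simp }
  have hΦy : ∀ h, Φ h y = y := fun h => hfix _
  have hΦq : ∀ h w, Φ h (q w) = q (h w) := by
    intro h w
    change c (h.onePointCongr (c.symm (c (w : OnePoint W)))) = _
    rw [c.symm_apply_apply]
    rfl
  have hN' := hW (N.comap Φ) (hNn.comap Φ) (by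
    refine lt_of_le_of_lt ?_ hN
    let F : (W ≃ₜ W) ⧸ (N.comap Φ) → (X ≃ₜ X) ⧸ N := fun z => Quotient.liftOn' z
      (fun h => QuotientGroup.mk (Φ h)) (by
        intro f g hfg
        rw [QuotientGroup.leftRel_apply] at hfg
        apply QuotientGroup.eq.2
        simpa using hfg)
    refine Cardinal.mk_le_of_injective (f := F) ?_
    intro z1 z2
    induction z1 using QuotientGroup.induction_on
    induction z2 using QuotientGroup.induction_on
    intro h
    have h2 := QuotientGroup.eq.1 h
    apply QuotientGroup.eq.2
    simpa using h2)
  rw [eq_top_iff]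
  intro g _
  have hgr : ∀ x, x ∈ range q ↔ g x ∈ range q := by
    intro x
    rw [hr]
    simp only [mem_compl_iff, mem_singleton_iff]
    have : g x = y ↔ x = y := by
      conv_lhs => rw [← hfix g]
      exact g.injective.eq_iff
    rw [this]
  let r := hq.toHomeomorph
  let h : W ≃ₜ W := r.trans ((g.subtype hgr).trans r.symm)
  have hh : ∀ w, q (h w) = g (q w) := by
    intro w
    have : r (h w) = g.subtype hgr (r w) := r.apply_symm_apply _
    exact congrArg Subtype.val this
  have hgΦ : Φ h = g := by
    apply Homeomorph.ext
    intro x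
    by_cases hx : x = y
    · rw [hx, hfix, hfix]
    · have : x ∈ range q := by rw [hr]; exact hx
      obtain ⟨w, rfl⟩ := this
      rw [hΦq, hh]
  have : h ∈ N.comap Φ := by rw [hN']; trivial
  rw [Subgroup.mem_comap, hgΦ] at this
  exact this

end OrdinalPart

/-- For a positive natural number `α`, the group `G` of homeomorphisms of
`X = [1, ω^α]` has no proper normal subgroup of index `< 2^ℵ₀`: any normal subgroup of
index (as a cardinal) strictly less than `2^ℵ₀` is the whole group. -/
theorem no_proper_normal_subgroup_small_index (α : ℕ) (hα : 0 < α)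
    (N : Subgroup (OrdIcc (omega0 ^ (α : Ordinal)) ≃ₜ OrdIcc (omega0 ^ (α : Ordinal))))
    (hNnormal : N.Normal)
    (hN : Cardinal.mk ((OrdIcc (omega0 ^ (α : Ordinal)) ≃ₜ OrdIcc (omega0 ^ (α : Ordinal))) ⧸ N)
      < 2 ^ Cardinal.aleph0) :
    N = ⊤ := by
  obtain ⟨a, rfl⟩ : ∃ a, α = a + 1 := ⟨α - 1, by omega⟩
  have hγ : ω ^ ((a + 1 : ℕ) : Ordinal) = ω ^ (a : Ordinal) * ω := by
    rw [Nat.cast_succ, opow_add_one]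
  have hβ : 0 < ω ^ (a : Ordinal) := opow_pos _ omega0_pos
  have hpos : 0 < ω ^ ((a + 1 : ℕ) : Ordinal) := opow_pos _ omega0_pos
  have e : Idx ≃ ℕ := Denumerable.eqv Idx
  have hQ := Qm_open (ω ^ (a : Ordinal)) e
  have hr := Qm_range (ω ^ (a : Ordinal)) hβ e
  rw [← hγ] at hr
  have hmem : ∀ w, Qm (ω ^ (a : Ordinal)) e w ∈ Set.Ioo 0 (ω ^ ((a + 1 : ℕ) : Ordinal)) := by
    intro w
    rw [← hr]
    exact Set.mem_range_self w
  let q : Idx × OrdIcc (ω ^ (a : Ordinal)) → OrdIcc (ω ^ ((a + 1 : ℕ) : Ordinal)) := fun w =>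
    ⟨Qm _ e w, Order.one_le_iff_pos.2 (hmem w).1, (hmem w).2.le⟩
  refine transfer q ⟨_, Order.one_le_iff_pos.2 hpos, le_rfl⟩ ?_ ?_ (fun g => top_fixed _ g _ rfl)
    N hNnormal hN ?_
  · exact hQ.isEmbedding.codRestrict (Set.Icc 1 (ω ^ ((a + 1 : ℕ) : Ordinal)))
      (fun w => ⟨Order.one_le_iff_pos.2 (hmem w).1, (hmem w).2.le⟩)
  · ext ⟨x, hx⟩
    constructor
    · rintro ⟨w, hw⟩ h
      have h1 := (hmem w).2
      have h2 : Qm _ e w = x := congrArg Subtype.val hw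
      have h3 : x = _ := congrArg Subtype.val h
      rw [h2, h3] at h1
      exact lt_irrefl _ h1
    · intro h
      have : x ∈ Set.range (Qm (ω ^ (a : Ordinal)) e) := by
        rw [hr]
        refine ⟨Order.one_le_iff_pos.1 hx.1, lt_of_le_of_ne hx.2 ?_⟩
        intro h2
        exact h (Subtype.ext h2)
      obtain ⟨w, hw⟩ := this
      exact ⟨w, Subtype.ext hw⟩
  · intro N' hn' hN'
    exact abstract_main N' hn' hN' (F1_ord a e)
end
end
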